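/- arXiv:2412.14891 — 11 statements merged into one kernel-verified Lean document; each statement's English description precedes it below -/
import Mathlib

section
/- Let G be a 3-graph on an n-element vertex set V. Suppose that for every vertex v ∈ V, every fractional cover of the link graph L(v) has size at least n/3. Then every fractional cover of G has size at least n/3. -/
/-- Let `G` be a 3-graph on an `n`-element vertex set `V`. Suppose that for
every vertex `v ∈ V`, every fractional cover of the link graph `L(v)` has size at least `n/3`.
Then every fractional cover of `G` has size at least `n/3`. -/
theorem stmt_0 {V : Type*} [Fintype V] [DecidableEq V] (n : ℕ)
    (hn : Fintype.card V = n)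
    (E : Finset (Finset V)) (hE : ∀ e ∈ E, e.card = 3)
    (hlink : ∀ v : V, ∀ c : V → ℝ,
      (∀ x, 0 ≤ c x) → (∀ x, c x ≤ 1) →
      (∀ p : Finset V, p.card = 2 → v ∉ p → insert v p ∈ E → 1 ≤ ∑ x ∈ p, c x) →
      (n : ℝ) / 3 ≤ ∑ x ∈ Finset.univ.erase v, c x) :
    ∀ c : V → ℝ, (∀ x, 0 ≤ c x) → (∀ x, c x ≤ 1) →
      (∀ e ∈ E, 1 ≤ ∑ x ∈ e, c x) →
      (n : ℝ) / 3 ≤ ∑ x, c x := by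
  intro c h0 h1 hc
  by_contra hlt
  push Not at hlt
  rcases isEmpty_or_nonempty V with hV | hV
  · have : n = 0 := by rw [← hn]; exact Fintype.card_eq_zero
    subst this
    simp at hlt
  obtain ⟨v, hv⟩ := Finite.exists_min c
  have hm : c v < 1 / 3 := by
    by_contra h
    push Not at h
    have : ∑ _x : V, (1 / 3 : ℝ) ≤ ∑ x, c x :=
      Finset.sum_le_sum fun x _ => h.trans (hv x)
    simp [hn] at this
    linarith
  have hd : 0 < 1 - 3 * c v := by linarith
  have hnn : ∀ x, 0 ≤ (c x - c v) / (1 - 3 * c v) := fun x =>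
    div_nonneg (by linarith [hv x]) hd.le
  have key := hlink v (fun x => min 1 ((c x - c v) / (1 - 3 * c v)))
    (fun x => le_min zero_le_one (hnn x)) (fun x => min_le_left _ _) ?_
  · have h2 : ∑ x ∈ Finset.univ.erase v, min 1 ((c x - c v) / (1 - 3 * c v))
        ≤ ∑ x, (c x - c v) / (1 - 3 * c v) :=
      (Finset.sum_le_sum fun x _ => min_le_right _ _).trans
        (Finset.sum_le_sum_of_subset_of_nonneg (Finset.subset_univ _) fun x _ _ => hnn x)
    have h3 := key.trans h2
    rw [← Finset.sum_div, le_div_iff₀ hd, Finset.sum_sub_distrib] at h3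
    simp [hn] at h3
    linarith
  · intro p hp hvp hpE
    have h := hc _ hpE
    rw [Finset.sum_insert hvp] at h
    obtain ⟨x, y, hxy, rfl⟩ := Finset.card_eq_two.mp hp
    rw [Finset.sum_pair hxy] at h ⊢
    have hs : 1 ≤ (c x - c v) / (1 - 3 * c v) + (c y - c v) / (1 - 3 * c v) := by
      rw [← add_div, le_div_iff₀ hd]
      linarith
    have hx := hnn x
    have hy := hnn y
    rcases min_cases 1 ((c x - c v) / (1 - 3 * c v)) with h4 | h4 <;>
    rcases min_cases 1 ((c y - c v) / (1 - 3 * c v)) with h5 | h5 <;> linarith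
end

section
/- Let G be a 3-graph on an n-element vertex set. Suppose that for every vertex v, the link graph L(v) contains a fractional matching of size at least n/3. Then G has a perfect fractional matching, i.e. a fractional matching of size n/3. -/
theorem dual_ineq {V : Type*} [Fintype V] [DecidableEq V] [Nonempty V]
    (E : Finset (Finset V)) (w : V → ℝ) (u : ℝ) (hw : ∀ e ∈ E, u ≤ ∑ x ∈ e, w x)
    (hlink : ∀ v : V, ∃ ω : Finset V → ℝ,
      (∀ p, 0 ≤ ω p) ∧ (∀ p, ω p ≤ 1) ∧
      (∀ x : V, x ≠ v →
        ∑ p ∈ (Finset.univ.powersetCard 2).filter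
            (fun p => v ∉ p ∧ insert v p ∈ E ∧ x ∈ p), ω p ≤ 1) ∧
      (Fintype.card V : ℝ) / 3 ≤ ∑ p ∈ (Finset.univ.powersetCard 2).filter
            (fun p => v ∉ p ∧ insert v p ∈ E), ω p) :
    (Fintype.card V : ℝ) / 3 * u ≤ ∑ x, w x := by
  obtain ⟨v, hv⟩ := Finite.exists_min w
  obtain ⟨ω, h0, -, hx, hs⟩ := hlink v
  have hsum : ∑ x, (w x - w v) = ∑ x, w x - Fintype.card V * w v := by
    simp [Finset.sum_sub_distrib]
  by_cases hu : u - 3 * w v ≤ 0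
  · have h1 : 0 ≤ ∑ x, (w x - w v) := Finset.sum_nonneg fun x _ => sub_nonneg.2 (hv x)
    have h2 : (0 : ℝ) ≤ (Fintype.card V : ℝ) / 3 := by positivity
    nlinarith
  push Not at hu
  set P := (Finset.univ.powersetCard 2).filter
            (fun p : Finset V => v ∉ p ∧ insert v p ∈ E) with hP
  have h1 : (Fintype.card V : ℝ) / 3 * (u - 3 * w v) ≤ ∑ p ∈ P, ω p * ∑ x ∈ p, (w x - w v) := by
    calc _ ≤ (∑ p ∈ P, ω p) * (u - 3 * w v) := by gcongr
      _ = ∑ p ∈ P, ω p * (u - 3 * w v) := by rw [Finset.sum_mul]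
      _ ≤ _ := by
        refine Finset.sum_le_sum fun p hp => mul_le_mul_of_nonneg_left ?_ (h0 p)
        simp only [hP, Finset.mem_filter, Finset.mem_powersetCard] at hp
        have := hw _ hp.2.2
        rw [Finset.sum_insert hp.2.1] at this
        rw [Finset.sum_sub_distrib, Finset.sum_const, hp.1.2]
        simp only [nsmul_eq_mul]
        push_cast
        linarith
  have h2 : ∑ p ∈ P, ω p * ∑ x ∈ p, (w x - w v)
      = ∑ x, (∑ p ∈ P.filter (fun p => x ∈ p), ω p) * (w x - w v) := by
    simp_rw [Finset.mul_sum, Finset.sum_mul]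
    refine Finset.sum_comm' ?_
    intro p x
    simp
  have h3 : ∑ x, (∑ p ∈ P.filter (fun p => x ∈ p), ω p) * (w x - w v) ≤ ∑ x, (w x - w v) := by
    refine Finset.sum_le_sum fun x _ => ?_
    by_cases hxv : x = v
    · subst hxv; simp
    · have h4 := hx x hxv
      have h5 : P.filter (fun p => x ∈ p) = (Finset.univ.powersetCard 2).filter
            (fun p => v ∉ p ∧ insert v p ∈ E ∧ x ∈ p) := by
        rw [hP, Finset.filter_filter]
        simp only [and_assoc]
      rw [h5]
      exact mul_le_of_le_one_left (sub_nonneg.2 (hv x)) h4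
  nlinarith

theorem primal {V : Type*} [Fintype V] [DecidableEq V] [Nonempty V]
    (E : Finset (Finset V))
    (h : ∀ (w : V → ℝ) (u : ℝ), (∀ e ∈ E, u ≤ ∑ x ∈ e, w x) →
      (Fintype.card V : ℝ) / 3 * u ≤ ∑ x, w x) :
    ∃ μ : Finset V → ℝ, (∀ e ∈ E, 0 ≤ μ e) ∧ ∑ e ∈ E, μ e = 1 ∧
      ∀ v, ∑ e ∈ E.filter (fun e => v ∈ e), μ e = 3 / (Fintype.card V : ℝ) := by
  let ind : Finset V → V → ℝ := fun e x => if x ∈ e then 1 else 0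
  have hinj : Function.Injective ind := by
    intro a b hab
    ext x
    have := congrFun hab x
    simp only [ind] at this
    by_cases h1 : x ∈ a <;> by_cases h2 : x ∈ b <;> simp_all
  have hc : (0 : ℝ) < Fintype.card V := by exact_mod_cast Fintype.card_pos
  have key : (fun _ : V => 3 / (Fintype.card V : ℝ)) ∈
      convexHull ℝ ((E.image ind : Finset (V → ℝ)) : Set (V → ℝ)) := by
    by_contra hcon
    obtain ⟨f, u, hfu, hf⟩ := geometric_hahn_banach_point_closed (convex_convexHull ℝ _)
      ((E.image ind).finite_toSet.isClosed_convexHull (𝕜 := ℝ)) hcon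
    have hrep : ∀ y : V → ℝ, f y = ∑ x, y x * f (Pi.single x 1) := by
      intro y
      conv_lhs => rw [pi_eq_sum_univ' y]
      simp [map_sum]
    have := h (fun x => f (Pi.single x 1)) u (fun e he => by
      have h1 := hf (ind e) (subset_convexHull ℝ _ (by simpa using ⟨e, he, rfl⟩))
      rw [hrep] at h1
      simp only [ind, ite_mul, one_mul, zero_mul, Finset.sum_ite_mem, Finset.univ_inter] at h1
      exact h1.le)
    rw [hrep, ← Finset.mul_sum] at hfu
    have h2 := mul_lt_mul_of_pos_left hfu (by positivity : 0 < (Fintype.card V : ℝ) / 3)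
    rw [← mul_assoc] at h2
    field_simp at h2 this
    linarith
  rw [Finset.mem_convexHull'] at key
  obtain ⟨w, hw0, hw1, hw⟩ := key
  rw [Finset.sum_image hinj.injOn] at hw1 hw
  refine ⟨fun e => w (ind e), fun e he => hw0 _ (Finset.mem_image_of_mem _ he), hw1, fun v => ?_⟩
  have := congrFun hw v
  simpa [ind, Finset.sum_apply, Finset.sum_filter] using this


/-- Let `G` be a 3-graph on an `n`-element vertex set. Suppose that for every
vertex `v`, the link graph `L(v)` contains a fractional matching of size at least `n/3`.
Then `G` has a perfect fractional matching, i.e. a fractional matching of size `n/3`. -/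
theorem stmt_1 {V : Type*} [Fintype V] [DecidableEq V] (n : ℕ)
    (hn : Fintype.card V = n)
    (E : Finset (Finset V)) (hE : ∀ e ∈ E, e.card = 3)
    (hlink : ∀ v : V, ∃ ω : Finset V → ℝ,
      (∀ p, 0 ≤ ω p) ∧ (∀ p, ω p ≤ 1) ∧
      (∀ x : V, x ≠ v →
        ∑ p ∈ (Finset.univ.powersetCard 2).filter
            (fun p => v ∉ p ∧ insert v p ∈ E ∧ x ∈ p), ω p ≤ 1) ∧
      (n : ℝ) / 3 ≤ ∑ p ∈ (Finset.univ.powersetCard 2).filter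
            (fun p => v ∉ p ∧ insert v p ∈ E), ω p) :
    ∃ ω : Finset V → ℝ,
      (∀ e, 0 ≤ ω e) ∧ (∀ e, ω e ≤ 1) ∧
      (∀ v : V, ∑ e ∈ E.filter (fun e => v ∈ e), ω e ≤ 1) ∧
      ∑ e ∈ E, ω e = (n : ℝ) / 3 := by
  subst hn
  rcases isEmpty_or_nonempty V with hV | hV
  · have : E = ∅ := by
      refine Finset.eq_empty_of_forall_notMem fun e he => ?_
      have := hE e he
      simp [Finset.eq_empty_of_isEmpty e] at this
    exact ⟨fun _ => 0, by simp, by simp, by simp, by simp⟩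
  obtain ⟨μ, h0, h1, hv⟩ := primal E fun w u hw => dual_ineq E w u hw hlink
  have hc : (0 : ℝ) < Fintype.card V := by exact_mod_cast Fintype.card_pos
  let ω : Finset V → ℝ := fun e => if e ∈ E then (Fintype.card V : ℝ) / 3 * μ e else 0
  have hω : ∀ e ∈ E, ω e = (Fintype.card V : ℝ) / 3 * μ e := fun e he => by simp [ω, he]
  have hω0 : ∀ e, 0 ≤ ω e := by
    intro e
    by_cases he : e ∈ E
    · rw [hω e he]
      have := h0 e he
      positivity
    · simp [ω, he]
  have hvert : ∀ v : V, ∑ e ∈ E.filter (fun e => v ∈ e), ω e ≤ 1 := by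
    intro v
    rw [Finset.sum_congr rfl fun e he => hω e (Finset.mem_filter.1 he).1, ← Finset.mul_sum, hv]
    apply le_of_eq
    field_simp
  refine ⟨ω, hω0, fun e => ?_, hvert, ?_⟩
  · by_cases he : e ∈ E
    · obtain ⟨v, hve⟩ : e.Nonempty := Finset.card_pos.1 (by rw [hE e he]; norm_num)
      exact (Finset.single_le_sum (fun i _ => hω0 i)
        (Finset.mem_filter.2 ⟨he, hve⟩)).trans (hvert v)
    · simp [ω, he]
  · rw [Finset.sum_congr rfl hω, ← Finset.mul_sum, h1, mul_one]
end

section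
/- For every ε > 0 there exists n0 such that the following holds for every n ≥ n0. Let L be a simple graph on n vertices with at least (5/9 + ε)·binom(n,2) edges, and let C be a connected component of L containing the maximum number of edges among all connected components of L. Then the number of edges of L with both endpoints in C is strictly greater than (4/9)·binom(n,2). -/
/-- The set of edges of `G` with both endpoints in the connected component `C`. -/
def compEdges {V : Type*} (G : SimpleGraph V) (C : G.ConnectedComponent) : Set (Sym2 V) :=
  {e | e ∈ G.edgeSet ∧ ∀ x ∈ e, G.connectedComponentMk x = C}

open Classical in
/-- Degrees inside a component sum to at most twice the number of its edges. -/
lemma sum_degree_comp_le {V : Type} [Fintype V] (G : SimpleGraph V) (D : G.ConnectedComponent) :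
    ∑ v ∈ Finset.univ.filter (fun v => G.connectedComponentMk v = D), G.degree v
      ≤ 2 * (compEdges G D).ncard := by
  let H : SimpleGraph V :=
    { Adj := fun x y => G.Adj x y ∧ G.connectedComponentMk x = D ∧ G.connectedComponentMk y = D
      symm := ⟨fun x y h => ⟨h.1.symm, h.2.2, h.2.1⟩⟩
      loopless := ⟨fun x h => G.loopless.irrefl x h.1⟩ }
  have hH : compEdges G D = (H.edgeFinset : Set (Sym2 V)) := by
    ext e
    induction e using Sym2.ind with
    | _ x y => simp [compEdges, H]
  rw [hH, Set.ncard_coe_finset, ← H.sum_degrees_eq_twice_card_edges]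
  refine le_trans (Finset.sum_le_sum ?_) (Finset.sum_le_sum_of_subset (Finset.subset_univ _))
  intro v hv
  have hv' : G.connectedComponentMk v = D := by simpa using hv
  rw [← G.card_neighborFinset_eq_degree, ← H.card_neighborFinset_eq_degree]
  apply Finset.card_le_card
  intro w hw
  have hw' : G.Adj v w := by simpa using hw
  have : G.connectedComponentMk w = D := by
    rw [← hv']; exact SimpleGraph.ConnectedComponent.sound hw'.symm.reachable
  simp [H, hw', hv', this]

open Classical in
lemma two_mul_edges_le {V : Type} [Fintype V] [Nonempty V] (G : SimpleGraph V) (m : ℝ)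
    (hm : ∀ D : G.ConnectedComponent, ((compEdges G D).ncard : ℝ) ≤ m)
    (hm2 : 2 * m ≤ 4/9 * (Fintype.card V : ℝ)^2) :
    2 * (G.edgeFinset.card : ℝ) ≤ 5/9 * (Fintype.card V : ℝ)^2 := by
  let S : V → Finset V := fun v =>
    Finset.univ.filter (fun w => G.connectedComponentMk w = G.connectedComponentMk v)
  have hdeg : ∀ v, G.degree v ≤ (S v).card := by
    intro v
    rw [← G.card_neighborFinset_eq_degree]
    apply Finset.card_le_card
    intro w hw
    have hw' : G.Adj v w := by simpa using hw
    have : G.connectedComponentMk w = G.connectedComponentMk v :=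
      SimpleGraph.ConnectedComponent.sound hw'.symm.reachable
    exact Finset.mem_filter.2 ⟨Finset.mem_univ _, this⟩
  obtain ⟨v0, -, hmax⟩ := Finset.exists_max_image (Finset.univ : Finset V)
    (fun v => (S v).card) Finset.univ_nonempty
  have hcompl : (S v0).card + (S v0)ᶜ.card = Fintype.card V := Finset.card_add_card_compl _
  have hsplit : ∑ v ∈ S v0, G.degree v + ∑ v ∈ (S v0)ᶜ, G.degree v = 2 * G.edgeFinset.card := by
    rw [Finset.sum_add_sum_compl, G.sum_degrees_eq_twice_card_edges]
  have h1 : ∑ v ∈ S v0, G.degree v ≤ (S v0).card * (S v0).card := by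
    rw [← smul_eq_mul]
    exact Finset.sum_le_card_nsmul _ _ _ fun v _ => (hdeg v).trans (hmax v (Finset.mem_univ _))
  have h2 : ∑ v ∈ (S v0)ᶜ, G.degree v ≤ (S v0)ᶜ.card * (S v0).card := by
    rw [← smul_eq_mul]
    exact Finset.sum_le_card_nsmul _ _ _ fun v _ => (hdeg v).trans (hmax v (Finset.mem_univ _))
  have h3 : ∑ v ∈ (S v0)ᶜ, G.degree v ≤ (S v0)ᶜ.card * (S v0)ᶜ.card := by
    rw [← smul_eq_mul]
    refine Finset.sum_le_card_nsmul _ _ _ fun v hv => (hdeg v).trans (Finset.card_le_card ?_)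
    intro w hw
    have hv' : ¬ G.connectedComponentMk v = G.connectedComponentMk v0 := by
      simpa [S] using hv
    have hw' : G.connectedComponentMk w = G.connectedComponentMk v := by
      simpa [S] using hw
    have : w ∉ S v0 := by
      intro h
      have h' : G.connectedComponentMk w = G.connectedComponentMk v0 := by simpa [S] using h
      exact hv' (hw'.symm.trans h')
    simpa using this
  have h4 : ∑ v ∈ S v0, G.degree v ≤ 2 * (compEdges G (G.connectedComponentMk v0)).ncard :=
    sum_degree_comp_le G _
  have h5 := hm (G.connectedComponentMk v0)
  generalize ∑ v ∈ S v0, G.degree v = A at *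
  generalize ∑ v ∈ (S v0)ᶜ, G.degree v = B at *
  generalize (S v0).card = a at *
  generalize (S v0)ᶜ.card = b at *
  rw [← hcompl] at hm2 ⊢
  push_cast at hm2 ⊢
  have e1 : (A : ℝ) ≤ a * a := by exact_mod_cast h1
  have e2 : (B : ℝ) ≤ b * a := by exact_mod_cast h2
  have e3 : (B : ℝ) ≤ b * b := by exact_mod_cast h3
  have e4 : (A : ℝ) ≤ 2 * ((compEdges G (G.connectedComponentMk v0)).ncard : ℝ) := by
    exact_mod_cast h4
  have e5 : (A : ℝ) + B = 2 * (G.edgeFinset.card : ℝ) := by exact_mod_cast hsplit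
  have ha : (0 : ℝ) ≤ a := a.cast_nonneg
  have hb : (0 : ℝ) ≤ b := b.cast_nonneg
  rcases le_total (2 * (b : ℝ)) a with h | h
  · nlinarith
  · rcases le_total (b : ℝ) (2 * a) with h' | h'
    · nlinarith [mul_nonneg (sub_nonneg.2 h) (sub_nonneg.2 h')]
    · nlinarith [mul_nonneg ha hb]

/-- For every `ε > 0` there exists `n0` such that for every `n ≥ n0`, if `L`
is a simple graph on `n` vertices with at least `(5/9 + ε)·C(n,2)` edges and `C` is a connected
component of `L` with the maximum number of edges among all components, then the number of
edges of `L` with both endpoints in `C` is strictly greater than `(4/9)·C(n,2)`. -/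
theorem stmt_2 (ε : ℝ) (hε : 0 < ε) : ∃ n0 : ℕ, ∀ n : ℕ, n0 ≤ n →
    ∀ (V : Type) [Fintype V] [DecidableEq V], Fintype.card V = n →
    ∀ (G : SimpleGraph V) [DecidableRel G.Adj],
      (5/9 + ε) * (n.choose 2 : ℝ) ≤ (G.edgeFinset.card : ℝ) →
      ∀ C : G.ConnectedComponent,
        (∀ D : G.ConnectedComponent, (compEdges G D).ncard ≤ (compEdges G C).ncard) →
        (4/9 : ℝ) * (n.choose 2 : ℝ) < ((compEdges G C).ncard : ℝ) := by
  obtain ⟨k, hk⟩ := exists_nat_gt (5/9 / ε)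
  refine ⟨k + 1, ?_⟩
  intro n hn V _ _ hV G _ hE C hC
  by_contra hcon
  push Not at hcon
  have hne : Nonempty V := by
    rw [← Fintype.card_pos_iff]; omega
  have hch : (n.choose 2 : ℝ) = n * (n - 1) / 2 := Nat.cast_choose_two ℝ n
  have hkn : (k : ℝ) + 1 ≤ n := by exact_mod_cast hn
  have hk0 : (0 : ℝ) ≤ k := k.cast_nonneg
  have key := two_mul_edges_le G (4/9 * (n.choose 2 : ℝ))
    (fun D => le_trans (by exact_mod_cast hC D) hcon) (by rw [hV, hch]; nlinarith)
  rw [hV] at key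
  have hE' : (5/9 + ε) * (n.choose 2 : ℝ) * 2 ≤ 5/9 * (n : ℝ)^2 := by
    refine le_trans ?_ key
    have : (5/9 + ε) * (n.choose 2 : ℝ) ≤ _ := hE
    convert mul_le_mul_of_nonneg_left this (zero_le_two (α := ℝ)) using 1
    · ring
    · congr!
  rw [hch] at hE'
  have h1 : 5/9 < k * ε := (div_lt_iff₀ hε).1 hk
  have h2 : k * ε ≤ (n - 1) * ε := mul_le_mul_of_nonneg_right (by linarith) hε.le
  have h3 : (0:ℝ) < n := by linarith
  have h4 : 0 < (n : ℝ) * ((n - 1) * ε - 5/9) := mul_pos h3 (by linarith)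
  nlinarith
end

section
/- For every ε > 0 there exists n0 such that the following holds for every n ≥ n0. Let L be a simple graph on n vertices with at least (5/9 + ε)·binom(n,2) edges, and let C be a connected component of L containing the maximum number of edges among all connected components of L. Then L has a matching consisting of at least n/3 pairwise disjoint edges, all of whose edges have both endpoints in C. -/
open Finset

/-- A matching encoded as an involution: fixed points are the unmatched vertices. -/
def MInv {V : Type} (H : SimpleGraph V) (f : V → V) : Prop :=
  (∀ v, f (f v) = v) ∧ ∀ v, f v ≠ v → H.Adj v (f v)

/-- The vertices covered by the matching. -/
def mov {V : Type} [Fintype V] [DecidableEq V] (f : V → V) : Finset V :=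
  univ.filter (fun v => f v ≠ v)

open Classical in
/-- The degree, as the size of a filter. -/
noncomputable def dg {V : Type} [Fintype V] (H : SimpleGraph V) (v : V) : ℕ :=
  (univ.filter (fun w => H.Adj v w)).card

section
variable {V : Type} [Fintype V] [DecidableEq V]

lemma mem_mov (f : V → V) (v : V) : v ∈ mov f ↔ f v ≠ v := by simp [mov]

lemma mov_even {H : SimpleGraph V} {f : V → V} (hf : MInv H f) : Even (mov f).card := by
  have h := Finset.sum_involution (s := mov f) (f := fun _ => (1 : ZMod 2)) (fun v _ => f v)
    (by intro a _; decide) (by intro a ha _; exact (mem_mov f a).1 ha)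
    (by intro a ha; rw [mem_mov] at *; rw [hf.1]; exact ha.symm)
    (by intro a _; exact hf.1 a)
  simp only [sum_const, nsmul_eq_mul, mul_one] at h
  exact (ZMod.natCast_eq_zero_iff_even).1 h

/-- Adding an edge between two uncovered vertices. -/
lemma augment {H : SimpleGraph V} {f : V → V} (hf : MInv H f) {u v : V} (huv : H.Adj u v)
    (hu : f u = u) (hv : f v = v) :
    ∃ g, MInv H g ∧ (mov f).card < (mov g).card := by
  have hne : u ≠ v := huv.ne
  have hvu := huv.symm
  have hfu : ∀ w, f w = u → w = u := fun w h => by rw [← hf.1 w, h, hu]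
  have hfv : ∀ w, f w = v → w = v := fun w h => by rw [← hf.1 w, h, hv]
  refine ⟨fun w => if w = u then v else if w = v then u else f w, ⟨?_, ?_⟩, ?_⟩
  · intro w
    have := hf.1 w
    have := hfu w
    have := hfv w
    grind
  · intro w
    have := hf.2 w
    grind
  · apply Finset.card_lt_card
    rw [Finset.ssubset_iff_of_subset]
    · refine ⟨u, ?_, ?_⟩
      · rw [mem_mov]; simp [hne.symm]
      · rw [mem_mov]; simp [hu]
    · intro w
      rw [mem_mov, mem_mov]
      grind

/-- The key exchange lemma (Gallai). -/
lemma gallai {H : SimpleGraph V} {k : ℕ} (hmax : ∀ f, MInv H f → (mov f).card ≤ k)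
    {t : V} (ht : ∃ f, MInv H f ∧ (mov f).card = k ∧ f t = t)
    {M : V → V} (hM : MInv H M) (hMk : (mov M).card = k) {u v : V}
    (hu : H.Adj t u) (hv : H.Adj t v) (hMu : M u = u) (hMv : M v = v) : u = v := by
  classical
  by_contra huv
  have noaug : ∀ f, MInv H f → (mov f).card = k → ∀ a b, H.Adj a b → f a = a → f b ≠ b := by
    intro f hf hk a b hab ha hb
    obtain ⟨g, hg, hlt⟩ := augment hf hab ha hb
    have := hmax g hg
    omega
  let P : Finset (V → V) := univ.filter (fun f => MInv H f ∧ (mov f).card = k ∧ f t = t)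
  have hP : P.Nonempty := by
    obtain ⟨f, hf⟩ := ht
    exact ⟨f, by simpa [P] using hf⟩
  obtain ⟨N, hNP, hNmax⟩ := P.exists_max_image
    (fun f => (univ.filter (fun w => M w = f w)).card) hP
  obtain ⟨hN, hNk, hNt⟩ : MInv H N ∧ (mov N).card = k ∧ N t = t := by simpa [P] using hNP
  have hMt : M t ≠ t := noaug M hM hMk u t hu.symm hMu
  have hNu : N u ≠ u := noaug N hN hNk t u hu hNt
  have hNv : N v ≠ v := noaug N hN hNk t v hv hNt
  have h2 : 2 ≤ (mov N \ mov M).card := by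
    rw [← Finset.card_pair huv]
    apply Finset.card_le_card
    intro w hw
    simp only [mem_insert, mem_singleton] at hw
    rw [mem_sdiff, mem_mov, mem_mov]
    grind
  have h3 : (mov M \ mov N).card = (mov N \ mov M).card := by
    have h1 := Finset.card_sdiff_add_card_inter (mov M) (mov N)
    have h2 := Finset.card_sdiff_add_card_inter (mov N) (mov M)
    rw [Finset.inter_comm] at h2
    omega
  obtain ⟨x, hx, hxt⟩ := Finset.exists_mem_ne (s := mov M \ mov N) (by omega) t
  rw [mem_sdiff, mem_mov, mem_mov, not_not] at hx
  obtain ⟨hMx, hNx⟩ := hx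
  obtain ⟨y, hy⟩ : ∃ y, y = M x := ⟨_, rfl⟩
  have hxy : H.Adj x y := hy ▸ hM.2 x hMx
  have hMy : M y = x := by rw [hy, hM.1]
  have hNy : N y ≠ y := noaug N hN hNk x y hxy hNx
  obtain ⟨z, hz⟩ : ∃ z, z = N y := ⟨_, rfl⟩
  have hNz : N z = y := by rw [hz, hN.1]
  have hxy' : x ≠ y := hxy.ne
  have hzx : z ≠ x := by rintro rfl; grind
  have hzy : z ≠ y := by rw [hz]; exact hNy
  have hyx := hxy.symm
  let N' : V → V := fun w => if w = x then y else if w = y then x else if w = z then z else N w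
  have hN' : MInv H N' := by
    constructor
    · intro w
      have h1 := hN.1 w
      simp only [N']
      grind
    · intro w
      have h1 := hN.2 w
      simp only [N']
      grind
  have hmov : mov N' = insert x ((mov N).erase z) := by
    ext w
    rw [mem_mov, mem_insert, mem_erase, mem_mov]
    simp only [N']
    grind
  have hk' : (mov N').card = k := by
    have hzm : z ∈ mov N := by rw [mem_mov, hNz]; exact hzy.symm
    rw [hmov, Finset.card_insert_of_notMem, Finset.card_erase_of_mem hzm]
    · have := Finset.card_pos.2 ⟨z, hzm⟩
      omega
    · rw [mem_erase, mem_mov]; simp [hNx]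
  have hN't : N' t = t := by
    simp only [N']
    grind
  have := hNmax N' (by simp only [P, mem_filter, mem_univ, true_and]; exact ⟨hN', hk', hN't⟩)
  have hlt : (univ.filter (fun w => M w = N w)).card < (univ.filter (fun w => M w = N' w)).card := by
    apply Finset.card_lt_card
    rw [Finset.ssubset_iff_of_subset]
    · refine ⟨x, ?_, ?_⟩
      · simp [N', hy]
      · simp only [mem_filter, mem_univ, true_and]
        rw [hNx]; exact hMx
    · intro w
      have h1 := hM.1 w
      clear hmax noaug hNmax this hk' hmov hN' h2 h3 hNP hP ht
      simp only [mem_filter, mem_univ, true_and, N']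
      grind
  omega

/-- If every vertex is missed by some maximum matching, there are few edges. -/
lemma case_crit {H : SimpleGraph V} {k : ℕ} (hmax : ∀ f, MInv H f → (mov f).card ≤ k)
    (ht : ∀ t, ∃ f, MInv H f ∧ (mov f).card = k ∧ f t = t) :
    ∑ v, dg H v ≤ k * k + k := by
  classical
  rcases isEmpty_or_nonempty V with hV | ⟨⟨v0⟩⟩
  · simp
  obtain ⟨M, hM, hMk, -⟩ := ht v0
  have key : ∀ t, ((univ.filter (fun w => H.Adj t w)).filter (fun w => M w = w)).card ≤ 1 := by
    intro t
    rw [Finset.card_le_one]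
    intro a ha b hb
    simp only [mem_filter, mem_univ, true_and] at ha hb
    exact gallai hmax (ht t) hM hMk ha.1 hb.1 ha.2 hb.2
  have h1 : ∑ v ∈ mov M, dg H v ≤ k * k := by
    calc ∑ v ∈ mov M, dg H v ≤ ∑ v ∈ mov M, k := by
          apply Finset.sum_le_sum
          intro v hv
          unfold dg
          rw [← Finset.card_filter_add_card_filter_not (fun w => M w = w)]
          have h2 : ((univ.filter (fun w => H.Adj v w)).filter (fun w => ¬ M w = w)).card
              ≤ ((mov M).erase v).card := by
            apply Finset.card_le_card
            intro w
            simp only [mem_filter, mem_univ, true_and, mem_erase, mem_mov]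
            rintro ⟨h, h'⟩
            exact ⟨h.ne', h'⟩
          rw [Finset.card_erase_of_mem hv] at h2
          have := Finset.card_pos.2 ⟨v, hv⟩
          have := key v
          omega
      _ = k * k := by simp [hMk]
  have h2 : ∑ v ∈ univ.filter (fun v => ¬ M v ≠ v), dg H v ≤ k := by
    have e : ∀ v ∈ univ.filter (fun v => ¬ M v ≠ v),
        dg H v = ∑ w ∈ mov M, if H.Adj v w then 1 else 0 := by
      intro v hv
      simp only [mem_filter, mem_univ, true_and, not_not] at hv
      unfold dg
      rw [← Finset.card_filter]
      congr 1
      ext w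
      simp only [mem_filter, mem_univ, true_and, mem_mov]
      refine ⟨fun h => ⟨fun hw => ?_, h⟩, fun h => h.2⟩
      obtain ⟨g, hg, hlt⟩ := augment hM h hv hw
      have := hmax g hg
      omega
    rw [Finset.sum_congr rfl e, Finset.sum_comm]
    calc _ ≤ ∑ w ∈ mov M, 1 := by
          apply Finset.sum_le_sum
          intro w _
          rw [← Finset.card_filter]
          refine le_trans (Finset.card_le_card ?_) (key w)
          intro v
          simp only [mem_filter, mem_univ, true_and, not_not]
          rintro ⟨h, h'⟩
          exact ⟨h'.symm, h⟩
      _ = k := by simp [hMk]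
  have h3 := Finset.sum_filter_add_sum_filter_not univ (fun v => M v ≠ v) (dg H)
  have h4 : mov M = univ.filter (fun v => M v ≠ v) := rfl
  rw [← h4] at h3
  omega

/-- The graph with the edges at `v` deleted. -/
def delV (H : SimpleGraph V) (v : V) : SimpleGraph V where
  Adj a b := H.Adj a b ∧ a ≠ v ∧ b ≠ v
  symm := ⟨fun _ _ h => ⟨h.1.symm, h.2.2, h.2.1⟩⟩
  loopless := ⟨fun _ h => h.1.ne rfl⟩

lemma delV_deg (H : SimpleGraph V) (v : V) :
    ∑ u, dg H u ≤ ∑ u, dg (delV H v) u + 2 * dg H v := by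
  classical
  have h : ∀ u, dg H u ≤ dg (delV H v) u + (if H.Adj v u then 1 else 0)
      + (if u = v then dg H v else 0) := by
    intro u
    by_cases hu : u = v
    · subst hu; simp
    · have h1 : dg H u ≤ dg (delV H v) u
          + ((univ.filter (fun w => H.Adj u w)).filter (fun w => w = v)).card := by
        unfold dg
        rw [← Finset.card_filter_add_card_filter_not (s := univ.filter (fun w => H.Adj u w))
          (fun w => w = v), add_comm]
        gcongr
        intro w
        simp only [mem_filter, mem_univ, true_and, delV]
        grind
      have h2 : ((univ.filter (fun w => H.Adj u w)).filter (fun w => w = v)).card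
          ≤ if H.Adj v u then 1 else 0 := by
        split_ifs with h
        · rw [Finset.card_le_one]
          intro a ha b hb
          simp only [mem_filter] at ha hb
          rw [ha.2, hb.2]
        · rw [Nat.le_zero, Finset.card_eq_zero, Finset.filter_eq_empty_iff]
          rintro w hw rfl
          simp only [mem_filter, mem_univ, true_and] at hw
          exact h hw.symm
      simp only [hu, if_false]
      omega
  calc ∑ u, dg H u ≤ ∑ u, (dg (delV H v) u + (if H.Adj v u then 1 else 0)
      + (if u = v then dg H v else 0)) := Finset.sum_le_sum (fun u _ => h u)
    _ = ∑ u, dg (delV H v) u + 2 * dg H v := by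
      rw [Finset.sum_add_distrib, Finset.sum_add_distrib, ← Finset.card_filter]
      simp only [sum_ite_eq', mem_univ, if_true]
      have : (univ.filter (fun u => H.Adj v u)).card = dg H v := rfl
      rw [this]; ring

lemma dg_le {H : SimpleGraph V} {S : Finset V} (hS : ∀ a b, H.Adj a b → a ∈ S) {v : V}
    (hv : v ∈ S) : dg H v + 1 ≤ S.card := by
  classical
  rw [← Finset.card_erase_add_one hv]
  unfold dg
  gcongr
  intro w
  simp only [mem_filter, mem_univ, true_and, mem_erase]
  intro h
  exact ⟨h.ne', hS _ _ h.symm⟩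

lemma erdos_gallai (s : ℕ) : ∀ (H : SimpleGraph V) (S : Finset V),
    (∀ a b, H.Adj a b → a ∈ S) → (∀ f, MInv H f → (mov f).card ≤ 2 * s) →
    ∃ a : ℕ, a ≤ s ∧ ((∑ v, dg H v : ℕ) : ℤ) ≤
      2 * a * S.card - a ^ 2 + 4 * ((s : ℤ) - a) ^ 2 + 2 * s := by
  induction s with
  | zero =>
    intro H S _ hmax
    refine ⟨0, le_rfl, ?_⟩
    have hid : MInv H id := ⟨fun _ => rfl, fun v h => absurd rfl h⟩
    have := case_crit hmax (fun t => ⟨id, hid, by simp [mov], rfl⟩)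
    simp only [mul_zero, add_zero, Nat.le_zero] at this
    rw [this]; simp
  | succ s ih =>
    intro H S hS hmax
    by_cases hex : ∃ v, ∀ f, MInv (delV H v) f → (mov f).card ≤ 2 * s
    · obtain ⟨v, hv⟩ := hex
      have hd := delV_deg H v
      by_cases hvS : v ∈ S
      · obtain ⟨a, ha, hb⟩ := ih (delV H v) (S.erase v)
          (fun a b h => Finset.mem_erase.2 ⟨h.2.1, hS _ _ h.1⟩) hv
        refine ⟨a + 1, by omega, ?_⟩
        have hc := dg_le hS hvS
        rw [Finset.card_erase_of_mem hvS] at hb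
        have hpos : 1 ≤ S.card := Finset.card_pos.2 ⟨v, hvS⟩
        push_cast [Nat.cast_sub hpos] at hb ⊢
        zify at hd hc
        nlinarith
      · have h0 : dg H v = 0 := by
          classical
          unfold dg
          rw [Finset.card_eq_zero, Finset.filter_eq_empty_iff]
          intro w _ h
          exact hvS (hS _ _ h)
        obtain ⟨a, ha, hb⟩ := ih (delV H v) S (fun a b h => hS _ _ h.1) hv
        refine ⟨a, by omega, ?_⟩
        rw [h0] at hd
        push_cast at hb ⊢
        zify at hd ha
        nlinarith
    · push Not at hex
      refine ⟨0, by omega, ?_⟩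
      have := case_crit hmax (fun t => by
        obtain ⟨f, hf, hc⟩ := hex t
        have hfH : MInv H f := ⟨hf.1, fun w hw => (hf.2 w hw).1⟩
        refine ⟨f, hfH, ?_, ?_⟩
        · have h1 := hmax f hfH
          obtain ⟨r, hr⟩ := mov_even hfH
          omega
        · by_contra h
          exact (hf.2 t h).2.1 rfl)
      zify at this
      push_cast at this ⊢
      nlinarith

/-- The graph of edges of `G` within the component `C`. -/
def compG (G : SimpleGraph V) (C : G.ConnectedComponent) : SimpleGraph V where
  Adj a b := G.Adj a b ∧ G.connectedComponentMk a = C ∧ G.connectedComponentMk b = C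
  symm := ⟨fun _ _ h => ⟨h.1.symm, h.2.2, h.2.1⟩⟩
  loopless := ⟨fun _ h => h.1.ne rfl⟩

lemma sum_dg (H : SimpleGraph V) : ∑ v, dg H v = 2 * H.edgeSet.ncard := by
  classical
  rw [← SimpleGraph.coe_edgeFinset, Set.ncard_coe_finset, ← H.sum_degrees_eq_twice_card_edges]
  apply Finset.sum_congr rfl
  intro v _
  unfold dg
  rw [← SimpleGraph.card_neighborFinset_eq_degree, SimpleGraph.neighborFinset_eq_filter]

lemma compG_edgeSet (G : SimpleGraph V) (C : G.ConnectedComponent) :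
    (compG G C).edgeSet = compEdges G C := by
  ext e
  induction e with
  | _ a b => simp [compG, compEdges]

open Classical in
/-- Vertices of a component. -/
noncomputable def cv (G : SimpleGraph V) (C : G.ConnectedComponent) : Finset V :=
  univ.filter (fun v => G.connectedComponentMk v = C)

lemma mem_cv (G : SimpleGraph V) (C : G.ConnectedComponent) (v : V) :
    v ∈ cv G C ↔ G.connectedComponentMk v = C := by simp [cv]

lemma adj_mk {G : SimpleGraph V} {a b : V} (h : G.Adj a b) :
    G.connectedComponentMk a = G.connectedComponentMk b :=
  SimpleGraph.ConnectedComponent.sound h.reachable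

lemma dg_compG (G : SimpleGraph V) (C : G.ConnectedComponent) :
    ∑ v, dg (compG G C) v = ∑ v ∈ cv G C, dg G v := by
  classical
  symm
  rw [← Finset.sum_subset (Finset.subset_univ (cv G C))]
  · apply Finset.sum_congr rfl
    intro v hv
    rw [mem_cv] at hv
    unfold dg
    congr 1
    ext w
    rw [mem_filter, mem_filter]
    simp only [mem_univ, true_and, compG]
    exact ⟨fun h => ⟨h, hv, (adj_mk h) ▸ hv⟩, fun h => h.1⟩
  · intro v _ hv
    rw [mem_cv] at hv
    unfold dg
    rw [Finset.card_eq_zero, Finset.filter_eq_empty_iff]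
    intro w _ h
    exact hv h.2.1

lemma dg_le_cv (G : SimpleGraph V) (C : G.ConnectedComponent) :
    ∑ v ∈ cv G C, dg G v ≤ (cv G C).card * (cv G C).card := by
  classical
  rw [← smul_eq_mul]
  apply Finset.sum_le_card_nsmul
  intro v hv
  unfold dg
  apply Finset.card_le_card
  intro w
  simp only [mem_filter, mem_univ, true_and, mem_cv] at *
  intro h
  rw [← adj_mk h, hv]

lemma dg_compl (G : SimpleGraph V) (C : G.ConnectedComponent) :
    ∑ v ∈ (cv G C)ᶜ, dg G v ≤ (cv G C)ᶜ.card * (cv G C)ᶜ.card := by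
  classical
  rw [← smul_eq_mul (a := (cv G C)ᶜ.card)]
  apply Finset.sum_le_card_nsmul
  intro v hv
  unfold dg
  apply Finset.card_le_card
  intro w
  simp only [mem_filter, mem_univ, true_and, mem_compl, mem_cv] at *
  intro h
  rw [← adj_mk h]; exact hv

lemma small_case (G : SimpleGraph V) (C : G.ConnectedComponent)
    (hC : ∀ D : G.ConnectedComponent, (compEdges G D).ncard ≤ (compEdges G C).ncard) :
    ∑ v, dg G v ≤ (cv G C).card * Fintype.card V := by
  classical
  have hfib := Finset.sum_fiberwise (univ : Finset V) (fun v => G.connectedComponentMk v) (dg G)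
  have hfib2 := Finset.sum_fiberwise (univ : Finset V) (fun v => G.connectedComponentMk v)
    (fun _ => 1)
  have e : ∀ D, univ.filter (fun v => G.connectedComponentMk v = D) = cv G D := by
    intro D; ext v; simp [mem_cv]
  simp only [e] at hfib hfib2
  have hcard : Fintype.card V = ∑ D, (cv G D).card := by
    simpa using hfib2.symm
  rw [← hfib, hcard, Finset.mul_sum]
  apply Finset.sum_le_sum
  intro D _
  have hD := dg_le_cv G D
  rcases le_total (cv G D).card (cv G C).card with h | h
  · exact hD.trans (Nat.mul_le_mul_right _ h)
  · have h1 := hC D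
    rw [← compG_edgeSet, ← compG_edgeSet] at h1
    have h2 : ∑ v ∈ cv G D, dg G v ≤ ∑ v ∈ cv G C, dg G v := by
      rw [← dg_compG, ← dg_compG, sum_dg, sum_dg]
      omega
    exact h2.trans ((dg_le_cv G C).trans (Nat.mul_le_mul_left _ h))

lemma to_matching (G : SimpleGraph V) (C : G.ConnectedComponent) {f : V → V}
    (hf : MInv (compG G C) f) :
    ∃ M : Finset (Sym2 V), (↑M : Set (Sym2 V)) ⊆ compEdges G C ∧
      (∀ e ∈ M, ∀ f ∈ M, e ≠ f → ∀ x : V, x ∈ e → x ∉ f) ∧ (mov f).card ≤ 2 * M.card := by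
  classical
  refine ⟨(mov f).image (fun v => s(v, f v)), ?_, ?_, ?_⟩
  · intro e he
    simp only [coe_image, Set.mem_image, mem_coe, mem_mov] at he
    obtain ⟨v, hv, rfl⟩ := he
    rw [← compG_edgeSet]
    exact hf.2 v hv
  · have key : ∀ v x, x ∈ s(v, f v) → s(v, f v) = s(x, f x) := by
      intro v x hx
      rw [Sym2.mem_iff] at hx
      rcases hx with rfl | rfl
      · rfl
      · rw [hf.1, Sym2.eq_swap]
    intro e he e' he' hne x hx hx'
    rw [mem_image] at he he'
    obtain ⟨v, -, rfl⟩ := he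
    obtain ⟨w, -, rfl⟩ := he'
    exact hne ((key _ _ hx).trans (key _ _ hx').symm)
  · apply Finset.card_le_mul_card_image
    intro e he
    rw [mem_image] at he
    obtain ⟨v, -, rfl⟩ := he
    refine le_trans (Finset.card_le_card (t := {v, f v}) ?_) Finset.card_le_two
    intro w
    simp only [mem_filter, mem_insert, mem_singleton]
    rintro ⟨-, h⟩
    have : w ∈ s(v, f v) := h ▸ Sym2.mem_mk_left w (f w)
    simpa using this

end

lemma arith (n m s a T : ℝ) (hs0 : 0 ≤ s) (ha0 : 0 ≤ a) (has : a ≤ s) (hsn : 3 * s ≤ n)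
    (hm0 : 0 ≤ m) (hmn : m ≤ n)
    (h1 : T ≤ m * n) (h2 : T ≤ m ^ 2 + (n - m) ^ 2)
    (h3 : T ≤ 2 * a * m - a ^ 2 + 4 * (s - a) ^ 2 + 2 * s + (n - m) ^ 2) :
    T ≤ 5 / 9 * n ^ 2 + n := by
  have hn : 0 ≤ n := hm0.trans hmn
  rcases le_total (3 * m) n with h | h
  · nlinarith
  rcases le_total (3 * m) (2 * n) with h' | h'
  · nlinarith
  have hq : (n - m) ^ 2 ≤ n ^ 2 / 9 := by nlinarith
  have hs2 : 4 * s ^ 2 ≤ 4 / 9 * n ^ 2 := by nlinarith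
  rcases le_total (3 * a + 2 * m) (6 * s) with hc | hc
  · have : 2 * a * m - a ^ 2 + 4 * (s - a) ^ 2 ≤ 4 * s ^ 2 := by
      have : a * (3 * a + 2 * m - 8 * s) ≤ 0 := by nlinarith
      nlinarith
    nlinarith
  · have hcv : 2 * a * m - a ^ 2 + 4 * (s - a) ^ 2 ≤ max (4 * s ^ 2) (2 * s * m - s ^ 2) := by
      rw [le_max_iff]
      by_contra hcon
      push Not at hcon
      nlinarith [hcon.1, hcon.2, mul_nonneg ha0 (sub_nonneg.2 has)]
    have h5 : 2 * s * m - s ^ 2 + (n - m) ^ 2 ≤ 5 / 9 * n ^ 2 := by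
      have e1 : 2 * s * m - s ^ 2 ≤ 2 / 3 * n * m - n ^ 2 / 9 := by nlinarith
      nlinarith
    rcases le_max_iff.1 hcv with h6 | h6 <;> linarith

/-- For every `ε > 0` there exists `n0` such that for every `n ≥ n0`, if `L`
is a simple graph on `n` vertices with at least `(5/9 + ε)·C(n,2)` edges and `C` is a connected
component of `L` with the maximum number of edges among all components, then `L` has a matching
of at least `n/3` pairwise disjoint edges, all with both endpoints in `C`. -/
theorem stmt_3 (ε : ℝ) (hε : 0 < ε) : ∃ n0 : ℕ, ∀ n : ℕ, n0 ≤ n →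
    ∀ (V : Type) [Fintype V] [DecidableEq V], Fintype.card V = n →
    ∀ (G : SimpleGraph V) [DecidableRel G.Adj],
      (5/9 + ε) * (n.choose 2 : ℝ) ≤ (G.edgeFinset.card : ℝ) →
      ∀ C : G.ConnectedComponent,
        (∀ D : G.ConnectedComponent, (compEdges G D).ncard ≤ (compEdges G C).ncard) →
        ∃ M : Finset (Sym2 V),
          (↑M : Set (Sym2 V)) ⊆ compEdges G C ∧
          (∀ e ∈ M, ∀ f ∈ M, e ≠ f → ∀ x : V, x ∈ e → x ∉ f) ∧
          (n : ℝ) / 3 ≤ (M.card : ℝ) := by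
  refine ⟨⌈2 / ε⌉₊ + 2, ?_⟩
  intro n hn V _ _ hV G _ hE C hC
  by_contra hcon
  have hn1 : 1 ≤ n := by omega
  have hnε : 2 + 2 * ε ≤ ε * n := by
    have h1 : (2 / ε : ℝ) ≤ ⌈2 / ε⌉₊ := Nat.le_ceil _
    have h2 : ((⌈2 / ε⌉₊ : ℝ) + 2) ≤ n := by exact_mod_cast hn
    have h3 : 2 / ε + 2 ≤ n := by linarith
    have h4 : ε * (2 / ε + 2) ≤ ε * n := by gcongr
    have h5 : ε * (2 / ε + 2) = 2 + 2 * ε := by field_simp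
    linarith
  obtain ⟨s, hs⟩ : ∃ s, s = (n - 1) / 3 := ⟨_, rfl⟩
  have hmax : ∀ f, MInv (compG G C) f → (mov f).card ≤ 2 * s := by
    intro f hf
    by_contra hlt
    obtain ⟨M, hM1, hM2, hM3⟩ := to_matching G C hf
    refine hcon ⟨M, hM1, hM2, ?_⟩
    have : n ≤ 3 * M.card := by omega
    have : (n : ℝ) ≤ 3 * M.card := by exact_mod_cast this
    linarith
  obtain ⟨a, has, hb⟩ := erdos_gallai s (compG G C) (cv G C)
    (fun a b h => (mem_cv _ _ _).2 h.2.1) hmax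
  have htot : ∑ v, dg G v = 2 * G.edgeFinset.card := by
    rw [sum_dg, ← SimpleGraph.coe_edgeFinset, Set.ncard_coe_finset]
  have hsplit := Finset.sum_add_sum_compl (cv G C) (dg G)
  have hsm := small_case G C hC
  have hcv := dg_le_cv G C
  have hcc := dg_compl G C
  rw [dg_compG] at hb
  have hcard := Finset.card_add_card_compl (cv G C)
  rw [hV] at hcard hsm
  obtain ⟨m, hm⟩ : ∃ m, m = (cv G C).card := ⟨_, rfl⟩
  obtain ⟨m', hm'⟩ : ∃ m', m' = (cv G C)ᶜ.card := ⟨_, rfl⟩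
  rw [← hm] at hb hcv hcard hsm
  rw [← hm'] at hcc hcard
  have hb' : ((∑ v ∈ cv G C, dg G v : ℕ) : ℝ) ≤
      2 * a * m - a ^ 2 + 4 * ((s : ℝ) - a) ^ 2 + 2 * s := by exact_mod_cast hb
  have hcv' : ((∑ v ∈ cv G C, dg G v : ℕ) : ℝ) ≤ m * m := by exact_mod_cast hcv
  have hcc' : ((∑ v ∈ (cv G C)ᶜ, dg G v : ℕ) : ℝ) ≤ m' * m' := by exact_mod_cast hcc
  have hsm' : ((∑ v, dg G v : ℕ) : ℝ) ≤ m * n := by exact_mod_cast hsm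
  have hsp : ((∑ v ∈ cv G C, dg G v : ℕ) : ℝ) + ((∑ v ∈ (cv G C)ᶜ, dg G v : ℕ) : ℝ)
      = ((∑ v, dg G v : ℕ) : ℝ) := by exact_mod_cast hsplit
  have hmm : (m' : ℝ) = n - m := by
    rw [eq_sub_iff_add_eq, add_comm]; exact_mod_cast hcard
  rw [hmm] at hcc'
  have hfin := arith n m s a ((∑ v, dg G v : ℕ) : ℝ) (by positivity) (by positivity)
    (by exact_mod_cast has) (by exact_mod_cast (by omega : 3 * s ≤ n)) (by positivity)
    (by exact_mod_cast (by omega : m ≤ n)) hsm' (by nlinarith) (by nlinarith)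
  rw [htot] at hfin
  rw [Nat.cast_choose_two] at hE
  push_cast at hfin
  have hn0 : (1 : ℝ) ≤ n := by exact_mod_cast hn1
  nlinarith
end

section
/- For every ε > 0 there exists n0 such that the following holds for every n ≥ n0. Let L be a simple graph on n vertices with at least (5/9 + ε)·binom(n,2) edges, and let C be a connected component of L containing the maximum number of edges among all connected components of L. Then C contains a triangle, i.e. three pairwise adjacent vertices of L all lying in C. -/
/-- `G` restricted to the connected component `D`, on the same vertex type. -/
def compGraph {V : Type*} (G : SimpleGraph V) (D : G.ConnectedComponent) : SimpleGraph V where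
  Adj x y := G.Adj x y ∧ G.connectedComponentMk x = D
  symm := ⟨fun x y h =>
    ⟨h.1.symm, (SimpleGraph.ConnectedComponent.connectedComponentMk_eq_of_adj h.1).symm.trans h.2⟩⟩
  loopless := ⟨fun x h => G.loopless.irrefl x h.1⟩

open Classical in
/-- Mantel's theorem for a graph supported on a finset `S`. -/
theorem mantel_on {V : Type*} [Fintype V] (H : SimpleGraph V) (S : Finset V)
    (hS : ∀ x y, H.Adj x y → x ∈ S)
    (hT : ∀ x y z, H.Adj x y → H.Adj y z → H.Adj x z → False) :
    2 * (∑ v, H.degree v) ≤ S.card ^ 2 := by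
  have hdS : ∀ v, v ∉ S → H.degree v = 0 := by
    intro v hv
    rw [← SimpleGraph.card_neighborFinset_eq_degree, Finset.card_eq_zero,
      Finset.eq_empty_iff_forall_notMem]
    intro y hy
    exact hv (hS v y (by simpa using hy))
  have hsum : ∑ v ∈ S, H.degree v = ∑ v, H.degree v :=
    Finset.sum_subset (Finset.subset_univ _) (fun v _ hv => hdS v hv)
  have hadj : ∀ v w, H.Adj v w → H.degree v + H.degree w ≤ S.card := by
    intro v w h
    rw [← SimpleGraph.card_neighborFinset_eq_degree, ← SimpleGraph.card_neighborFinset_eq_degree,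
      ← Finset.card_union_of_disjoint]
    · apply Finset.card_le_card
      intro y hy
      rcases Finset.mem_union.1 hy with hy | hy
      · exact hS y v (by simpa using (H.mem_neighborFinset _ _).1 hy |>.symm)
      · exact hS y w (by simpa using (H.mem_neighborFinset _ _).1 hy |>.symm)
    · rw [Finset.disjoint_left]
      intro y h1 h2
      rw [SimpleGraph.mem_neighborFinset] at h1 h2
      exact hT v w y h h2 h1
  have e1 : ∑ v, H.degree v ^ 2 = ∑ v, ∑ w, if H.Adj v w then H.degree v else 0 := by
    refine Finset.sum_congr rfl fun v _ => ?_
    rw [← Finset.sum_filter, Finset.sum_const, ← SimpleGraph.neighborFinset_eq_filter,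
      SimpleGraph.card_neighborFinset_eq_degree, sq, smul_eq_mul]
  have e2 : ∑ v, H.degree v ^ 2 = ∑ v, ∑ w, if H.Adj v w then H.degree w else 0 := by
    rw [e1, Finset.sum_comm]
    refine Finset.sum_congr rfl fun v _ => Finset.sum_congr rfl fun w _ => ?_
    simp [H.adj_comm]
  have e3 : 2 * ∑ v, H.degree v ^ 2 ≤ ∑ v, ∑ w, if H.Adj v w then S.card else 0 := by
    rw [two_mul]
    nth_rewrite 1 [e1]
    rw [e2, ← Finset.sum_add_distrib]
    refine Finset.sum_le_sum fun v _ => ?_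
    rw [← Finset.sum_add_distrib]
    refine Finset.sum_le_sum fun w _ => ?_
    split_ifs with h
    · exact hadj v w h
    · simp
  have e4 : ∑ v, ∑ w, (if H.Adj v w then S.card else 0) = (∑ v, H.degree v) * S.card := by
    rw [Finset.sum_mul]
    refine Finset.sum_congr rfl fun v _ => ?_
    rw [← Finset.sum_filter, Finset.sum_const, ← SimpleGraph.neighborFinset_eq_filter,
      SimpleGraph.card_neighborFinset_eq_degree, smul_eq_mul]
  have cs : (∑ v ∈ S, H.degree v) ^ 2 ≤ S.card * ∑ v ∈ S, H.degree v ^ 2 :=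
    sq_sum_le_card_mul_sum_sq
  have e5 : ∑ v ∈ S, H.degree v ^ 2 = ∑ v, H.degree v ^ 2 :=
    Finset.sum_subset (Finset.subset_univ _) (fun v _ hv => by rw [hdS v hv]; rfl)
  rw [hsum, e5] at cs
  rw [e4] at e3
  rcases Nat.eq_zero_or_pos (∑ v, H.degree v) with h0 | h0
  · rw [h0]; simp
  · refine Nat.le_of_mul_le_mul_left ?_ h0
    nlinarith [Nat.mul_le_mul_left S.card e3]

open Classical in
theorem comp_handshake {V : Type*} [Fintype V] (G : SimpleGraph V) (D : G.ConnectedComponent) :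
    ∑ v, (compGraph G D).degree v = 2 * (compEdges G D).ncard := by
  rw [SimpleGraph.sum_degrees_eq_twice_card_edges]
  congr 1
  rw [← Set.ncard_coe_finset, SimpleGraph.coe_edgeFinset]
  congr 1
  ext e
  induction e with
  | h x y =>
    simp only [SimpleGraph.mem_edgeSet, compGraph, compEdges, Set.mem_setOf_eq, Sym2.mem_iff,
      forall_eq_or_imp, forall_eq]
    constructor
    · rintro ⟨h, h'⟩
      exact ⟨h, h',
        (SimpleGraph.ConnectedComponent.connectedComponentMk_eq_of_adj h).symm.trans h'⟩
    · rintro ⟨h, h', _⟩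
      exact ⟨h, h'⟩

open Classical in
theorem comp_degsum {V : Type*} [Fintype V] (G : SimpleGraph V) (D : G.ConnectedComponent) :
    ∑ v with G.connectedComponentMk v = D, G.degree v = ∑ v, (compGraph G D).degree v := by
  rw [Finset.sum_filter]
  refine Finset.sum_congr rfl fun v _ => ?_
  rw [← SimpleGraph.card_neighborFinset_eq_degree, ← SimpleGraph.card_neighborFinset_eq_degree,
    SimpleGraph.neighborFinset_eq_filter, SimpleGraph.neighborFinset_eq_filter]
  split_ifs with h
  · simp [compGraph, h]
  · simp [compGraph, h]

open Classical in
theorem comp_degsum_le {V : Type*} [Fintype V] (G : SimpleGraph V) (D : G.ConnectedComponent) :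
    ∑ v with G.connectedComponentMk v = D, G.degree v ≤
      (Finset.univ.filter fun v => G.connectedComponentMk v = D).card ^ 2 := by
  rw [sq, ← smul_eq_mul]
  refine Finset.sum_le_card_nsmul _ _ _ fun v hv => ?_
  rw [← SimpleGraph.card_neighborFinset_eq_degree]
  refine Finset.card_le_card fun w hw => ?_
  rw [SimpleGraph.mem_neighborFinset] at hw
  simp only [Finset.mem_filter, Finset.mem_univ, true_and] at hv ⊢
  exact (SimpleGraph.ConnectedComponent.connectedComponentMk_eq_of_adj hw).symm.trans hv

open Classical in
theorem main_bound {V : Type*} [Fintype V] (G : SimpleGraph V) (C : G.ConnectedComponent)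
    (hC : ∀ D : G.ConnectedComponent, (compEdges G D).ncard ≤ (compEdges G C).ncard)
    (hT : ¬ ∃ x y z : V, G.Adj x y ∧ G.Adj y z ∧ G.Adj x z ∧
          G.connectedComponentMk x = C ∧ G.connectedComponentMk y = C ∧
          G.connectedComponentMk z = C) :
    2 * ∑ v, G.degree v ≤ Fintype.card V ^ 2 := by
  set s : G.ConnectedComponent → ℕ := fun D =>
    ∑ v with G.connectedComponentMk v = D, G.degree v with hs
  set c : G.ConnectedComponent → ℕ := fun D =>
    (Finset.univ.filter fun v => G.connectedComponentMk v = D).card with hc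
  have h1 : ∑ D, s D = ∑ v, G.degree v := Finset.sum_fiberwise _ _ _
  have h2 : ∑ D, c D = Fintype.card V := by
    rw [← Finset.card_univ]
    exact (Finset.card_eq_sum_card_fiberwise (fun _ _ => Finset.mem_univ _)).symm
  have hm : 2 * s C ≤ c C ^ 2 := by
    simp only [hs, hc]
    rw [comp_degsum]
    apply mantel_on
    · intro x y h
      simpa using h.2
    · intro x y z a b d
      refine hT ⟨x, y, z, a.1, b.1, d.1, a.2, b.2, ?_⟩
      exact (SimpleGraph.ConnectedComponent.connectedComponentMk_eq_of_adj b.1).symm.trans b.2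
  have hle : ∀ D, s D ≤ s C := by
    intro D
    simp only [hs]
    rw [comp_degsum, comp_degsum, comp_handshake, comp_handshake]
    exact Nat.mul_le_mul_left _ (hC D)
  have hD : ∀ D, s D ≤ c C * c D := by
    intro D
    rcases le_total (c D) (c C) with h | h
    · have : s D ≤ c D ^ 2 := comp_degsum_le G D
      nlinarith
    · have := hle D
      nlinarith
  have h3 : s C + ∑ D ∈ Finset.univ.erase C, s D = ∑ D, s D :=
    Finset.add_sum_erase _ _ (Finset.mem_univ C)
  have h4 : c C + ∑ D ∈ Finset.univ.erase C, c D = ∑ D, c D :=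
    Finset.add_sum_erase _ _ (Finset.mem_univ C)
  have h5 : ∑ D ∈ Finset.univ.erase C, s D ≤ c C * ∑ D ∈ Finset.univ.erase C, c D := by
    rw [Finset.mul_sum]
    exact Finset.sum_le_sum fun D _ => hD D
  rw [← h1, ← h2, ← h3, ← h4]
  nlinarith [Nat.zero_le ((∑ D ∈ Finset.univ.erase C, c D) ^ 2)]


/-- For every `ε > 0` there exists `n0` such that for every `n ≥ n0`, if `L`
is a simple graph on `n` vertices with at least `(5/9 + ε)·C(n,2)` edges and `C` is a connected
component of `L` with the maximum number of edges among all components, then `C` contains a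
triangle: three pairwise adjacent vertices of `L`, all lying in `C`. -/
theorem stmt_4 (ε : ℝ) (hε : 0 < ε) : ∃ n0 : ℕ, ∀ n : ℕ, n0 ≤ n →
    ∀ (V : Type) [Fintype V] [DecidableEq V], Fintype.card V = n →
    ∀ (G : SimpleGraph V) [DecidableRel G.Adj],
      (5/9 + ε) * (n.choose 2 : ℝ) ≤ (G.edgeFinset.card : ℝ) →
      ∀ C : G.ConnectedComponent,
        (∀ D : G.ConnectedComponent, (compEdges G D).ncard ≤ (compEdges G C).ncard) →
        ∃ x y z : V, G.Adj x y ∧ G.Adj y z ∧ G.Adj x z ∧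
          G.connectedComponentMk x = C ∧ G.connectedComponentMk y = C ∧
          G.connectedComponentMk z = C := by
  refine ⟨11, fun n hn V _ _ hV G _ hE C hC => ?_⟩
  by_contra hT
  have hb := main_bound G C hC hT
  have hE2 : 4 * G.edgeFinset.card ≤ n ^ 2 := by
    have h := G.sum_degrees_eq_twice_card_edges
    have h' : ∑ v, G.degree v = 2 * G.edgeFinset.card := by
      rw [← h]
    rw [hV] at hb
    have hb' : 2 * ∑ v, G.degree v ≤ n ^ 2 := by
      convert hb
    omega
  have hE3 : (4 : ℝ) * G.edgeFinset.card ≤ (n : ℝ) ^ 2 := by exact_mod_cast hE2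
  have hn' : (11 : ℝ) ≤ n := by exact_mod_cast hn
  rw [Nat.cast_choose_two] at hE
  have h0 : 0 ≤ (n : ℝ) * (n - 1) / 2 := by nlinarith
  nlinarith [mul_nonneg hε.le h0]
end

section
/- Let 2 ≤ k ≤ t ≤ n and let G be a k-graph on n vertices with minimum codegree δ(G) > f_k(t)·n. Then for any D1, D2 ∈ K_{t−1}(G) with |D1 ∩ D2| = t−2, there exists a vertex v such that D1 ∪ {v} ∈ K_t(G) and D2 ∪ {v} ∈ K_t(G). -/
/-- `X` is an edge of the clique `j`-graph `K_j(G)` of the `k`-graph with edge set `E`: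
`X` has `j` vertices and every `k`-element subset of `X` is an edge. -/
def cliqueEdge {V : Type*} [DecidableEq V] (E : Finset (Finset V)) (k j : ℕ)
    (X : Finset V) : Prop :=
  X.card = j ∧ ∀ S ⊆ X, S.card = k → S ∈ E

/-- Let `2 ≤ k ≤ t ≤ n` and let `G` be a `k`-graph on `n` vertices with
minimum codegree `δ(G) > f_k(t)·n` where `f_k(t) = 1 − 1/(C(t−1,k−1) + C(t−2,k−2))`.
Then for any `D1, D2 ∈ K_{t−1}(G)` with `|D1 ∩ D2| = t−2`, there exists a vertex `v` such that
`D1 ∪ {v} ∈ K_t(G)` and `D2 ∪ {v} ∈ K_t(G)`. -/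
theorem stmt_6 {V : Type*} [Fintype V] [DecidableEq V] (n k t : ℕ)
    (hk : 2 ≤ k) (hkt : k ≤ t) (htn : t ≤ n) (hn : Fintype.card V = n)
    (E : Finset (Finset V)) (hE : ∀ e ∈ E, e.card = k)
    (hdeg : ∀ D : Finset V, D.card = k - 1 →
      (1 - 1 / (((t-1).choose (k-1) : ℝ) + ((t-2).choose (k-2) : ℝ))) * n
        < ((E.filter (fun e => D ⊆ e)).card : ℝ))
    (D1 D2 : Finset V)
    (hD1 : cliqueEdge E k (t-1) D1) (hD2 : cliqueEdge E k (t-1) D2)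
    (hint : (D1 ∩ D2).card = t - 2) :
    ∃ v : V, cliqueEdge E k t (insert v D1) ∧ cliqueEdge E k t (insert v D2) := by
  classical
  set F : Finset (Finset V) := D1.powersetCard (k-1) ∪ D2.powersetCard (k-1) with hF
  set M : ℝ := ((t-1).choose (k-1) : ℝ) + ((t-2).choose (k-2) : ℝ) with hM
  have hFcardN : F.card = (t-1).choose (k-1) + (t-2).choose (k-2) := by
    have h1 := Finset.card_union_add_card_inter (D1.powersetCard (k-1)) (D2.powersetCard (k-1))
    have h2 : D1.powersetCard (k-1) ∩ D2.powersetCard (k-1) = (D1 ∩ D2).powersetCard (k-1) := by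
      ext S
      simp only [Finset.mem_inter, Finset.mem_powersetCard, Finset.subset_inter_iff]
      tauto
    rw [h2, Finset.card_powersetCard, Finset.card_powersetCard, Finset.card_powersetCard,
      hD1.1, hD2.1, hint] at h1
    obtain ⟨a, rfl⟩ : ∃ a, k = a + 2 := ⟨k - 2, by omega⟩
    obtain ⟨b, rfl⟩ : ∃ b, t = b + 2 := ⟨t - 2, by omega⟩
    have e1 : a + 2 - 1 = a + 1 := rfl
    have e2 : b + 2 - 1 = b + 1 := rfl
    have h3 := Nat.choose_succ_succ' b a
    simp only [e1, e2, Nat.add_sub_cancel] at h1 ⊢ hF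
    rw [hF]
    omega
  have hFcard : (F.card : ℝ) = M := by rw [hFcardN, hM]; push_cast; rfl
  have hpos : 0 < (t-1).choose (k-1) := Nat.choose_pos (by omega)
  have hMpos : 0 < M := by
    rw [← hFcard, hFcardN]
    exact_mod_cast Nat.add_pos_left hpos _
  have hFne : F.Nonempty := by
    rw [← Finset.card_pos, hFcardN]
    omega
  have hFS : ∀ S ∈ F, S.card = k - 1 := by
    intro S hS
    simp only [hF, Finset.mem_union, Finset.mem_powersetCard] at hS
    tauto
  have hbad : ∀ S ∈ F,
      ((Finset.univ.filter (fun v => insert v S ∉ E)).card : ℝ) < n / M := by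
    intro S hS
    have hc := hFS S hS
    have h1 := hdeg S hc
    have h2 : (E.filter (fun e => S ⊆ e)).card
        ≤ (Finset.univ.filter (fun v => insert v S ∈ E)).card := by
      refine le_trans (Finset.card_le_card (t := (Finset.univ.filter
        (fun v => insert v S ∈ E)).image (fun v => insert v S)) ?_) Finset.card_image_le
      intro e he
      rw [Finset.mem_filter] at he
      have h3 : S.card + 1 = e.card := by
        have := hE e he.1
        omega
      obtain ⟨a, _, rfl⟩ := Finset.exists_eq_insert_iff.2 ⟨he.2, h3⟩
      exact Finset.mem_image.2 ⟨a, by simpa using he.1, rfl⟩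
    have h4 := Finset.card_filter_add_card_filter_not (s := (Finset.univ : Finset V))
      (fun v => insert v S ∈ E)
    rw [Finset.card_univ, hn] at h4
    have h2' : ((E.filter (fun e => S ⊆ e)).card : ℝ)
        ≤ ((Finset.univ.filter (fun v => insert v S ∈ E)).card : ℝ) := by exact_mod_cast h2
    have h4' : ((Finset.univ.filter (fun v => insert v S ∈ E)).card : ℝ)
        + ((Finset.univ.filter (fun v => insert v S ∉ E)).card : ℝ) = n := by exact_mod_cast h4
    have h5 : (1 - 1 / M) * n = n - n / M := by ring
    rw [h5] at h1
    linarith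
  obtain ⟨v, hv⟩ : ∃ v, ∀ S ∈ F, insert v S ∈ E := by
    by_contra! hcon
    have h1 : (Finset.univ : Finset V) ⊆
        F.biUnion (fun S => Finset.univ.filter (fun v => insert v S ∉ E)) := by
      intro v _
      obtain ⟨S, hS, h⟩ := hcon v
      exact Finset.mem_biUnion.2 ⟨S, hS, by simpa using h⟩
    have h2 := (Finset.card_le_card h1).trans Finset.card_biUnion_le
    rw [Finset.card_univ, hn] at h2
    have h3 : (n : ℝ) ≤ ∑ S ∈ F, ((Finset.univ.filter (fun v => insert v S ∉ E)).card : ℝ) := by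
      exact_mod_cast h2
    have h4 := Finset.sum_lt_sum_of_nonempty hFne hbad
    rw [Finset.sum_const, nsmul_eq_mul, hFcard, mul_div_cancel₀ _ hMpos.ne'] at h4
    linarith
  have key : ∀ D : Finset V, cliqueEdge E k (t-1) D → D.powersetCard (k-1) ⊆ F →
      cliqueEdge E k t (insert v D) := by
    intro D hD hDF
    have hvD : v ∉ D := by
      intro hvD
      obtain ⟨S, h1, h2, h3⟩ := Finset.exists_subsuperset_card_eq
        (Finset.singleton_subset_iff.2 hvD) (n := k - 1)
        (by rw [Finset.card_singleton]; omega) (by rw [hD.1]; omega)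
      have h4 := hE _ (hv S (hDF (Finset.mem_powersetCard.2 ⟨h2, h3⟩)))
      rw [Finset.insert_eq_of_mem (Finset.singleton_subset_iff.1 h1)] at h4
      omega
    refine ⟨by rw [Finset.card_insert_of_notMem hvD, hD.1]; omega, ?_⟩
    intro T hT hTc
    by_cases hvT : v ∈ T
    · have h1 := hv (T.erase v) (hDF (Finset.mem_powersetCard.2
        ⟨Finset.subset_insert_iff.1 hT, by rw [Finset.card_erase_of_mem hvT, hTc]⟩))
      rwa [Finset.insert_erase hvT] at h1
    · exact hD.2 T ((Finset.subset_insert_iff_of_notMem hvT).1 hT) hTc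
  exact ⟨v, key D1 hD1 Finset.subset_union_left, key D2 hD2 Finset.subset_union_right⟩
end

section
/- Let 2 ≤ k ≤ t ≤ n and let G be a k-graph on n vertices with minimum codegree δ(G) > f_k(t)·n. Then K_t(G) contains a closed tight walk whose order is congruent to −1 modulo t: there exist an integer m ≥ t with m ≡ t−1 (mod t) and a function w : ℤ/mℤ → V such that for every i ∈ ℤ/mℤ the vertices w(i), w(i+1), …, w(i+t−1) are pairwise distinct and {w(i), …, w(i+t−1)} is an edge of K_t(G). -/
namespace Stmt8

variable {V : Type*} [DecidableEq V]

/-- every `k`-subset is an edge -/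
def IsCl (E : Finset (Finset V)) (k : ℕ) (X : Finset V) : Prop :=
  ∀ S ⊆ X, S.card = k → S ∈ E

lemma exists_common [Fintype V] (E : Finset (Finset V)) (k M : ℕ) (hk : 2 ≤ k)
    (hE : ∀ e ∈ E, e.card = k) (hM : 0 < M) (hn : 0 < Fintype.card V)
    (hdeg : ∀ D : Finset V, D.card = k - 1 →
      (1 - 1 / (M : ℝ)) * (Fintype.card V : ℝ) < ((E.filter (fun e => D ⊆ e)).card : ℝ))
    (F : Finset (Finset V)) (hF : ∀ D ∈ F, D.card = k - 1) (hFM : F.card ≤ M) :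
    ∃ w : V, ∀ D ∈ F, w ∉ D ∧ insert w D ∈ E := by
  classical
  by_contra hcon
  push Not at hcon
  let bad : Finset V → Finset V := fun D => Finset.univ.filter (fun w => ¬ (w ∉ D ∧ insert w D ∈ E))
  have hbad : ∀ D ∈ F, M * (bad D).card + 1 ≤ Fintype.card V := by
    intro D hD
    have h1 := hdeg D (hF D hD)
    have h2 : (E.filter (fun e => D ⊆ e)).card ≤
        (Finset.univ.filter (fun w => (w ∉ D ∧ insert w D ∈ E))).card := by
      refine le_trans (Finset.card_le_card ?_) (Finset.card_image_le (f := fun w => insert w D))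
      intro e he
      rw [Finset.mem_filter] at he
      have hc : (e \ D).card = 1 := by
        rw [Finset.card_sdiff_of_subset he.2, hE e he.1, hF D hD]; omega
      obtain ⟨w, hw⟩ := Finset.card_eq_one.mp hc
      have hins : insert w D = e := by
        rw [Finset.insert_eq, ← hw, Finset.sdiff_union_of_subset he.2]
      have hwm : w ∈ e \ D := by rw [hw]; simp
      rw [Finset.mem_image]
      refine ⟨w, ?_, hins⟩
      simp only [Finset.mem_filter, Finset.mem_univ, true_and]
      exact ⟨(Finset.mem_sdiff.mp hwm).2, hins ▸ he.1⟩
    have h3 := Finset.card_filter_add_card_filter_not (s := (Finset.univ : Finset V))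
      (fun w => (w ∉ D ∧ insert w D ∈ E))
    have h4 : (E.filter (fun e => D ⊆ e)).card + (bad D).card ≤ Fintype.card V := by
      rw [Finset.card_univ] at h3
      show _ + (Finset.univ.filter (fun w => ¬ (w ∉ D ∧ insert w D ∈ E))).card ≤ _
      omega
    have h5 : ((E.filter (fun e => D ⊆ e)).card : ℝ) + ((bad D).card : ℝ) ≤ Fintype.card V := by
      exact_mod_cast h4
    have hM' : (0 : ℝ) < M := by exact_mod_cast hM
    have h6 : ((bad D).card : ℝ) < (Fintype.card V : ℝ) / M := by
      have : (1 - 1 / (M : ℝ)) * (Fintype.card V : ℝ)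
        = (Fintype.card V : ℝ) - (Fintype.card V : ℝ) / M := by ring
      linarith
    rw [lt_div_iff₀ hM'] at h6
    have h7 : (bad D).card * M < Fintype.card V := by exact_mod_cast h6
    rw [mul_comm] at h7
    exact h7
  have hcov : (Finset.univ : Finset V) ⊆ F.biUnion bad := by
    intro w _
    obtain ⟨D, hD, hw⟩ := hcon w
    rw [Finset.mem_biUnion]
    refine ⟨D, hD, ?_⟩
    simp only [bad, Finset.mem_filter, Finset.mem_univ, true_and]
    intro h
    exact hw h.1 h.2
  have h8 : Fintype.card V ≤ ∑ D ∈ F, (bad D).card := by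
    rw [← Finset.card_univ]
    exact (Finset.card_le_card hcov).trans Finset.card_biUnion_le
  have h9 : ∑ D ∈ F, M * (bad D).card ≤ F.card * (Fintype.card V - 1) := by
    rw [← smul_eq_mul]
    apply Finset.sum_le_card_nsmul
    intro D hD
    have := hbad D hD
    omega
  rw [← Finset.mul_sum] at h9
  have h10 : M * Fintype.card V ≤ M * (Fintype.card V - 1) :=
    (Nat.mul_le_mul_left M h8).trans (h9.trans (Nat.mul_le_mul_right _ hFM))
  have := Nat.le_of_mul_le_mul_left h10 hM
  omega

lemma cl_ext (E : Finset (Finset V)) (k : ℕ) (hk : 2 ≤ k) (X : Finset V) (hX : IsCl E k X)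
    (hc : k - 1 ≤ X.card) (w : V)
    (hw : ∀ D ⊆ X, D.card = k - 1 → w ∉ D ∧ insert w D ∈ E) :
    w ∉ X ∧ IsCl E k (insert w X) := by
  constructor
  · intro hwX
    obtain ⟨D, hD1, hD2, hD3⟩ := Finset.exists_subsuperset_card_eq (s := {w}) (t := X) (n := k - 1)
      (by simpa using hwX) (by simp; omega) hc
    exact (hw D hD2 hD3).1 (hD1 (by simp))
  · intro S hS hSc
    by_cases hwS : w ∈ S
    · have := (hw (S.erase w) (by
        intro x hx
        rw [Finset.mem_erase] at hx
        exact (Finset.mem_insert.mp (hS hx.2)).resolve_left hx.1)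
        (by rw [Finset.card_erase_of_mem hwS, hSc])).2
      rwa [Finset.insert_erase hwS] at this
    · exact hX S ((Finset.subset_insert_iff_of_notMem hwS).mp hS) hSc

/-- the degree condition, in the form used -/
def Common (E : Finset (Finset V)) (k M : ℕ) : Prop :=
  ∀ F : Finset (Finset V), (∀ D ∈ F, D.card = k - 1) → F.card ≤ M →
    ∃ w : V, ∀ D ∈ F, w ∉ D ∧ insert w D ∈ E

lemma exists_clique [Fintype V] (E : Finset (Finset V)) (k t M : ℕ) (hk : 2 ≤ k)
    (htn : k - 1 ≤ Fintype.card V)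
    (hM : (t-1).choose (k-1) ≤ M) (hC : Common E k M) (j : ℕ) (hj : k - 1 ≤ j) (hjt : j ≤ t) :
    ∃ X : Finset V, X.card = j ∧ IsCl E k X := by
  induction j, hj using Nat.le_induction with
  | base =>
    obtain ⟨X, -, hX⟩ := Finset.exists_subset_card_eq (s := (Finset.univ : Finset V)) (n := k - 1)
      (by simpa using htn)
    refine ⟨X, hX, ?_⟩
    intro S hS hSc
    have := Finset.card_le_card hS
    omega
  | succ j hj ih =>
    obtain ⟨X, hXc, hX⟩ := ih (by omega)
    obtain ⟨w, hw⟩ := hC (X.powersetCard (k-1)) (fun D hD => (Finset.mem_powersetCard.mp hD).2)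
      (by
        rw [Finset.card_powersetCard, hXc]
        exact (Nat.choose_le_choose _ (by omega)).trans hM)
    obtain ⟨h1, h2⟩ := cl_ext E k hk X hX (by omega) w
      (fun D hD hDc => hw D (Finset.mem_powersetCard.mpr ⟨hD, hDc⟩))
    exact ⟨insert w X, by rw [Finset.card_insert_of_notMem h1, hXc], h2⟩

/-- labelled `t`-cliques -/
def Good (E : Finset (Finset V)) (k t : ℕ) (f : Fin t → V) : Prop :=
  Function.Injective f ∧ IsCl E k (Finset.image f Finset.univ)

lemma Good.comp {E : Finset (Finset V)} {k t : ℕ} {f : Fin t → V} (hf : Good E k t f)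
    (σ : Equiv.Perm (Fin t)) : Good E k t (f ∘ σ) := by
  refine ⟨hf.1.comp σ.injective, ?_⟩
  have : Finset.image (f ∘ σ) Finset.univ = Finset.image f Finset.univ := by
    rw [← Finset.image_image, Finset.image_univ_equiv]
  rw [this]
  exact hf.2

/-- differ in at most one position, both good -/
def Adj (E : Finset (Finset V)) (k t : ℕ) (f g : Fin t → V) : Prop :=
  Good E k t f ∧ Good E k t g ∧ ∃ i, ∀ j, j ≠ i → f j = g j

lemma image_update {t : ℕ} (f : Fin t → V) (i : Fin t) (w : V) :
    Finset.image (Function.update f i w) Finset.univ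
      = insert w (Finset.image f (Finset.univ.erase i)) := by
  ext x
  simp only [Finset.mem_image, Finset.mem_univ, true_and, Finset.mem_insert, Finset.mem_erase]
  constructor
  · rintro ⟨a, rfl⟩
    by_cases h : a = i
    · subst h; simp
    · right; exact ⟨a, ⟨h, trivial⟩, by simp [h]⟩
  · rintro (rfl | ⟨a, ⟨h, -⟩, rfl⟩)
    · exact ⟨i, by simp⟩
    · exact ⟨a, by simp [h]⟩

lemma good_update {E : Finset (Finset V)} {k t : ℕ} (hk : 2 ≤ k) (hkt : k ≤ t)
    {f : Fin t → V} (hf : Good E k t f) (i : Fin t) (w : V)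
    (hw : ∀ D ⊆ Finset.image f (Finset.univ.erase i), D.card = k - 1 → w ∉ D ∧ insert w D ∈ E) :
    Good E k t (Function.update f i w) := by
  have hcl : IsCl E k (Finset.image f (Finset.univ.erase i)) := fun S hS =>
    hf.2 S (hS.trans (Finset.image_subset_image (Finset.subset_univ _)))
  obtain ⟨h1, h2⟩ := cl_ext E k hk _ hcl
    (by rw [Finset.card_image_of_injective _ hf.1]; simp; omega) w hw
  refine ⟨?_, by rw [image_update]; exact h2⟩
  have h1' : ∀ a, a ≠ i → f a ≠ w := fun a ha h => h1 (by
    rw [Finset.mem_image]; exact ⟨a, by simp [ha], h⟩)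
  intro a b hab
  by_cases ha : a = i <;> by_cases hb : b = i
  · rw [ha, hb]
  · simp [ha, hb] at hab; exact absurd hab.symm (h1' b hb)
  · simp [ha, hb] at hab; exact absurd hab (h1' a ha)
  · simp [ha, hb] at hab; exact hf.1 hab

lemma exists_swap {E : Finset (Finset V)} {k t M : ℕ} (hk : 2 ≤ k) (hkt : k ≤ t)
    (hM : (t-1).choose (k-1) + (t-2).choose (k-2) ≤ M) (hC : Common E k M)
    {f : Fin t → V} (hf : Good E k t f) (i j : Fin t) (hij : i ≠ j) :
    ∃ w, Good E k t (Function.update f i w) ∧ Good E k t (Function.update f j w) := by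
  set P := Finset.image f (Finset.univ.erase i) with hP
  set A := Finset.image f ((Finset.univ.erase i).erase j) with hA
  have hPc : P.card = t - 1 := by
    rw [hP, Finset.card_image_of_injective _ hf.1]; simp
  have hAc : A.card = t - 2 := by
    rw [hA, Finset.card_image_of_injective _ hf.1, Finset.card_erase_of_mem (by simp [hij.symm])]
    simp; omega
  have hiA : f i ∉ A := by
    rw [hA, Finset.mem_image]
    rintro ⟨a, ha, h⟩
    have := hf.1 h
    simp [this] at ha
  obtain ⟨w, hw⟩ := hC (P.powersetCard (k-1) ∪ (A.powersetCard (k-2)).image (insert (f i)))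
    (by
      intro D hD
      rw [Finset.mem_union, Finset.mem_image] at hD
      rcases hD with hD | ⟨B, hB, rfl⟩
      · exact (Finset.mem_powersetCard.mp hD).2
      · rw [Finset.mem_powersetCard] at hB
        rw [Finset.card_insert_of_notMem (fun h => hiA (hB.1 h)), hB.2]; omega)
    (by
      refine (Finset.card_union_le _ _).trans (le_trans ?_ hM)
      refine Nat.add_le_add ?_ (Finset.card_image_le.trans ?_)
      · rw [Finset.card_powersetCard, hPc]
      · rw [Finset.card_powersetCard, hAc])
  refine ⟨w, good_update hk hkt hf i w ?_, good_update hk hkt hf j w ?_⟩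
  · intro D hD hDc
    exact hw D (Finset.mem_union_left _ (Finset.mem_powersetCard.mpr ⟨hD, hDc⟩))
  · intro D hD hDc
    have hsub : D.erase (f i) ⊆ A := by
      intro x hx
      rw [Finset.mem_erase] at hx
      have h2 := hD hx.2
      rw [Finset.mem_image] at h2
      obtain ⟨a, ha, rfl⟩ := h2
      rw [hA, Finset.mem_image]
      refine ⟨a, ?_, rfl⟩
      simp only [Finset.mem_erase, Finset.mem_univ, and_true, ne_eq] at ha ⊢
      exact ⟨ha, fun h => hx.1 (by rw [h])⟩
    by_cases hi : f i ∈ D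
    · apply hw D
      apply Finset.mem_union_right
      rw [Finset.mem_image]
      refine ⟨D.erase (f i), Finset.mem_powersetCard.mpr ⟨hsub, ?_⟩, Finset.insert_erase hi⟩
      rw [Finset.card_erase_of_mem hi, hDc]; omega
    · rw [Finset.erase_eq_of_notMem hi] at hsub
      exact hw D (Finset.mem_union_left _ (Finset.mem_powersetCard.mpr
        ⟨hsub.trans (Finset.image_subset_image (Finset.erase_subset _ _)), hDc⟩))

lemma adj_update {E : Finset (Finset V)} {k t : ℕ} {f : Fin t → V} {i : Fin t} {w : V}
    (hf : Good E k t f) (hg : Good E k t (Function.update f i w)) :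
    Adj E k t f (Function.update f i w) :=
  ⟨hf, hg, i, fun j hj => by simp [hj]⟩

lemma reach_swap {E : Finset (Finset V)} {k t M : ℕ} (hk : 2 ≤ k) (hkt : k ≤ t)
    (hM : (t-1).choose (k-1) + (t-2).choose (k-2) ≤ M) (hC : Common E k M)
    {f : Fin t → V} (hf : Good E k t f) (i j : Fin t) (hij : i ≠ j) :
    Relation.ReflTransGen (Adj E k t) f (f ∘ Equiv.swap i j) := by
  obtain ⟨w, h1, h2⟩ := exists_swap hk hkt hM hC hf i j hij
  have e2 : Function.update (Function.update f i w) j (f i)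
      = Function.update f j w ∘ Equiv.swap i j := by
    funext a
    by_cases hai : a = i
    · subst hai; simp [hij]
    · by_cases haj : a = j
      · subst haj; simp [hij]
      · simp [hai, haj, Equiv.swap_apply_of_ne_of_ne hai haj]
  have e3 : Function.update (Function.update (Function.update f i w) j (f i)) i (f j)
      = f ∘ Equiv.swap i j := by
    funext a
    by_cases hai : a = i
    · subst hai; simp
    · by_cases haj : a = j
      · subst haj; simp [hai]
      · simp [hai, haj, Equiv.swap_apply_of_ne_of_ne hai haj]
  have g2 : Good E k t (Function.update (Function.update f i w) j (f i)) := by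
    rw [e2]; exact h2.comp _
  have g3 : Good E k t
      (Function.update (Function.update (Function.update f i w) j (f i)) i (f j)) := by
    rw [e3]; exact hf.comp _
  rw [← e3]
  exact ((Relation.ReflTransGen.single (adj_update hf h1)).tail (adj_update h1 g2)).tail
    (adj_update g2 g3)

lemma reach_perm {E : Finset (Finset V)} {k t M : ℕ} (hk : 2 ≤ k) (hkt : k ≤ t)
    (hM : (t-1).choose (k-1) + (t-2).choose (k-2) ≤ M) (hC : Common E k M)
    (σ : Equiv.Perm (Fin t)) : ∀ {f : Fin t → V}, Good E k t f →
    Relation.ReflTransGen (Adj E k t) f (f ∘ σ) := by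
  induction σ using Equiv.Perm.swap_induction_on with
  | one => intro f _; exact Relation.ReflTransGen.refl
  | swap_mul σ i j hij ih =>
    intro f hf
    exact (reach_swap hk hkt hM hC hf i j hij).trans (ih (hf.comp (Equiv.swap i j)))

lemma exists_seq {E : Finset (Finset V)} {k t : ℕ} [NeZero t] {f g : Fin t → V}
    (hg : Good E k t g) (h : Relation.ReflTransGen (Adj E k t) f g) :
    ∃ (r : ℕ) (F : ℕ → Fin t → V), F 0 = f ∧ (∀ s, r ≤ s → F s = g) ∧
      ∀ s, Adj E k t (F s) (F (s+1)) := by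
  induction h using Relation.ReflTransGen.head_induction_on with
  | refl => exact ⟨0, fun _ => g, rfl, fun _ _ => rfl, fun _ => ⟨hg, hg, 0, fun _ _ => rfl⟩⟩
  | @head a c h _ ih =>
    obtain ⟨r, F, h0, h1, h2⟩ := ih
    refine ⟨r + 1, fun s => Nat.casesOn s a F, rfl, ?_, ?_⟩
    · intro s hs
      cases s with
      | zero => omega
      | succ s => exact h1 s (by omega)
    · intro s
      cases s with
      | zero => show Adj E k t a (F 0); rw [h0]; exact h
      | succ s => exact h2 s

/-- the sequence obtained by concatenation -/
def W {t : ℕ} [NeZero t] (F : ℕ → Fin t → V) (b : ℕ) : V := F (b / t) (Fin.ofNat t b)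

lemma window {E : Finset (Finset V)} {k t : ℕ} [NeZero t] (F : ℕ → Fin t → V)
    (hF : ∀ s, Adj E k t (F s) (F (s+1))) (a : ℕ) :
    Good E k t (fun j : Fin t => W F (a + j)) := by
  obtain ⟨g0, g1, i, hi⟩ := hF (a / t)
  have ht : 0 < t := Nat.pos_of_ne_zero (NeZero.ne t)
  have hmod := Nat.mod_lt a ht
  have hda := Nat.div_add_mod a t
  have key : ∀ j : Fin t, ((a % t + j < t ∧ (a + j) / t = a / t ∧ (a + j) % t = a % t + j) ∨
      (t ≤ a % t + j ∧ (a + j) / t = a / t + 1 ∧ (a + j) % t = a % t + j - t)) := by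
    intro j
    have hj := j.2
    rcases lt_or_ge (a % t + j) t with h | h
    · left
      have := (Nat.div_mod_unique ht (a := a + j) (d := a / t) (c := a % t + j)).2 ⟨by omega, h⟩
      exact ⟨h, this⟩
    · right
      have := (Nat.div_mod_unique ht (a := a + j) (d := a / t + 1) (c := a % t + j - t)).2
        ⟨by rw [mul_add]; omega, by omega⟩
      exact ⟨h, this⟩
  have hrot : ∀ j : Fin t, Fin.ofNat t (a + j) = (Equiv.addLeft (Fin.ofNat t a)) j := by
    intro j
    apply Fin.ext
    simp [Fin.val_add]
  rcases lt_or_ge (i : ℕ) (a % t) with h | h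
  · -- everything agrees with the second block
    have : (fun j : Fin t => W F (a + j)) = F (a / t + 1) ∘ Equiv.addLeft (Fin.ofNat t a) := by
      funext j
      simp only [W, Function.comp, ← hrot]
      rcases key j with ⟨h1, h2, h3⟩ | ⟨h1, h2, h3⟩
      · rw [h2]
        apply hi
        intro he
        have := congrArg Fin.val he
        rw [Fin.val_ofNat] at this
        omega
      · rw [h2]
    rw [this]
    exact g1.comp _
  · have : (fun j : Fin t => W F (a + j)) = F (a / t) ∘ Equiv.addLeft (Fin.ofNat t a) := by
      funext j
      have hj := j.2
      simp only [W, Function.comp, ← hrot]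
      rcases key j with ⟨h1, h2, h3⟩ | ⟨h1, h2, h3⟩
      · rw [h2]
      · rw [h2]
        symm
        apply hi
        intro he
        have := congrArg Fin.val he
        rw [Fin.val_ofNat] at this
        omega
    rw [this]
    exact g0.comp _

lemma exists_walk {E : Finset (Finset V)} {k t M : ℕ} (hk : 2 ≤ k) (hkt : k ≤ t)
    (hM : (t-1).choose (k-1) + (t-2).choose (k-2) ≤ M) (hC : Common E k M)
    {f : Fin t → V} (hf : Good E k t f) :
    ∃ m : ℕ, t ≤ m ∧ m % t = t - 1 ∧
      ∃ w : ZMod m → V, ∀ i : ZMod m,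
        Good E k t fun j : Fin t => w (i + ((j : ℕ) : ZMod m)) := by
  haveI : NeZero t := ⟨by omega⟩
  have ht : 0 < t := by omega
  let σ : Equiv.Perm (Fin t) := Equiv.addRight 1
  obtain ⟨r, F, h0, h1, h2⟩ := exists_seq (hf.comp σ) (reach_perm hk hkt hM hC σ hf)
  have hmul : (r + 2) * t = r * t + t + t := by ring
  obtain ⟨m, hm⟩ : ∃ m, m + 1 = (r + 2) * t := ⟨(r + 2) * t - 1, by omega⟩
  have hm2 : m = (t - 1) + t * (r + 1) := by
    have : t * (r + 1) = r * t + t := by ring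
    omega
  refine ⟨m, by omega, ?_, ?_⟩
  · rw [hm2, Nat.add_mul_mod_self_left, Nat.mod_eq_of_lt (by omega)]
  haveI : NeZero m := ⟨by omega⟩
  have hper : ∀ c, c < t → W F (m + c) = W F c := by
    intro c hc
    have hr : W F c = f (Fin.ofNat t c) := by
      simp only [W]; rw [Nat.div_eq_of_lt hc, h0]
    rw [hr]
    have hge : r ≤ (m + c) / t := by
      rw [Nat.le_div_iff_mul_le ht]; omega
    simp only [W]
    rw [h1 _ hge]
    simp only [Function.comp, σ, Equiv.coe_addRight]
    congr 1
    have h3 : Fin.ofNat t (m + c) + 1 = Fin.ofNat t (m + c + 1) := by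
      apply Fin.ext
      simp [Fin.val_add]
    rw [h3]
    apply Fin.ext
    simp only [Fin.val_ofNat]
    have : m + c + 1 = c + (r + 2) * t := by omega
    rw [this, Nat.add_mul_mod_self_right]
  refine ⟨fun i => W F i.val, fun i => ?_⟩
  have : (fun j : Fin t => W F (i + ((j : ℕ) : ZMod m)).val) = fun j : Fin t => W F (i.val + j) := by
    funext j
    have hj := j.2
    have hi := ZMod.val_lt i
    have hjm : (((j : ℕ) : ZMod m)).val = (j : ℕ) % m := ZMod.val_natCast m j
    rw [ZMod.val_add, hjm, Nat.add_mod_mod]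
    rcases lt_or_ge (i.val + j) m with h | h
    · rw [Nat.mod_eq_of_lt h]
    · obtain ⟨c, hc⟩ := Nat.exists_eq_add_of_le h
      rw [hc, Nat.add_mod_left, Nat.mod_eq_of_lt (by omega), hper c (by omega)]
  show Good E k t (fun j : Fin t => W F (i + ((j : ℕ) : ZMod m)).val)
  rw [this]
  exact window F h2 _

end Stmt8

/-- Let `2 ≤ k ≤ t ≤ n` and let `G` be a `k`-graph on `n` vertices with
minimum codegree `δ(G) > f_k(t)·n`. Then `K_t(G)` contains a closed tight walk whose order is
congruent to `−1` modulo `t`: there exist `m ≥ t` with `m ≡ t−1 (mod t)` and `w : ℤ/mℤ → V`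
such that for every `i`, the vertices `w i, w (i+1), …, w (i+t−1)` are pairwise distinct and
form an edge of `K_t(G)`. -/
theorem stmt_8 {V : Type*} [Fintype V] [DecidableEq V] (n k t : ℕ)
    (hk : 2 ≤ k) (hkt : k ≤ t) (htn : t ≤ n) (hn : Fintype.card V = n)
    (E : Finset (Finset V)) (hE : ∀ e ∈ E, e.card = k)
    (hdeg : ∀ D : Finset V, D.card = k - 1 →
      (1 - 1 / (((t-1).choose (k-1) : ℝ) + ((t-2).choose (k-2) : ℝ))) * n
        < ((E.filter (fun e => D ⊆ e)).card : ℝ)) :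
    ∃ m : ℕ, t ≤ m ∧ m % t = t - 1 ∧
      ∃ w : ZMod m → V, ∀ i : ZMod m,
        (Function.Injective fun j : Fin t => w (i + ((j : ℕ) : ZMod m))) ∧
        cliqueEdge E k t
          (Finset.image (fun j : Fin t => w (i + ((j : ℕ) : ZMod m))) Finset.univ) := by
  subst hn
  have hcp : 0 < (t-1).choose (k-1) := Nat.choose_pos (by omega)
  have hC : Stmt8.Common E k ((t-1).choose (k-1) + (t-2).choose (k-2)) := fun F hF hFM =>
    Stmt8.exists_common E k _ hk hE (by omega) (by omega)
      (fun D hD => by push_cast; exact hdeg D hD) F hF hFM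
  obtain ⟨X, hXc, hX⟩ := Stmt8.exists_clique E k t _ hk (by omega) (Nat.le_add_right _ _) hC t
    (by omega) le_rfl
  let e := X.equivFinOfCardEq hXc
  have hf : Stmt8.Good E k t (fun j => (e.symm j : V)) := by
    refine ⟨Subtype.val_injective.comp e.symm.injective, fun S hS => hX S (hS.trans ?_)⟩
    intro x hx
    rw [Finset.mem_image] at hx
    obtain ⟨a, -, rfl⟩ := hx
    exact (e.symm a).2
  obtain ⟨m, h1, h2, w, hw⟩ := Stmt8.exists_walk hk hkt le_rfl hC hf
  refine ⟨m, h1, h2, w, fun i => ⟨(hw i).1, ?_, (hw i).2⟩⟩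
  rw [Finset.card_image_of_injective _ (hw i).1]
  simp
end

section
/- For every ε > 0 there exists n0 such that the following holds for every n ≥ n0. Let G be a 3-graph on an n-element vertex set V with minimum 1-degree δ_1(G) ≥ (5/9 + ε)·binom(n−1, 2). Then there exists a set of edges C ⊆ E(G) such that: (1) every vertex of V lies in some edge of C; (2) C is tight-connected; (3) there is a fractional matching of G of size n/3 which is zero on all edges outside C; and (4) there exist an integer m ≥ 3 with m ≡ 1 (mod 3) and a function w : ℤ/mℤ → V such that for every i the vertices w(i), w(i+1), w(i+2) are pairwise distinct and {w(i), w(i+1), w(i+2)} ∈ C. -/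
open Relation

/-- A symmetric set of ordered pairs of density more than `5/9` has a big component. -/
lemma big_component {V : Type} [Fintype V] [DecidableEq V] (S : Finset (V × V))
    (hsym : ∀ x y, (x, y) ∈ S → (y, x) ∈ S)
    (hS : 5 * Fintype.card V ^ 2 < 9 * S.card) :
    ∃ A : Finset V, (∀ x y, (x, y) ∈ S → x ∈ A → y ∈ A) ∧
      (∀ x ∈ A, ∀ y ∈ A, ReflTransGen (fun a b => (a, b) ∈ S) x y) ∧
      2 * Fintype.card V < 3 * A.card ∧
      S.card ≤ (S.filter (fun p => p.1 ∈ A)).card + (Fintype.card V - A.card) ^ 2 := by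
  classical
  have hsymR : ∀ x y, ReflTransGen (fun a b => (a, b) ∈ S) x y →
      ReflTransGen (fun a b => (a, b) ∈ S) y x := by
    intro x y h
    induction h with
    | refl => exact ReflTransGen.refl
    | tail _ hbc ih => exact ReflTransGen.head (hsym _ _ hbc) ih
  -- a vertex of large degree
  obtain ⟨u, hu⟩ : ∃ u : V, 5 * Fintype.card V < 9 * (Finset.univ.filter (fun y => (u, y) ∈ S)).card := by
    by_contra hcon
    push Not at hcon
    have h1 : S.card = ∑ u : V, (Finset.univ.filter (fun y => (u, y) ∈ S)).card := by
      rw [Finset.card_eq_sum_card_fiberwise (f := Prod.fst) (t := Finset.univ) (by intro x _; simp)]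
      refine Finset.sum_congr rfl fun u _ => ?_
      refine Finset.card_bij' (fun p _ => p.2) (fun y _ => (u, y)) ?_ ?_ ?_ ?_
      · rintro ⟨a, b⟩ h
        simp at h ⊢
        obtain ⟨h1, rfl⟩ := h
        exact h1
      · intro y h
        simpa using h
      · rintro ⟨a, b⟩ h
        simp at h ⊢
        exact h.2.symm
      · intro y h
        rfl
    have h2 : 9 * S.card ≤ ∑ u : V, 5 * Fintype.card V := by
      rw [h1, Finset.mul_sum]
      exact Finset.sum_le_sum fun u _ => hcon u
    simp at h2
    nlinarith
  set A : Finset V := Finset.univ.filter (fun y => ReflTransGen (fun a b => (a, b) ∈ S) u y) with hA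
  have hmem : ∀ y, y ∈ A ↔ ReflTransGen (fun a b => (a, b) ∈ S) u y := by
    intro y; simp [hA]
  have hcl : ∀ x y, (x, y) ∈ S → x ∈ A → y ∈ A := by
    intro x y h hx
    rw [hmem] at hx ⊢
    exact hx.tail h
  have hAn : A.card ≤ Fintype.card V := Finset.card_le_univ A
  have hsub : (Finset.univ.filter (fun y => (u, y) ∈ S)).card ≤ A.card := by
    apply Finset.card_le_card
    intro y hy
    simp at hy
    rw [hmem]
    exact ReflTransGen.single hy
  have hsplit : S.card ≤ (S.filter (fun p => p.1 ∈ A)).card + (Fintype.card V - A.card) ^ 2 := by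
    rw [← Finset.card_filter_add_card_filter_not (s := S) (fun p => p.1 ∈ A)]
    apply Nat.add_le_add_left
    rw [← Finset.card_compl, sq, ← Finset.card_product]
    apply Finset.card_le_card
    rintro ⟨a, b⟩ h
    simp at h ⊢
    exact ⟨h.2, fun hb => h.2 (hcl _ _ (hsym _ _ h.1) hb)⟩
  have hin : (S.filter (fun p => p.1 ∈ A)).card ≤ A.card ^ 2 := by
    rw [sq, ← Finset.card_product]
    apply Finset.card_le_card
    rintro ⟨a, b⟩ h
    simp at h ⊢
    exact ⟨h.2, hcl _ _ h.1 h.2⟩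
  refine ⟨A, hcl, ?_, ?_, hsplit⟩
  · intro x hx y hy
    rw [hmem] at hx hy
    exact (hsymR _ _ hx).trans hy
  · obtain ⟨d, hd⟩ := Nat.exists_eq_add_of_le hAn
    rw [hd] at hS hu hsplit ⊢
    simp at hsplit
    by_contra hcon
    push Not at hcon
    nlinarith

lemma inside_card {V : Type} [Fintype V] [DecidableEq V] (S : Finset (V × V)) (A : Finset V)
    (hS : 5 * Fintype.card V ^ 2 < 9 * S.card)
    (hA : 2 * Fintype.card V < 3 * A.card)
    (hc : S.card ≤ (S.filter (fun p => p.1 ∈ A)).card + (Fintype.card V - A.card) ^ 2) :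
    4 * Fintype.card V ^ 2 < 9 * (S.filter (fun p => p.1 ∈ A)).card := by
  have hAn : A.card ≤ Fintype.card V := Finset.card_le_univ A
  obtain ⟨d, hd⟩ := Nat.exists_eq_add_of_le hAn
  rw [hd] at hS hA hc ⊢
  simp at hc
  nlinarith

lemma common_pair {V : Type} [Fintype V] [DecidableEq V] (S T : Finset (V × V)) (A B : Finset V)
    (hS : 5 * Fintype.card V ^ 2 < 9 * S.card)
    (hT : 5 * Fintype.card V ^ 2 < 9 * T.card)
    (hclA : ∀ x y, (x, y) ∈ S → x ∈ A → y ∈ A)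
    (hclB : ∀ x y, (x, y) ∈ T → x ∈ B → y ∈ B)
    (hA : 2 * Fintype.card V < 3 * A.card)
    (hB : 2 * Fintype.card V < 3 * B.card)
    (hcA : S.card ≤ (S.filter (fun p => p.1 ∈ A)).card + (Fintype.card V - A.card) ^ 2)
    (hcB : T.card ≤ (T.filter (fun p => p.1 ∈ B)).card + (Fintype.card V - B.card) ^ 2) :
    ∃ x y, x ∈ A ∧ x ∈ B ∧ (x, y) ∈ S ∧ (x, y) ∈ T := by
  by_contra hcon
  push Not at hcon
  have hdis : Disjoint (S.filter (fun p => p.1 ∈ A)) (T.filter (fun p => p.1 ∈ B)) := by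
    rw [Finset.disjoint_left]
    rintro ⟨a, b⟩ h1 h2
    simp at h1 h2
    exact hcon a b h1.2 h2.2 h1.1 h2.1
  have h1 : (S.filter (fun p => p.1 ∈ A)).card + (T.filter (fun p => p.1 ∈ B)).card
      ≤ ((A ×ˢ A) ∪ (B ×ˢ B)).card := by
    rw [← Finset.card_union_of_disjoint hdis]
    apply Finset.card_le_card
    rintro ⟨a, b⟩ h
    simp at h ⊢
    rcases h with h | h
    · exact Or.inl ⟨h.2, hclA _ _ h.1 h.2⟩
    · exact Or.inr ⟨h.2, hclB _ _ h.1 h.2⟩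
  have h2 := Finset.card_union_add_card_inter (A ×ˢ A) (B ×ˢ B)
  rw [Finset.product_inter_product, Finset.card_product, Finset.card_product,
    Finset.card_product] at h2
  have h3 := Finset.card_union_add_card_inter A B
  have h4 : (A ∪ B).card ≤ Fintype.card V := Finset.card_le_univ _
  have hAn : A.card ≤ Fintype.card V := Finset.card_le_univ A
  have hBn : B.card ≤ Fintype.card V := Finset.card_le_univ B
  generalize (A ∩ B).card = c at *
  generalize (A ∪ B).card = u at *
  generalize ((A ×ˢ A) ∪ (B ×ˢ B)).card = U at *
  generalize (S.filter (fun p => p.1 ∈ A)).card = s at *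
  generalize (T.filter (fun p => p.1 ∈ B)).card = t at *
  generalize S.card = s' at *
  generalize T.card = t' at *
  generalize A.card = a at *
  generalize B.card = b at *
  generalize Fintype.card V = n at *
  clear hdis hclA hclB hcon
  obtain ⟨d, rfl⟩ := Nat.exists_eq_add_of_le hAn
  have hcB' : (t' : ℤ) ≤ t + ((a + d : ℕ) - b : ℤ) ^ 2 := by
    rw [← Nat.cast_sub hBn]; exact_mod_cast hcB
  have hcA' : (s' : ℤ) ≤ s + (d : ℤ) ^ 2 := by
    simp at hcA; exact_mod_cast hcA
  clear hcA hcB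
  zify at hS hT hA hB h1 h2 h3 h4 hBn
  push_cast at hcB'
  have hd0 : (0 : ℤ) ≤ d := Int.natCast_nonneg d
  have hc : (b : ℤ) - d ≤ c := by linarith
  have hc0 : (0 : ℤ) ≤ b - d := by linarith
  have hcc : ((b : ℤ) - d) ^ 2 ≤ c * c := by
    rw [← sq]; exact pow_le_pow_left₀ hc0 hc 2
  have key : (3 * ((a : ℤ) - b)) ^ 2 ≤ (a + d : ℤ) ^ 2 := by
    apply sq_le_sq'
    · linarith
    · linarith
  linarith

lemma not_bip {V : Type} [Fintype V] [DecidableEq V] (S : Finset (V × V)) (A : Finset V)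
    (hS : 5 * Fintype.card V ^ 2 < 9 * S.card)
    (hclA : ∀ x y, (x, y) ∈ S → x ∈ A → y ∈ A)
    (hA : 2 * Fintype.card V < 3 * A.card)
    (hcA : S.card ≤ (S.filter (fun p => p.1 ∈ A)).card + (Fintype.card V - A.card) ^ 2)
    (χ : V → Prop) : ∃ x y, x ∈ A ∧ (x, y) ∈ S ∧ (χ x ↔ χ y) := by
  classical
  by_contra hcon
  push Not at hcon
  have h1 : (S.filter (fun p => p.1 ∈ A)).card ≤
      ((A.filter χ) ×ˢ (A.filter (fun x => ¬ χ x)) ∪ (A.filter (fun x => ¬ χ x)) ×ˢ (A.filter χ)).card := by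
    apply Finset.card_le_card
    rintro ⟨a, b⟩ h
    simp at h
    have hb := hclA _ _ h.1 h.2
    have := hcon a b h.2 h.1
    simp [hb, h.2]
    tauto
  have h2 := h1.trans (Finset.card_union_le _ _)
  rw [Finset.card_product, Finset.card_product] at h2
  have h3 := Finset.card_filter_add_card_filter_not (s := A) χ
  have hAn : A.card ≤ Fintype.card V := Finset.card_le_univ A
  generalize (A.filter χ).card = x at *
  generalize (A.filter (fun x => ¬ χ x)).card = y at *
  generalize (S.filter (fun p => p.1 ∈ A)).card = s at *
  clear h1
  generalize S.card = s' at *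
  generalize A.card = a at *
  generalize Fintype.card V = n at *
  clear hcon hclA
  obtain ⟨d, rfl⟩ := Nat.exists_eq_add_of_le hAn
  simp at hcA
  zify at hS hA h2 h3 hcA
  have hd0 : (0 : ℤ) ≤ d := Int.natCast_nonneg d
  have : 4 * ((x : ℤ) * y) ≤ a ^ 2 := by rw [← h3]; nlinarith [sq_nonneg ((x : ℤ) - y)]
  nlinarith

lemma double_triple {V : Type} [Fintype V] [DecidableEq V] [Nonempty V]
    (S : V → Finset (V × V)) (hS : ∀ v, 4 * Fintype.card V ^ 2 < 9 * (S v).card) :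
    ∃ x y z, (y, z) ∈ S x ∧ (z, x) ∈ S y := by
  classical
  by_contra hcon
  push Not at hcon
  let f : V → V → V → ℕ := fun x y z => if (y, z) ∈ S x then 1 else 0
  have hle : ∀ x y z, f x y z + f y z x + f z x y ≤ 1 := by
    intro x y z
    have h1 := hcon x y z
    have h2 := hcon y z x
    have h3 := hcon z x y
    simp only [f]
    by_cases a : (y, z) ∈ S x
    · have := h1 a
      by_cases c : (x, y) ∈ S z
      · exact absurd a (h3 c)
      · simp [a, this, c]
    · by_cases b : (z, x) ∈ S y
      · have := h2 b
        simp [a, b, this]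
      · simp [a, b]; split_ifs <;> simp
  have hs : ∀ x, ∑ y, ∑ z, f x y z = (S x).card := by
    intro x
    rw [← Fintype.sum_prod_type']
    simp [f]
  have h1 : ∑ x, ∑ y, ∑ z, (f x y z + f y z x + f z x y) ≤ ∑ x : V, ∑ y : V, ∑ z : V, 1 :=
    Finset.sum_le_sum fun x _ => Finset.sum_le_sum fun y _ => Finset.sum_le_sum fun z _ => hle x y z
  simp only [Finset.sum_add_distrib] at h1
  have e : ∀ g : V → V → V → ℕ, ∑ x, ∑ y, ∑ z, g y z x = ∑ x, ∑ y, ∑ z, g x y z := by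
    intro g
    rw [Finset.sum_comm]
    refine Finset.sum_congr rfl fun y _ => ?_
    rw [Finset.sum_comm]
  have e2 := e f
  have e3 := e fun a b c => f c a b
  rw [e2, ← e3] at h1
  simp only [hs] at h1
  have h4 : ∑ x : V, 4 * Fintype.card V ^ 2 < ∑ x : V, 9 * (S x).card :=
    Finset.sum_lt_sum_of_nonempty Finset.univ_nonempty fun x _ => hS x
  rw [← Finset.mul_sum, ← Finset.mul_sum] at h4
  simp only [Finset.sum_const, Finset.card_univ, smul_eq_mul, mul_one] at h4 h1
  nlinarith
lemma poly_ineq (p q r d : ℤ) (hp : 0 ≤ p) (hq : 0 ≤ q) (hr : 0 ≤ r) (hd : 0 ≤ d)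
    (h1 : 4 * p + q < 2 * r + 2 * d) (h2 : 2 * d < p + q + r) :
    9 * ((p + q) * (p + q) + (p * r + r * p) + d ^ 2) ≤ 5 * (p + r + q + d) ^ 2 := by
  obtain ⟨α, hα⟩ : ∃ α, α = 2 * r + 2 * d - 4 * p - q := ⟨_, rfl⟩
  obtain ⟨β, hβ⟩ : ∃ β, β = p + q + r - 2 * d := ⟨_, rfl⟩
  have a0 : 0 ≤ α := by linarith
  have b0 : 0 ≤ β := by linarith
  have := mul_nonneg hp hq
  have := mul_nonneg hp hd
  have := mul_nonneg hq hd
  have := mul_nonneg hp a0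
  have := mul_nonneg hq a0
  have := mul_nonneg hr a0
  have := mul_nonneg hd a0
  have := mul_nonneg hp b0
  have := mul_nonneg hq b0
  have := mul_nonneg hr b0
  have := mul_nonneg hd b0
  have := mul_nonneg a0 b0
  have := mul_nonneg a0 a0
  have := mul_nonneg b0 b0
  have := mul_nonneg hr hd
  have := mul_nonneg hr hp
  have := mul_nonneg hr hq
  subst hα hβ
  linarith


lemma step_integrable (c : ℝ) :
    IntervalIntegrable (fun θ : ℝ => if c < θ then (1 : ℝ) else 0) MeasureTheory.volume 0 (1/2) := by
  apply MonotoneOn.intervalIntegrable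
  intro a _ b _ hab
  dsimp only
  split_ifs with h1 h2
  · exact le_rfl
  · exact absurd (lt_of_lt_of_le h1 hab) h2
  · norm_num
  · exact le_rfl

lemma step_integral (c : ℝ) :
    ∫ θ in (0 : ℝ)..(1/2), (if c < θ then (1 : ℝ) else 0) = max (1/2 - max c 0) 0 := by
  rw [intervalIntegral.integral_of_le (by norm_num)]
  have : (fun θ : ℝ => if c < θ then (1 : ℝ) else 0) = (Set.Ioi c).indicator (fun _ => 1) := by
    ext θ
    simp [Set.indicator_apply]
  rw [this, MeasureTheory.integral_indicator measurableSet_Ioi,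
    MeasureTheory.Measure.restrict_restrict measurableSet_Ioi]
  have h2 : Set.Ioi c ∩ Set.Ioc 0 (1/2 : ℝ) = Set.Ioc (max c 0) (1/2) := by
    ext x
    simp only [Set.mem_inter_iff, Set.mem_Ioi, Set.mem_Ioc, max_lt_iff]
    tauto
  rw [h2]
  simp [Real.volume_real_Ioc]

lemma rounding {V : Type} (A : Finset V) (z : V → ℝ) (hz : ∀ x, 0 ≤ z x) (K : ℝ)
    (h : ∀ θ : ℝ, 0 ≤ θ → θ ≤ 1/2 → K ≤ A.card + (A.filter (fun x => 1 - z x < θ)).card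
      - (A.filter (fun x => z x < θ)).card) : K ≤ 2 * ∑ x ∈ A, z x := by
  have hintble : ∀ x, IntervalIntegrable (fun θ : ℝ => (1 : ℝ) + (if 1 - z x < θ then (1 : ℝ) else 0)
      - (if z x < θ then (1 : ℝ) else 0)) MeasureTheory.volume 0 (1/2) := by
    intro x
    exact (intervalIntegrable_const.add (step_integrable _)).sub (step_integrable _)
  have h1 : ∫ θ in (0 : ℝ)..(1/2), K ≤ ∫ θ in (0 : ℝ)..(1/2), ∑ x ∈ A,
      ((1 : ℝ) + (if 1 - z x < θ then (1 : ℝ) else 0) - (if z x < θ then (1 : ℝ) else 0)) := by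
    apply intervalIntegral.integral_mono_on (by norm_num) intervalIntegrable_const
    · have := IntervalIntegrable.sum (μ := MeasureTheory.volume) (a := (0:ℝ)) (b := 1/2) A (f := fun x (θ : ℝ) => (1 : ℝ) + (if 1 - z x < θ then (1 : ℝ) else 0)
        - (if z x < θ then (1 : ℝ) else 0)) (fun x _ => hintble x)
      simpa [Finset.sum_fn] using this
    · intro θ hθ
      refine (h θ hθ.1 hθ.2).trans (le_of_eq ?_)
      rw [Finset.sum_sub_distrib, Finset.sum_add_distrib]
      simp
  rw [intervalIntegral.integral_finsetSum (fun x _ => hintble x)] at h1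
  have h2 : ∀ x ∈ A, ∫ θ in (0 : ℝ)..(1/2),
      ((1 : ℝ) + (if 1 - z x < θ then (1 : ℝ) else 0) - (if z x < θ then (1 : ℝ) else 0)) ≤ z x := by
    intro x _
    rw [intervalIntegral.integral_sub (intervalIntegrable_const.add (step_integrable _))
      (step_integrable _), intervalIntegral.integral_add intervalIntegrable_const (step_integrable _),
      step_integral, step_integral]
    simp only [intervalIntegral.integral_const, smul_eq_mul]
    have := hz x
    rw [max_eq_left (hz x)]
    rcases le_total (z x) (1/2) with h3 | h3
    · rw [max_eq_left (by linarith : (0 : ℝ) ≤ 1/2 - z x), max_eq_right]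
      · linarith
      · have := le_max_left (1 - z x) 0
        linarith
    · rw [max_eq_right (by linarith : 1/2 - z x ≤ (0 : ℝ))]
      rcases le_total (z x) 1 with h4 | h4
      · rw [max_eq_left (by linarith : (0 : ℝ) ≤ 1 - z x), max_eq_left (by linarith)]
        linarith
      · rw [max_eq_right (by linarith : 1 - z x ≤ (0 : ℝ)), max_eq_left (by norm_num)]
        linarith
  have h3 := Finset.sum_le_sum h2
  simp at h1 h3
  linarith

lemma cover_bound {V : Type} [Fintype V] [DecidableEq V] (S : Finset (V × V)) (A : Finset V)
    (hS : 5 * Fintype.card V ^ 2 < 9 * S.card)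
    (hclA : ∀ x y, (x, y) ∈ S → x ∈ A → y ∈ A)
    (hA : 2 * Fintype.card V < 3 * A.card)
    (hcA : S.card ≤ (S.filter (fun p => p.1 ∈ A)).card + (Fintype.card V - A.card) ^ 2)
    (z : V → ℝ) (hz : ∀ x, 0 ≤ z x)
    (hcov : ∀ x y, x ∈ A → (x, y) ∈ S → 1 ≤ z x + z y) :
    (Fintype.card V : ℝ) / 3 ≤ ∑ x, z x := by
  have h0 : (2 * Fintype.card V / 3 : ℝ) ≤ 2 * ∑ x ∈ A, z x := by
    apply rounding A z hz
    intro θ hθ0 hθ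
    by_contra hcon
    push Not at hcon
    set P := A.filter (fun x => 1 - z x < θ) with hP
    set R := A.filter (fun x => z x < θ) with hR
    have hPR : Disjoint P R := by
      rw [Finset.disjoint_left]
      intro x h1 h2
      simp [hP, hR] at h1 h2
      linarith
    have hsub : P ∪ R ⊆ A := by
      apply Finset.union_subset <;> exact Finset.filter_subset _ _
    have hPRc := Finset.card_le_card hsub
    rw [Finset.card_union_of_disjoint hPR] at hPRc
    have hAR : (A \ R).card = A.card - R.card := Finset.card_sdiff_of_subset (Finset.filter_subset _ _)
    have h1 : (S.filter (fun p => p.1 ∈ A)).card ≤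
        (((A \ R) ×ˢ (A \ R)) ∪ ((P ×ˢ R) ∪ (R ×ˢ P))).card := by
      apply Finset.card_le_card
      rintro ⟨a, b⟩ h
      simp at h
      have hb := hclA _ _ h.1 h.2
      have hab := hcov a b h.2 h.1
      by_cases h3 : z a < θ
      · by_cases h4 : z b < θ
        · linarith
        · have : 1 - z b < θ := by linarith
          simp [hP, hR, hb, h.2, h3, this]
      · by_cases h4 : z b < θ
        · have : 1 - z a < θ := by linarith
          simp [hP, hR, hb, h.2, h4, this]
        · simp [hR, hb, h.2, not_lt.mp h3, not_lt.mp h4]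
    have h2 := (h1.trans (Finset.card_union_le _ _)).trans
      (Nat.add_le_add_left (Finset.card_union_le _ _) _)
    simp only [Finset.card_product, hAR] at h2
    have hAn : A.card ≤ Fintype.card V := Finset.card_le_univ A
    clear h1 hAR hsub hPR
    clear_value P R
    generalize (S.filter (fun p => p.1 ∈ A)).card = s at *
    generalize P.card = p at *
    generalize R.card = r at *
    generalize S.card = s' at *
    generalize A.card = a at *
    generalize Fintype.card V = n at *
    clear hclA hcov
    obtain ⟨d, rfl⟩ := Nat.exists_eq_add_of_le hAn
    obtain ⟨q, rfl⟩ := Nat.exists_eq_add_of_le hPRc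
    have e1 : p + r + q - r = p + q := by omega
    have e2 : p + r + q + d - (p + r + q) = d := by omega
    rw [e1] at h2
    rw [e2] at hcA
    have hq : 3 * (2 * p + q) < 2 * (p + r + q + d) := by
      have : (3 * (2 * p + q) : ℝ) < 2 * (p + r + q + d) := by
        push_cast at hcon
        linarith
      exact_mod_cast this
    zify at *
    have hp0 : (0 : ℤ) ≤ p := Int.natCast_nonneg p
    have hq0 : (0 : ℤ) ≤ q := Int.natCast_nonneg q
    have hr0 : (0 : ℤ) ≤ r := Int.natCast_nonneg r
    have hd0 : (0 : ℤ) ≤ d := Int.natCast_nonneg d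
    have : 5 * ((p : ℤ) + r + q + d) ^ 2 < 9 * ((p + q) * (p + q) + (p * r + r * p) + d ^ 2) := by
      linarith
    have := poly_ineq p q r d hp0 hq0 hr0 hd0 (by linarith) (by linarith)
    linarith
  have h1 : ∑ x ∈ A, z x ≤ ∑ x, z x :=
    Finset.sum_le_sum_of_subset_of_nonneg (Finset.subset_univ A) fun x _ _ => hz x
  linarith

lemma farkas {V : Type} [Fintype V] [DecidableEq V] [Nonempty V] (C : Finset (Finset V))
    (hC : ∀ e ∈ C, e.card = 3) :
    (∃ ω : Finset V → ℝ, (∀ e, 0 ≤ ω e) ∧ (∀ e, e ∉ C → ω e = 0) ∧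
      ∀ v, ∑ e ∈ C.filter (fun e => v ∈ e), ω e = 1) ∨
    ∃ y : V → ℝ, (∀ e ∈ C, 0 ≤ ∑ v ∈ e, y v) ∧ ∑ v, y v < 0 := by
  classical
  let χ : Finset V → (V → ℝ) := fun e v => if v ∈ e then 1 else 0
  have hinj : Function.Injective χ := by
    intro e f h
    ext v
    have := congrFun h v
    simp only [χ] at this
    by_cases h1 : v ∈ e <;> by_cases h2 : v ∈ f <;> simp_all
  have hn : (0 : ℝ) < Fintype.card V := by exact_mod_cast Fintype.card_pos
  let p : V → ℝ := fun _ => 3 / Fintype.card V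
  by_cases hp : p ∈ convexHull ℝ ((C.image χ : Finset (V → ℝ)) : Set (V → ℝ))
  · left
    rw [Finset.mem_convexHull'] at hp
    obtain ⟨w, hw0, _, hw⟩ := hp
    rw [Finset.sum_image (fun _ _ _ _ h => hinj h)] at hw
    refine ⟨fun e => if e ∈ C then w (χ e) * (Fintype.card V / 3) else 0, ?_, ?_, ?_⟩
    · intro e
      dsimp only
      split_ifs with h
      · have := hw0 (χ e) (Finset.mem_image_of_mem _ h)
        positivity
      · exact le_rfl
    · intro e h
      simp [h]
    · intro v
      have h1 := congrFun hw v
      simp only [Finset.sum_apply, Pi.smul_apply, smul_eq_mul, p, χ, mul_ite, mul_one, mul_zero] at h1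
      rw [← Finset.sum_filter] at h1
      rw [Finset.sum_congr rfl (g := fun e => w (χ e) * (Fintype.card V / 3))]
      · rw [← Finset.sum_mul, h1]
        field_simp
      · intro e he
        simp at he
        simp [he.1]
  · right
    obtain ⟨f, u, hfp, hfC⟩ := geometric_hahn_banach_point_closed (convex_convexHull ℝ _)
      ((Finset.finite_toSet (C.image χ)).isClosed_convexHull ℝ) hp
    have hf : ∀ x : V → ℝ, f x = ∑ v, x v * f (Pi.single v 1) := by
      intro x
      conv_lhs => rw [← Finset.univ_sum_single x]
      rw [map_sum]
      refine Finset.sum_congr rfl fun v _ => ?_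
      rw [← smul_eq_mul, ← map_smul, ← Pi.single_smul]
      simp
    refine ⟨fun v => f (Pi.single v 1) - u / 3, ?_, ?_⟩
    · intro e he
      have h1 := hfC (χ e) (subset_convexHull ℝ _ (by simpa using ⟨e, he, rfl⟩))
      rw [hf] at h1
      simp only [χ, ite_mul, one_mul, zero_mul] at h1
      rw [← Finset.sum_filter] at h1
      simp at h1
      rw [Finset.sum_sub_distrib]
      simp [hC e he]
      linarith
    · rw [hf] at hfp
      rw [Finset.sum_sub_distrib]
      simp only [p, ← Finset.mul_sum] at hfp
      simp only [Finset.sum_const, Finset.card_univ, nsmul_eq_mul]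
      rw [div_mul_eq_mul_div, div_lt_iff₀ hn] at hfp
      linarith

lemma rtg_path {α : Type} {R : α → α → Prop} {a b : α} (h : ReflTransGen R a b) :
    ∃ (m : ℕ) (w : ℕ → α), w 0 = a ∧ w m = b ∧ ∀ i < m, R (w i) (w (i + 1)) := by
  induction h using ReflTransGen.head_induction_on with
  | refl => exact ⟨0, fun _ => b, rfl, rfl, fun i hi => absurd hi (Nat.not_lt_zero i)⟩
  | head hac _ ih =>
    rename_i a' c _
    obtain ⟨m, w, h0, hm, hw⟩ := ih
    refine ⟨m + 1, fun i => Nat.casesOn i a' w, rfl, hm, ?_⟩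
    intro i hi
    cases i with
    | zero => simpa [h0] using hac
    | succ j => exact hw j (by omega)

/-- Tight walks of a given length between ordered triples. -/
inductive TightWalk {V : Type} (P : V → V → V → Prop) : ℕ → V × V × V → V × V × V → Prop
  | nil (t : V × V × V) : TightWalk P 0 t t
  | step {n : ℕ} {a b c d : V} {t : V × V × V} : P a b c → P b c d →
      TightWalk P n (b, c, d) t → TightWalk P (n + 1) (a, b, c) t

lemma TightWalk.trans {V : Type} {P : V → V → V → Prop} {m n : ℕ} {s t u : V × V × V}
    (h1 : TightWalk P m s t) (h2 : TightWalk P n t u) : TightWalk P (m + n) s u := by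
  induction h1 with
  | nil t => simpa using h2
  | step ha hb _ ih =>
    have := TightWalk.step ha hb (ih h2)
    rwa [show ∀ k, k + n + 1 = k + 1 + n from fun k => by omega] at this

lemma TightWalk.seq {V : Type} {P : V → V → V → Prop} {m : ℕ} {s t : V × V × V}
    (h : TightWalk P m s t) : ∃ w : ℕ → V, s = (w 0, w 1, w 2) ∧
      t = (w m, w (m + 1), w (m + 2)) ∧ ∀ i < m, P (w i) (w (i + 1)) (w (i + 2)) := by
  induction h with
  | nil t =>
    obtain ⟨a, b, c⟩ := t
    refine ⟨fun i => if i = 0 then a else if i = 1 then b else c, by simp, by simp, ?_⟩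
    intro i hi
    omega
  | step ha hb _ ih =>
    rename_i n a b c d t _
    obtain ⟨w, h0, ht, hw⟩ := ih
    simp only [Prod.mk.injEq] at h0
    refine ⟨fun i => Nat.casesOn i a w, ?_, ?_, ?_⟩
    · show (a, b, c) = (a, w 0, w 1)
      rw [h0.1, h0.2.1]
    · exact ht
    · intro i hi
      cases i with
      | zero =>
        show P a (w 0) (w 1)
        rw [← h0.1, ← h0.2.1]
        exact ha
      | succ j => exact hw j (by omega)

lemma TightWalk.cyclic {V : Type} {P : V → V → V → Prop} {m : ℕ} {s : V × V × V}
    (h : TightWalk P m s s) (hm : 3 ≤ m) :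
    ∃ w : ZMod m → V, ∀ i, P (w i) (w (i + 1)) (w (i + 2)) := by
  obtain ⟨w, h0, h1, hw⟩ := h.seq
  rw [h0] at h1
  simp only [Prod.mk.injEq] at h1
  have : NeZero m := ⟨by omega⟩
  have key : ∀ j : ℕ, j < m + 3 → w ((j : ZMod m).val) = w j := by
    intro j hj
    rw [ZMod.val_natCast]
    by_cases hjm : j < m
    · rw [Nat.mod_eq_of_lt hjm]
    · obtain ⟨k, rfl⟩ := Nat.exists_eq_add_of_le (not_lt.mp hjm)
      rw [Nat.add_mod_left, Nat.mod_eq_of_lt (by omega)]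
      have : k = 0 ∨ k = 1 ∨ k = 2 := by omega
      rcases this with rfl | rfl | rfl
      · exact h1.1
      · exact h1.2.1
      · exact h1.2.2
  refine ⟨fun i => w i.val, ?_⟩
  intro i
  have hi : i.val < m := ZMod.val_lt i
  have e1 : i + 1 = ((i.val + 1 : ℕ) : ZMod m) := by simp
  have e2 : i + 2 = ((i.val + 2 : ℕ) : ZMod m) := by simp
  show P (w i.val) (w (i + 1).val) (w (i + 2).val)
  rw [e1, e2, key _ (by omega), key _ (by omega)]
  exact hw _ hi

/-- Two ordered edges which differ in at most one position. -/
def Move {V : Type} (P : V → V → V → Prop) (s t : V × V × V) : Prop :=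
  P s.1 s.2.1 s.2.2 ∧ P t.1 t.2.1 t.2.2 ∧
    ((s.2.1 = t.2.1 ∧ s.2.2 = t.2.2) ∨ (s.1 = t.1 ∧ s.2.2 = t.2.2) ∨ (s.1 = t.1 ∧ s.2.1 = t.2.1))

/-- The equivalence relation generated by moves. -/
abbrev Reach {V : Type} (P : V → V → V → Prop) := ReflTransGen (Move P)

lemma Reach.symm' {V : Type} {P : V → V → V → Prop} {s t : V × V × V}
    (h : Reach P s t) : Reach P t s := by
  induction h with
  | refl => exact ReflTransGen.refl
  | tail _ hbc ih =>
    refine ReflTransGen.head ?_ ih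
    obtain ⟨h1, h2, h3⟩ := hbc
    refine ⟨h2, h1, ?_⟩
    rcases h3 with h | h | h
    · exact Or.inl ⟨h.1.symm, h.2.symm⟩
    · exact Or.inr (Or.inl ⟨h.1.symm, h.2.symm⟩)
    · exact Or.inr (Or.inr ⟨h.1.symm, h.2.symm⟩)

lemma Reach.swap {V : Type} {P : V → V → V → Prop} (hP : ∀ a b c, P a b c → P a c b)
    {s t : V × V × V} (h : Reach P s t) : Reach P (s.1, s.2.2, s.2.1) (t.1, t.2.2, t.2.1) := by
  induction h with
  | refl => exact ReflTransGen.refl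
  | tail _ hbc ih =>
    refine ReflTransGen.tail ih ?_
    obtain ⟨h1, h2, h3⟩ := hbc
    refine ⟨hP _ _ _ h1, hP _ _ _ h2, ?_⟩
    dsimp only
    tauto

lemma Reach.rot {V : Type} {P : V → V → V → Prop} (hP : ∀ a b c, P a b c → P c a b)
    {s t : V × V × V} (h : Reach P s t) : Reach P (s.2.2, s.1, s.2.1) (t.2.2, t.1, t.2.1) := by
  induction h with
  | refl => exact ReflTransGen.refl
  | tail _ hbc ih =>
    refine ReflTransGen.tail ih ?_
    obtain ⟨h1, h2, h3⟩ := hbc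
    refine ⟨hP _ _ _ h1, hP _ _ _ h2, ?_⟩
    dsimp only
    tauto

lemma Reach.walk {V : Type} {P : V → V → V → Prop} (hP : ∀ a b c, P a b c → P b c a)
    {s t : V × V × V} (h : Reach P s t) : ∃ k, TightWalk P (3 * k) s t := by
  induction h with
  | refl => exact ⟨0, TightWalk.nil _⟩
  | tail _ hbc ih =>
    rename_i b' c' _
    obtain ⟨k, hk⟩ := ih
    refine ⟨k + 1, ?_⟩
    rw [Nat.mul_add]
    refine hk.trans ?_
    obtain ⟨a, b, c⟩ := b'
    obtain ⟨a', b', c'⟩ := c'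
    obtain ⟨h1, h2, h3⟩ := hbc
    dsimp only at h1 h2 h3
    have h1' := hP _ _ _ h1
    have h1'' := hP _ _ _ h1'
    have h2' := hP _ _ _ h2
    have h2'' := hP _ _ _ h2'
    rcases h3 with ⟨rfl, rfl⟩ | ⟨rfl, rfl⟩ | ⟨rfl, rfl⟩
    · exact .step h1 h2' (.step h2' h2'' (.step h2'' h2 (.nil _)))
    · exact .step h1 h1' (.step h1' h2'' (.step h2'' h2 (.nil _)))
    · exact .step h1 h1' (.step h1' h1'' (.step h1'' h2 (.nil _)))

/-- In a link whose component is not bipartite, one can flip an edge. -/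
lemma flip_edge {V : Type} {P : V → V → V → Prop}
    (hP : ∀ a b c, P a b c → P a c b) (S : Finset (V × V)) (A : Finset V) (x : V)
    (hsym : ∀ a b, (a, b) ∈ S → (b, a) ∈ S)
    (hcl : ∀ a b, (a, b) ∈ S → a ∈ A → b ∈ A)
    (hcon : ∀ a ∈ A, ∀ b ∈ A, ReflTransGen (fun a b => (a, b) ∈ S) a b)
    (hSP : ∀ a b, a ∈ A → (a, b) ∈ S → P x a b)
    (hbip : ∀ χ : V → Prop, ∃ a b, a ∈ A ∧ (a, b) ∈ S ∧ (χ a ↔ χ b))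
    (y z : V) (hy : y ∈ A) (hyz : (y, z) ∈ S) : Reach P (x, y, z) (x, z, y) := by
  have change : ∀ a b b', a ∈ A → (a, b) ∈ S → (a, b') ∈ S → Reach P (x, a, b) (x, a, b') := by
    intro a b b' ha hb hb'
    exact ReflTransGen.single ⟨hSP _ _ ha hb, hSP _ _ ha hb', Or.inr (Or.inr ⟨rfl, rfl⟩)⟩
  have claim1 : ∀ a, ReflTransGen (fun a b => (a, b) ∈ S) y a → a ∈ A ∧ ∀ b, (a, b) ∈ S →
      Reach P (x, y, z) (x, a, b) ∨ Reach P (x, y, z) (x, b, a) := by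
    intro a h
    induction h with
    | refl => exact ⟨hy, fun b hb => Or.inl (change _ _ _ hy hyz hb)⟩
    | tail _ hcd ih =>
      rename_i c d _
      obtain ⟨hc, ih⟩ := ih
      have hd := hcl _ _ hcd hc
      refine ⟨hd, fun b hb => ?_⟩
      have e := change d c b hd (hsym _ _ hcd) hb
      rcases ih d hcd with h | h
      · exact Or.inr (h.trans (e.swap hP))
      · exact Or.inl (h.trans e)
  obtain ⟨a, b, ha, hab, hχ⟩ := hbip fun a => ∃ b, (a, b) ∈ S ∧ Reach P (x, y, z) (x, a, b)
  have hb := hcl _ _ hab ha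
  have hba := hsym _ _ hab
  have both : Reach P (x, y, z) (x, a, b) ∧ Reach P (x, y, z) (x, b, a) := by
    rcases (claim1 a (hcon y hy a ha)).2 b hab with h | h
    · obtain ⟨c, hc, h'⟩ := hχ.mp ⟨b, hab, h⟩
      exact ⟨h, h'.trans (change b c a hb hc hba)⟩
    · obtain ⟨c, hc, h'⟩ := hχ.mpr ⟨a, hba, h⟩
      exact ⟨h'.trans (change a c b ha hc hab), h⟩
  exact both.1.trans (both.2.swap hP).symm'

lemma link_count {V : Type} [Fintype V] [DecidableEq V] (E : Finset (Finset V))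
    (hE : ∀ e ∈ E, e.card = 3) (v : V) :
    2 * (E.filter (fun e => v ∈ e)).card ≤
      (Finset.univ.filter (fun p : V × V => ({v, p.1, p.2} : Finset V) ∈ E)).card := by
  rw [Finset.card_eq_sum_card_fiberwise (f := fun p : V × V => ({v, p.1, p.2} : Finset V))
    (t := E.filter (fun e => v ∈ e))]
  · rw [mul_comm, ← smul_eq_mul]
    apply Finset.card_nsmul_le_sum
    intro e he
    simp only [Finset.mem_filter] at he
    obtain ⟨heE, hve⟩ := he
    have h2 : (e.erase v).card = 2 := by rw [Finset.card_erase_of_mem hve, hE e heE]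
    obtain ⟨x, y, hxy, hexy⟩ := Finset.card_eq_two.mp h2
    have hee : ({v, x, y} : Finset V) = e := by rw [← hexy, Finset.insert_erase hve]
    have hee' : ({v, y, x} : Finset V) = e := by rw [← hee, Finset.pair_comm]
    have hsub : ({(x, y), (y, x)} : Finset (V × V)) ⊆
        (Finset.univ.filter (fun p : V × V => ({v, p.1, p.2} : Finset V) ∈ E)).filter
          (fun p => ({v, p.1, p.2} : Finset V) = e) := by
      intro p hp
      simp only [Finset.mem_insert, Finset.mem_singleton] at hp
      rcases hp with rfl | rfl
      · simp [hee, heE]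
      · simp [hee', heE]
    have := Finset.card_le_card hsub
    rwa [Finset.card_pair (by simp [hxy])] at this
  · intro p hp
    simpa using hp

lemma edge_distinct {V : Type} [DecidableEq V] {a b c : V} (h : ({a, b, c} : Finset V).card = 3) :
    a ≠ b ∧ a ≠ c ∧ b ≠ c := by
  refine ⟨?_, ?_, ?_⟩ <;> rintro rfl
  · have := Finset.card_le_two (a := a) (b := c)
    simp at h
    omega
  · have := Finset.card_le_two (a := a) (b := b)
    rw [Finset.pair_comm] at h
    simp at h
    omega
  · have := Finset.card_le_two (a := a) (b := b)
    simp at h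
    omega

/-- Tight adjacency inside `E`. -/
def TAdj {V : Type} [DecidableEq V] (E : Finset (Finset V)) (e f : Finset V) : Prop :=
  f ∈ E ∧ e ∈ E ∧ (e ∩ f).card = 2

lemma tadj_of {V : Type} [DecidableEq V] (E : Finset (Finset V)) (hE : ∀ e ∈ E, e.card = 3)
    {a b c d : V} (h1 : ({a, b, c} : Finset V) ∈ E) (h2 : ({a, b, d} : Finset V) ∈ E) :
    ReflTransGen (TAdj E) {a, b, c} {a, b, d} := by
  by_cases hcd : c = d
  · subst hcd
    exact ReflTransGen.refl
  · refine ReflTransGen.single ⟨h2, h1, ?_⟩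
    obtain ⟨hab, hac, hbc⟩ := edge_distinct (hE _ h1)
    obtain ⟨_, had, hbd⟩ := edge_distinct (hE _ h2)
    have : ({a, b, c} : Finset V) ∩ {a, b, d} = {a, b} := by
      ext t
      simp only [Finset.mem_inter, Finset.mem_insert, Finset.mem_singleton]
      constructor
      · rintro ⟨h | h | h, h' | h' | h'⟩ <;> first | (subst h; tauto) | tauto
      · tauto
    rw [this, Finset.card_pair hab]

lemma main_finite {V : Type} [Fintype V] [DecidableEq V] [Nonempty V]
    (E : Finset (Finset V)) (hE : ∀ e ∈ E, e.card = 3)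
    (hdeg : ∀ v : V, 5 * Fintype.card V ^ 2 < 9 * (2 * (E.filter (fun e => v ∈ e)).card)) :
    ∃ C : Finset (Finset V), C ⊆ E ∧
      (∀ v : V, ∃ e ∈ C, v ∈ e) ∧
      (∀ e ∈ C, ∀ f ∈ C, ∃ (m : ℕ) (w : ℕ → Finset V), w 0 = e ∧ w m = f ∧
        (∀ i ≤ m, w i ∈ C) ∧ (∀ i < m, ((w i) ∩ (w (i+1))).card = 2)) ∧
      (∃ ω : Finset V → ℝ, (∀ e, 0 ≤ ω e) ∧ (∀ e, ω e ≤ 1) ∧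
        (∀ v : V, ∑ e ∈ E.filter (fun e => v ∈ e), ω e ≤ 1) ∧
        (∑ e ∈ E, ω e) = (Fintype.card V : ℝ) / 3 ∧
        (∀ e ∈ E, e ∉ C → ω e = 0)) ∧
      (∃ m : ℕ, 3 ≤ m ∧ m % 3 = 1 ∧ ∃ w : ZMod m → V, ∀ i : ZMod m,
        w i ≠ w (i+1) ∧ w i ≠ w (i+2) ∧ w (i+1) ≠ w (i+2) ∧
        ({w i, w (i+1), w (i+2)} : Finset V) ∈ C) := by
  classical
  let S : V → Finset (V × V) := fun v =>
    Finset.univ.filter (fun p : V × V => ({v, p.1, p.2} : Finset V) ∈ E)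
  have hmemS : ∀ v x y, (x, y) ∈ S v ↔ ({v, x, y} : Finset V) ∈ E := by
    intro v x y; simp [S]
  have hS : ∀ v, 5 * Fintype.card V ^ 2 < 9 * (S v).card := fun v =>
    (hdeg v).trans_le (Nat.mul_le_mul_left 9 (link_count E hE v))
  have hsym : ∀ v x y, (x, y) ∈ S v → (y, x) ∈ S v := by
    intro v x y h
    rw [hmemS] at h ⊢
    rwa [Finset.pair_comm]
  choose A hcl hconn hAbig hAc using fun v => big_component (S v) (hsym v) (hS v)
  have hin := fun v => inside_card (S v) (A v) (hS v) (hAbig v) (hAc v)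
  have hpair : ∀ v, ∃ x y, x ∈ A v ∧ (x, y) ∈ S v := by
    intro v
    obtain ⟨x, y, hx, _, hxy, _⟩ := common_pair (S v) (S v) (A v) (A v) (hS v) (hS v) (hcl v)
      (hcl v) (hAbig v) (hAbig v) (hAc v) (hAc v)
    exact ⟨x, y, hx, hxy⟩
  -- all edges coming from one link component are tightly connected
  have hlink : ∀ v x x', ReflTransGen (fun a b => (a, b) ∈ S v) x x' → ∀ y y', (x, y) ∈ S v →
      (x', y') ∈ S v → ReflTransGen (TAdj E) {v, x, y} {v, x', y'} := by
    intro v x x' h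
    induction h with
    | refl =>
      intro y y' h1 h2
      exact tadj_of E hE ((hmemS _ _ _).mp h1) ((hmemS _ _ _).mp h2)
    | tail _ hbc ih =>
      rename_i b c _
      intro y y' h1 h2
      have h3 := ih y c h1 hbc
      rw [Finset.pair_comm b c] at h3
      exact h3.trans (tadj_of E hE ((hmemS _ _ _).mp (hsym _ _ _ hbc)) ((hmemS _ _ _).mp h2))
  obtain ⟨v0⟩ := ‹Nonempty V›
  have : Nonempty V := ⟨v0⟩
  obtain ⟨x0, y0, hx0, hxy0⟩ := hpair v0
  have hcross : ∀ v x y, x ∈ A v → (x, y) ∈ S v →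
      ReflTransGen (TAdj E) {v0, x0, y0} {v, x, y} := by
    intro v x y hx hxy
    obtain ⟨a, b, ha, ha', hab, hab'⟩ := common_pair (S v0) (S v) (A v0) (A v) (hS v0) (hS v)
      (hcl v0) (hcl v) (hAbig v0) (hAbig v) (hAc v0) (hAc v)
    have h1 := hlink v0 x0 a (hconn v0 _ hx0 _ ha) y0 b hxy0 hab
    have h2 := hlink v a x (hconn v _ ha' _ hx) b y hab' hxy
    have e : ∀ u : V, ({u, a, b} : Finset V) = {a, b, u} := by
      intro u
      ext t
      simp only [Finset.mem_insert, Finset.mem_singleton]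
      tauto
    have h3 : ReflTransGen (TAdj E) {v0, a, b} {v, a, b} := by
      rw [hmemS] at hab hab'
      rw [e] at hab hab'
      rw [e, e]
      exact tadj_of E hE hab hab'
    exact (h1.trans h3).trans h2
  let C : Finset (Finset V) := E.filter (fun f => ReflTransGen (TAdj E) {v0, x0, y0} f)
  have hCE : C ⊆ E := Finset.filter_subset _ _
  have hmemC : ∀ f, f ∈ C ↔ f ∈ E ∧ ReflTransGen (TAdj E) {v0, x0, y0} f := by
    intro f; simp [C]
  have hSC : ∀ v x y, x ∈ A v → (x, y) ∈ S v → ({v, x, y} : Finset V) ∈ C := by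
    intro v x y hx hxy
    exact (hmemC _).mpr ⟨(hmemS _ _ _).mp hxy, hcross v x y hx hxy⟩
  have hadjsym : ∀ e f, ReflTransGen (TAdj E) e f → ReflTransGen (TAdj E) f e := by
    intro e f h
    induction h with
    | refl => exact ReflTransGen.refl
    | tail _ hbc ih =>
      exact ReflTransGen.head ⟨hbc.2.1, hbc.1, by rw [Finset.inter_comm]; exact hbc.2.2⟩ ih
  refine ⟨C, hCE, ?_, ?_, ?_, ?_⟩
  · intro v
    obtain ⟨x, y, hx, hxy⟩ := hpair v
    exact ⟨_, hSC v x y hx hxy, by simp⟩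
  · intro e he f hf
    rw [hmemC] at he hf
    obtain ⟨m, w, h0, hm, hw⟩ := rtg_path ((hadjsym _ _ he.2).trans hf.2)
    refine ⟨m, w, h0, hm, ?_, fun i hi => (hw i hi).2.2⟩
    intro i
    induction i with
    | zero =>
      intro _
      rw [h0, hmemC]
      exact he
    | succ j ih =>
      intro hj
      have h1 := (hmemC _).mp (ih (by omega))
      have h2 := hw j (by omega)
      exact (hmemC _).mpr ⟨h2.1, h1.2.tail h2⟩
  · rcases farkas C (fun e he => hE e (hCE he)) with ⟨ω, hω0, hωC, hω1⟩ | ⟨y, hyC, hy⟩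
    · have hfilt : ∀ v, ∑ e ∈ E.filter (fun e => v ∈ e), ω e = 1 := by
        intro v
        rw [← hω1 v]
        symm
        apply Finset.sum_subset
        · exact Finset.filter_subset_filter _ hCE
        · intro e he he'
          simp at he he'
          exact hωC e fun h => he' h he.2
      refine ⟨ω, hω0, ?_, fun v => (hfilt v).le, ?_, fun e _ he => hωC e he⟩
      · intro e
        by_cases he : e ∈ C
        · have hc := hE e (hCE he)
          obtain ⟨v, hv⟩ : e.Nonempty := by
            rw [← Finset.card_pos]; omega
          rw [← hω1 v]
          exact Finset.single_le_sum (f := ω) (fun e _ => hω0 e) (by simp [he, hv])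
        · rw [hωC e he]
          exact zero_le_one
      · have h1 : ∑ v : V, ∑ e ∈ E.filter (fun e => v ∈ e), ω e = Fintype.card V := by
          simp [hfilt]
        have h2 : ∑ v : V, ∑ e ∈ E.filter (fun e => v ∈ e), ω e = ∑ e ∈ E, 3 * ω e := by
          simp only [Finset.sum_filter]
          rw [Finset.sum_comm]
          refine Finset.sum_congr rfl fun e he => ?_
          rw [← Finset.sum_filter]
          simp [hE e he]
        rw [h1, ← Finset.mul_sum] at h2
        linarith
    · exfalso
      obtain ⟨v, -, hv⟩ := Finset.exists_min_image Finset.univ y Finset.univ_nonempty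
      have hvneg : y v < 0 := by
        by_contra hcon
        push Not at hcon
        have : 0 ≤ ∑ v, y v := Finset.sum_nonneg fun u hu => hcon.trans (hv u hu)
        linarith
      have hα : 0 < - y v := by linarith
      have hb := cover_bound (S v) (A v) (hS v) (hcl v) (hAbig v) (hAc v)
        (fun x => (y x - y v) / (3 * (- y v))) ?_ ?_
      · rw [← Finset.sum_div, le_div_iff₀ (by linarith), Finset.sum_sub_distrib] at hb
        simp only [Finset.sum_const, Finset.card_univ, nsmul_eq_mul] at hb
        linarith
      · intro x
        have := hv x (Finset.mem_univ x)
        apply div_nonneg <;> linarith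
      · intro x w hx hxw
        have h1 := hSC v x w hx hxw
        have h2 := hyC _ h1
        obtain ⟨d1, d2, d3⟩ := edge_distinct (hE _ (hCE h1))
        rw [Finset.sum_insert (by simp [d1, d2]), Finset.sum_pair d3] at h2
        rw [← add_div, le_div_iff₀ (by linarith)]
        linarith
  · let P : V → V → V → Prop := fun a b c => ({a, b, c} : Finset V) ∈ C
    have hP1 : ∀ a b c, P a b c → P a c b := by
      intro a b c h
      show ({a, c, b} : Finset V) ∈ C
      rw [Finset.pair_comm]
      exact h
    have hP2 : ∀ a b c, P a b c → P b a c := by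
      intro a b c h
      show ({b, a, c} : Finset V) ∈ C
      rw [Finset.insert_comm]
      exact h
    have hP3 : ∀ a b c, P a b c → P b c a := fun a b c h => hP1 _ _ _ (hP2 _ _ _ h)
    have hP4 : ∀ a b c, P a b c → P c a b := fun a b c h => hP2 _ _ _ (hP1 _ _ _ h)
    obtain ⟨x, y, z, hyz, hzx⟩ := double_triple (fun v => (S v).filter (fun p => p.1 ∈ A v)) hin
    simp only [Finset.mem_filter] at hyz hzx
    have flip : ∀ x y z, y ∈ A x → (y, z) ∈ S x → Reach P (x, y, z) (x, z, y) := by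
      intro x y z hy h
      exact flip_edge hP1 (S x) (A x) x (hsym x) (hcl x) (hconn x) (fun a b ha hab => hSC x a b ha hab)
        (not_bip (S x) (A x) (hS x) (hcl x) (hAbig x) (hAc x)) y z hy h
    have r1 := flip x y z hyz.2 hyz.1
    have r2 := ((flip y z x hzx.2 hzx.1).rot hP4).swap hP1
    obtain ⟨k, hk⟩ := Reach.walk hP3 (ReflTransGen.trans r1 r2)
    have p0 : P x y z := hSC x y z hyz.2 hyz.1
    have p1 := hP3 _ _ _ p0
    have p2 := hP3 _ _ _ p1
    have loop : TightWalk P (3 + (3 * k + 1)) (x, y, z) (x, y, z) :=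
      (TightWalk.step p0 p1 (.step p1 p2 (.step p2 p0 (.nil _)))).trans
        (hk.trans (.step p2 p0 (.nil _)))
    refine ⟨3 + (3 * k + 1), by omega, by omega, ?_⟩
    obtain ⟨w, hw⟩ := loop.cyclic (by omega)
    refine ⟨w, fun i => ?_⟩
    have hi := hw i
    obtain ⟨d1, d2, d3⟩ := edge_distinct (hE _ (hCE hi))
    exact ⟨d1, d2, d3, hi⟩


/-- For every `ε > 0` there exists `n0` such that for every `n ≥ n0` and every
3-graph `G` on an `n`-element vertex set with minimum 1-degree `δ_1(G) ≥ (5/9+ε)·C(n−1,2)`,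
there is a set of edges `C ⊆ E(G)` such that: (1) every vertex lies in some edge of `C`;
(2) `C` is tight-connected; (3) there is a fractional matching of `G` of size `n/3` vanishing
outside `C`; and (4) there is a closed tight walk of order `m ≡ 1 (mod 3)`, `m ≥ 3`, all of
whose edges belong to `C`. -/
theorem stmt_9 (ε : ℝ) (hε : 0 < ε) : ∃ n0 : ℕ, ∀ n : ℕ, n0 ≤ n →
    ∀ (V : Type) [Fintype V] [DecidableEq V], Fintype.card V = n →
    ∀ E : Finset (Finset V), (∀ e ∈ E, e.card = 3) →
    (∀ v : V, (5/9 + ε) * ((n-1).choose 2 : ℝ) ≤ ((E.filter (fun e => v ∈ e)).card : ℝ)) →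
    ∃ C : Finset (Finset V), C ⊆ E ∧
      (∀ v : V, ∃ e ∈ C, v ∈ e) ∧
      (∀ e ∈ C, ∀ f ∈ C, ∃ (m : ℕ) (w : ℕ → Finset V), w 0 = e ∧ w m = f ∧
        (∀ i ≤ m, w i ∈ C) ∧ (∀ i < m, ((w i) ∩ (w (i+1))).card = 2)) ∧
      (∃ ω : Finset V → ℝ, (∀ e, 0 ≤ ω e) ∧ (∀ e, ω e ≤ 1) ∧
        (∀ v : V, ∑ e ∈ E.filter (fun e => v ∈ e), ω e ≤ 1) ∧
        (∑ e ∈ E, ω e) = (n : ℝ) / 3 ∧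
        (∀ e ∈ E, e ∉ C → ω e = 0)) ∧
      (∃ m : ℕ, 3 ≤ m ∧ m % 3 = 1 ∧ ∃ w : ZMod m → V, ∀ i : ZMod m,
        w i ≠ w (i+1) ∧ w i ≠ w (i+2) ∧ w (i+1) ≠ w (i+2) ∧
        ({w i, w (i+1), w (i+2)} : Finset V) ∈ C) := by
  obtain ⟨N, hN⟩ := exists_nat_gt (5 / ε)
  refine ⟨max N 4, ?_⟩
  intro n hn V _ _ hV E hE hdeg
  have hn4 : 4 ≤ n := (le_max_right _ _).trans hn
  have hnN : N ≤ n := (le_max_left _ _).trans hn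
  have : Nonempty V := Fintype.card_pos_iff.mp (by omega)
  subst hV
  apply main_finite E hE
  intro v
  have h := hdeg v
  have hnε : 5 < ε * (Fintype.card V : ℝ) := by
    have h1 : 5 / ε < (Fintype.card V : ℝ) := hN.trans_le (by exact_mod_cast hnN)
    rw [div_lt_iff₀ hε] at h1
    linarith
  have hn4' : (4 : ℝ) ≤ (Fintype.card V : ℝ) := by exact_mod_cast hn4
  rw [Nat.cast_choose_two, Nat.cast_sub (by omega : 1 ≤ Fintype.card V)] at h
  push_cast at h
  have goal : (5 * (Fintype.card V : ℝ) ^ 2) <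
      9 * (2 * ((E.filter (fun e => v ∈ e)).card : ℝ)) := by
    generalize (Fintype.card V : ℝ) = m at *
    have h2 : 3 / 8 * m ^ 2 ≤ (m - 1) * (m - 2) := by nlinarith
    have h3 : ε * (3 / 8 * m ^ 2) ≤ ε * ((m - 1) * (m - 2)) :=
      mul_le_mul_of_nonneg_left h2 hε.le
    have h4 : 5 * m ≤ ε * m * m := mul_le_mul_of_nonneg_right hnε.le (by linarith)
    nlinarith
  exact_mod_cast goal
end

section
/- Let ℓ ≥ 2 and let L be an ℓ-graph with at least one edge. Then there exists a tight component C of L such that |C| · |∂L| ≥ e(L) · |∂C|, where ∂C denotes the set of (ℓ−1)-element vertex sets contained in at least one edge of C, and ∂L the set of (ℓ−1)-element vertex sets contained in at least one edge of L. -/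
/-- A set `C` of edges of a `k`-graph is tight-connected: between any two edges of `C` there is
a finite sequence of edges from `C` in which consecutive edges intersect in `k−1` vertices. -/
def TightConn {V : Type*} [DecidableEq V] (k : ℕ) (C : Finset (Finset V)) : Prop :=
  ∀ e ∈ C, ∀ f ∈ C, ∃ (m : ℕ) (w : ℕ → Finset V), w 0 = e ∧ w m = f ∧
    (∀ i ≤ m, w i ∈ C) ∧ (∀ i < m, ((w i) ∩ (w (i+1))).card = k - 1)

/-- The shadow of a set `C` of edges: the `j`-element vertex sets contained in some edge of `C`. -/
def shadowOf {V : Type*} [Fintype V] [DecidableEq V] (j : ℕ) (C : Finset (Finset V)) :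
    Finset (Finset V) :=
  (Finset.univ.powersetCard j).filter (fun S => ∃ e ∈ C, S ⊆ e)

/-- Adjacency inside the edge set. -/
def tAdj {V : Type*} [DecidableEq V] (k : ℕ) (E : Finset (Finset V)) (a b : Finset V) : Prop :=
  a ∈ E ∧ b ∈ E ∧ (a ∩ b).card = k - 1

lemma tAdj_symm {V : Type*} [DecidableEq V] {k : ℕ} {E : Finset (Finset V)} {a b : Finset V}
    (h : tAdj k E a b) : tAdj k E b a :=
  ⟨h.2.1, h.1, by rw [Finset.inter_comm]; exact h.2.2⟩

/-- Reachability inside the edge set. -/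
def tReach {V : Type*} [DecidableEq V] (k : ℕ) (E : Finset (Finset V)) :
    Finset V → Finset V → Prop := Relation.ReflTransGen (tAdj k E)

lemma tReach_symm {V : Type*} [DecidableEq V] {k : ℕ} {E : Finset (Finset V)} {a b : Finset V}
    (h : tReach k E a b) : tReach k E b a := by
  unfold tReach at *
  induction h with
  | refl => exact .refl
  | tail _ h ih => exact Relation.ReflTransGen.head (tAdj_symm h) ih

lemma tReach_walk {V : Type*} [DecidableEq V] {k : ℕ} {E : Finset (Finset V)} {a b : Finset V}
    (ha : a ∈ E) (h : tReach k E a b) : ∃ (m : ℕ) (w : ℕ → Finset V), w 0 = a ∧ w m = b ∧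
      (∀ i ≤ m, w i ∈ E ∧ tReach k E a (w i)) ∧
      (∀ i < m, ((w i) ∩ (w (i+1))).card = k - 1) := by
  unfold tReach at *
  induction h with
  | refl => exact ⟨0, fun _ => a, rfl, rfl, fun _ _ => ⟨ha, .refl⟩, fun i hi => by omega⟩
  | @tail b c hab h ih =>
    obtain ⟨m, w, h0, hm, h1, h2⟩ := ih
    refine ⟨m + 1, fun i => if i ≤ m then w i else c, by simpa using h0, by simp, ?_, ?_⟩
    · intro i hi
      by_cases him : i ≤ m
      · simpa [him] using h1 i him
      · simp only [him, if_false]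
        exact ⟨h.2.1, hab.tail h⟩
    · intro i hi
      have him : i ≤ m := by omega
      by_cases h3 : i + 1 ≤ m
      · simpa [him, h3] using h2 i (by omega)
      · have : i = m := by omega
        subst this
        simpa [hm] using h.2.2

lemma walk_tReach {V : Type*} [DecidableEq V] {k : ℕ} {E : Finset (Finset V)}
    (m : ℕ) (w : ℕ → Finset V) (h1 : ∀ i ≤ m, w i ∈ E)
    (h2 : ∀ i < m, ((w i) ∩ (w (i+1))).card = k - 1) : tReach k E (w 0) (w m) := by
  unfold tReach
  induction m with
  | zero => exact .refl
  | succ n ih =>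
    exact (ih (fun i hi => h1 i (by omega)) (fun i hi => h2 i (by omega))).tail
      ⟨h1 n (by omega), h1 _ le_rfl, h2 n (by omega)⟩

open Classical in
/-- The component of an edge. -/
noncomputable def tComp {V : Type*} [DecidableEq V] (k : ℕ) (E : Finset (Finset V))
    (a : Finset V) : Finset (Finset V) := E.filter (fun b => tReach k E a b)

lemma mem_tComp {V : Type*} [DecidableEq V] {k : ℕ} {E : Finset (Finset V)} {a b : Finset V} :
    b ∈ tComp k E a ↔ b ∈ E ∧ tReach k E a b := by simp [tComp]

lemma tComp_eq {V : Type*} [DecidableEq V] {k : ℕ} {E : Finset (Finset V)} {a b : Finset V}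
    (h : tReach k E a b) : tComp k E a = tComp k E b := by
  ext c
  rw [mem_tComp, mem_tComp]
  exact and_congr_right fun _ =>
    ⟨fun h' => Relation.ReflTransGen.trans (tReach_symm h) h',
      fun h' => Relation.ReflTransGen.trans h h'⟩

lemma shadow_reach {V : Type*} [DecidableEq V] {k : ℕ} {E : Finset (Finset V)}
    (hE : ∀ e ∈ E, e.card = k) {a b S : Finset V} (ha : a ∈ E) (hb : b ∈ E)
    (hS : S.card = k - 1) (hSa : S ⊆ a) (hSb : S ⊆ b) : tReach k E a b := by
  by_cases hab : a = b
  · subst hab; exact .refl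
  refine .single ⟨ha, hb, le_antisymm ?_ (hS ▸ Finset.card_le_card (Finset.subset_inter hSa hSb))⟩
  have h : (a ∩ b).card < a.card := by
    apply Finset.card_lt_card
    refine Finset.ssubset_iff_subset_ne.2 ⟨Finset.inter_subset_left, fun h => hab ?_⟩
    exact Finset.eq_of_subset_of_card_le (Finset.inter_eq_left.1 h) (by rw [hE a ha, hE b hb])
  rw [hE a ha] at h
  omega

/-- Let `ℓ ≥ 2` and let `L` be an `ℓ`-graph with at least one edge. Then there
exists a tight component `C` of `L` with `|C| · |∂L| ≥ e(L) · |∂C|`. -/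
theorem stmt_10 {V : Type*} [Fintype V] [DecidableEq V] (ℓ : ℕ) (hℓ : 2 ≤ ℓ)
    (E : Finset (Finset V)) (hE : ∀ e ∈ E, e.card = ℓ) (hne : E.Nonempty) :
    ∃ C : Finset (Finset V), C ⊆ E ∧ C.Nonempty ∧ TightConn ℓ C ∧
      (∀ C' : Finset (Finset V), C ⊆ C' → C' ⊆ E → TightConn ℓ C' → C' = C) ∧
      E.card * (shadowOf (ℓ-1) C).card ≤ C.card * (shadowOf (ℓ-1) E).card := by
  classical
  set K := E.image (tComp ℓ E) with hK
  have hcard : E.card = ∑ C ∈ K, C.card := by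
    rw [Finset.card_eq_sum_card_fiberwise (f := tComp ℓ E) (t := K)
      (fun x hx => Finset.mem_image_of_mem _ hx)]
    refine Finset.sum_congr rfl fun C hC => ?_
    obtain ⟨a, ha, rfl⟩ := Finset.mem_image.1 hC
    congr 1
    ext b
    rw [mem_tComp, Finset.mem_filter]
    refine and_congr_right fun hb => ⟨fun h => ?_, fun h => (tComp_eq h).symm⟩
    have : b ∈ tComp ℓ E b := mem_tComp.2 ⟨hb, .refl⟩
    rw [h] at this
    exact (mem_tComp.1 this).2
  have hsh : ∑ C ∈ K, (shadowOf (ℓ-1) C).card ≤ (shadowOf (ℓ-1) E).card := by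
    rw [← Finset.card_biUnion]
    · apply Finset.card_le_card
      intro S hS
      obtain ⟨C, hC, hS⟩ := Finset.mem_biUnion.1 hS
      obtain ⟨a, ha, rfl⟩ := Finset.mem_image.1 hC
      unfold shadowOf at *
      rw [Finset.mem_filter] at *
      obtain ⟨h1, e, he, h2⟩ := hS
      exact ⟨h1, e, (mem_tComp.1 he).1, h2⟩
    · intro C hC D hD hne
      obtain ⟨a, ha, rfl⟩ := Finset.mem_image.1 hC
      obtain ⟨b, hb, rfl⟩ := Finset.mem_image.1 hD
      refine Finset.disjoint_left.2 ?_
      intro S hS hS'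
      unfold shadowOf at *
      rw [Finset.mem_filter] at *
      obtain ⟨h1, e, he, h2⟩ := hS
      obtain ⟨-, f, hf, h3⟩ := hS'
      rw [mem_tComp] at he hf
      apply hne
      rw [tComp_eq he.2, tComp_eq hf.2]
      exact tComp_eq (shadow_reach hE he.1 hf.1 (Finset.mem_powersetCard.1 h1).2 h2 h3)
  have hKne : K.Nonempty := hne.image _
  obtain ⟨C, hC, hle⟩ : ∃ C ∈ K,
      E.card * (shadowOf (ℓ-1) C).card ≤ C.card * (shadowOf (ℓ-1) E).card := by
    apply Finset.exists_le_of_sum_le hKne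
    rw [← Finset.mul_sum, ← Finset.sum_mul, ← hcard]
    exact Nat.mul_le_mul_left _ hsh
  obtain ⟨a, ha, rfl⟩ := Finset.mem_image.1 hC
  have haa : a ∈ tComp ℓ E a := mem_tComp.2 ⟨ha, .refl⟩
  refine ⟨_, fun b hb => (mem_tComp.1 hb).1, ⟨a, haa⟩, ?_, ?_, hle⟩
  · intro e he f hf
    rw [mem_tComp] at he hf
    obtain ⟨m, w, h0, hm, h1, h2⟩ := tReach_walk he.1
      (Relation.ReflTransGen.trans (tReach_symm he.2) hf.2)
    exact ⟨m, w, h0, hm, fun i hi => mem_tComp.2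
      ⟨(h1 i hi).1, Relation.ReflTransGen.trans he.2 (h1 i hi).2⟩, h2⟩
  · intro C' hCC' hC'E hT
    refine Finset.Subset.antisymm (fun b hb => ?_) hCC'
    obtain ⟨m, w, h0, hm, h1, h2⟩ := hT a (hCC' haa) b hb
    refine mem_tComp.2 ⟨hC'E hb, ?_⟩
    rw [← h0, ← hm]
    exact walk_tReach m w (fun i hi => hC'E (h1 i hi)) h2
end

section
/- There exists n0 such that the following holds for every n ≥ n0. Let L be a 3-graph on n vertices with exactly ⌈(5/8)·binom(n,3)⌉ edges, and let C be a tight component of L with |C| ≥ (1/2)·binom(n,3). Then |C| · binom(n,2) ≥ e(L) · |∂C|, where ∂C denotes the set of 2-element vertex sets contained in at least one edge of C. -/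
open Finset in
theorem kk_aux {V : Type} [Fintype V] [DecidableEq V] (D : Finset (Finset V))
    (hD : ∀ e ∈ D, e.card = 3) (hne : D.Nonempty) :
    ∃ k : ℕ, 3 ≤ k ∧ D.card < (k+1).choose 3 ∧ k.choose 2 ≤ (shadowOf 2 D).card := by
  classical
  have hex : ∃ m : ℕ, D.card < (m+1).choose 3 := by
    refine ⟨D.card + 2, ?_⟩
    have h1 : (D.card + 2 + 1).choose 3 = (D.card+2).choose 2 + (D.card+2).choose 3 :=
      Nat.choose_succ_succ _ _
    have h2 : (D.card + 2).choose 2 = (D.card+1).choose 1 + (D.card+1).choose 2 :=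
      Nat.choose_succ_succ _ _
    rw [Nat.choose_one_right] at h2
    omega
  have hk := Nat.find_spec hex
  have hmin : ∀ m < Nat.find hex, ¬ D.card < (m+1).choose 3 := fun m hm => Nat.find_min hex hm
  generalize Nat.find hex = k at hk hmin
  have hpos : 1 ≤ D.card := hne.card_pos
  have hk3 : 3 ≤ k := by
    by_contra h
    have h1 : (k+1).choose 3 ≤ (3).choose 3 := Nat.choose_le_choose 3 (by omega)
    rw [Nat.choose_self] at h1
    omega
  have hle : k.choose 3 ≤ D.card := by
    have := hmin (k-1) (by omega)
    rw [Nat.sub_add_cancel (by omega)] at this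
    omega
  refine ⟨k, hk3, hk, ?_⟩
  set n := Fintype.card V with hn
  have hcard : D.card ≤ n.choose 3 := by
    have : D ⊆ (univ : Finset V).powersetCard 3 := by
      intro e he
      simp [hD e he]
    have := card_le_card this
    rwa [card_powersetCard, card_univ] at this
  have hkn : k ≤ n := by
    by_contra h
    have h1 : (n+1).choose 3 ≤ k.choose 3 := Nat.choose_le_choose 3 (by omega)
    have h2 : (n + 1).choose 3 = n.choose 2 + n.choose 3 := Nat.choose_succ_succ _ _
    have h3 : n.choose 2 = 0 := by omega
    have h4 : n < 2 := Nat.choose_eq_zero_iff.1 h3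
    have h5 : n.choose 3 = 0 := Nat.choose_eq_zero_of_lt (by omega)
    omega
  let φ : V ≃ Fin n := Fintype.equivFin V
  let F : Finset V ↪ Finset (Fin n) := ⟨fun s => s.map φ.toEmbedding, Finset.map_injective _⟩
  have hS : ((D.map F : Finset (Finset (Fin n))) : Set (Finset (Fin n))).Sized 3 := by
    intro s hs
    simp only [coe_map, Set.mem_image, mem_coe] at hs
    obtain ⟨e, he, rfl⟩ := hs
    simp [F, hD e he]
  have := kruskal_katona_lovasz_form (i := 1) (by norm_num) hk3 hkn hS (by simpa using hle)
  simp only [Function.iterate_one] at this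
  refine this.trans ?_
  rw [← card_map F]
  apply card_le_card
  intro T hT
  rw [mem_shadow_iff] at hT
  obtain ⟨s, hs, a, ha, rfl⟩ := hT
  have hs3 := hS hs
  rw [mem_map] at hs
  obtain ⟨e, he, rfl⟩ := hs
  have ha' : a ∈ e.map φ.toEmbedding := ha
  obtain ⟨b, hb, rfl⟩ := mem_map.1 ha'
  rw [mem_map]
  refine ⟨e.erase b, ?_, ?_⟩
  · simp only [shadowOf, mem_filter, mem_powersetCard]
    refine ⟨⟨subset_univ _, ?_⟩, e, he, erase_subset _ _⟩
    rw [card_erase_of_mem hb, hD e he]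
  · exact map_erase _ _ _

def TWalk {V : Type*} [DecidableEq V] (C : Finset (Finset V)) (e f : Finset V) : Prop :=
  ∃ (m : ℕ) (w : ℕ → Finset V), w 0 = e ∧ w m = f ∧
    (∀ i ≤ m, w i ∈ C) ∧ (∀ i < m, ((w i) ∩ (w (i+1))).card = 3 - 1)

theorem TWalk.symm {V : Type*} [DecidableEq V] {C : Finset (Finset V)} {e f : Finset V}
    (h : TWalk C e f) : TWalk C f e := by
  obtain ⟨m, w, h0, hm, hC, ha⟩ := h
  refine ⟨m, fun i => w (m - i), by simpa using hm, by simpa using h0,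
    fun i _ => hC _ (by omega), fun i hi => ?_⟩
  have := ha (m - (i+1)) (by omega)
  rw [show m - (i+1) + 1 = m - i by omega] at this
  rw [Finset.inter_comm]
  exact this

theorem TWalk.snoc {V : Type*} [DecidableEq V] {C C' : Finset (Finset V)} {a e f : Finset V}
    (h : TWalk C a e) (hC' : C ⊆ C') (hf : f ∈ C') (hef : (e ∩ f).card = 2) : TWalk C' a f := by
  obtain ⟨m, w, h0, hm, hC, ha⟩ := h
  refine ⟨m+1, fun i => if i ≤ m then w i else f, by simpa using h0, by simp,
    fun i _ => ?_, fun i hi => ?_⟩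
  · dsimp only
    split_ifs with h
    · exact hC' (hC i h)
    · exact hf
  · dsimp only
    rw [if_pos (by omega)]
    split_ifs with h
    · exact ha i (by omega)
    · have : i = m := by omega
      rw [this, hm]
      exact hef

theorem closed_aux {V : Type*} [DecidableEq V] {E C : Finset (Finset V)}
    (hE : ∀ e ∈ E, e.card = 3) (hCE : C ⊆ E) (hT : TightConn 3 C)
    (hmax : ∀ C' : Finset (Finset V), C ⊆ C' → C' ⊆ E → TightConn 3 C' → C' = C)
    {e f S : Finset V} (he : e ∈ C) (hf : f ∈ E) (hS : S.card = 2) (hSe : S ⊆ e) (hSf : S ⊆ f) :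
    f ∈ C := by
  by_contra hfC
  have hne : e ≠ f := fun h => hfC (h ▸ he)
  have h2 : (e ∩ f).card = 2 := by
    have h1 : S.card ≤ (e ∩ f).card := Finset.card_le_card (Finset.subset_inter hSe hSf)
    have h3 : (e ∩ f).card < 3 := by
      by_contra h
      have a1 : e ∩ f = e := Finset.eq_of_subset_of_card_le Finset.inter_subset_left
        (by rw [hE e (hCE he)]; omega)
      have a2 : e ∩ f = f := Finset.eq_of_subset_of_card_le Finset.inter_subset_right
        (by rw [hE f hf]; omega)
      exact hne (a1.symm.trans a2)
    omega
  have hsub : C ⊆ insert f C := Finset.subset_insert _ _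
  have hff : f ∈ insert f C := Finset.mem_insert_self _ _
  have key : ∀ a ∈ C, TWalk (insert f C) a f := fun a ha =>
    TWalk.snoc (hT a ha e he) hsub hff h2
  have hT' : TightConn 3 (insert f C) := by
    intro a ha b hb
    rcases Finset.mem_insert.1 ha with rfl | ha1
    · rcases Finset.mem_insert.1 hb with rfl | hb
      · exact ⟨0, fun _ => b, rfl, rfl, fun _ _ => hff, fun i hi => absurd hi (by omega)⟩
      · exact (key b hb).symm
    · rcases Finset.mem_insert.1 hb with rfl | hb
      · exact key a ha1
      · obtain ⟨m, w, h0, hm, hC, hadj⟩ := hT a ha1 b hb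
        exact ⟨m, w, h0, hm, fun i hi => hsub (hC i hi), hadj⟩
  have := hmax _ hsub (Finset.insert_subset hf hCE) hT'
  exact hfC (this ▸ hff)

theorem choose3_aux (n : ℕ) : ((n.choose 3 : ℕ) : ℝ) = n * (n-1) * (n-2) / 6 := by
  induction n with
  | zero => simp
  | succ m ih =>
    have : (m + 1).choose 3 = m.choose 2 + m.choose 3 := Nat.choose_succ_succ _ _
    rw [this]
    push_cast
    rw [ih, Nat.cast_choose_two]
    ring

theorem num_aux (n s k : ℝ) (hn : 1000 ≤ n) (hs : 3 ≤ s)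
    (h1 : n * (n-1) * (n-2) / 2 ≤ (s+1) * s * (s-1))
    (h2 : k * (k-1) + s * (s-1) ≤ n * (n-1)) : k + 1 ≤ 5/8 * (n-2) := by
  have hs' : 79/100 * n - 3 ≤ s := by
    by_contra h
    push Not at h
    have h3 : s^3 ≤ (79/100 * n - 3)^3 := by gcongr
    nlinarith [mul_nonneg (sub_nonneg.2 hn) (sq_nonneg n)]
  by_contra h
  push Not at h
  have h4 : (79/100*n-3) * (79/100*n-3-1) ≤ s * (s-1) := by
    apply mul_le_mul <;> linarith
  have h5 : (5/8*n-9/4) * (5/8*n-9/4-1) ≤ k * (k-1) := by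
    apply mul_le_mul <;> linarith
  nlinarith

/-- There is `n0` such that for all `n ≥ n0`: if `L` is a 3-graph on `n`
vertices with exactly `⌈(5/8)·C(n,3)⌉` edges and `C` is a tight component of `L` with
`|C| ≥ (1/2)·C(n,3)`, then `|C| · C(n,2) ≥ e(L) · |∂C|`. -/
theorem stmt_11 : ∃ n0 : ℕ, ∀ n : ℕ, n0 ≤ n →
    ∀ (V : Type) [Fintype V] [DecidableEq V], Fintype.card V = n →
    ∀ E : Finset (Finset V), (∀ e ∈ E, e.card = 3) →
    E.card = ⌈(5/8 : ℝ) * (n.choose 3 : ℝ)⌉₊ →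
    ∀ C : Finset (Finset V), C ⊆ E → C.Nonempty → TightConn 3 C →
      (∀ C' : Finset (Finset V), C ⊆ C' → C' ⊆ E → TightConn 3 C' → C' = C) →
      (1/2 : ℝ) * (n.choose 3 : ℝ) ≤ (C.card : ℝ) →
      E.card * (shadowOf 2 C).card ≤ C.card * n.choose 2 := by
  refine ⟨1000, ?_⟩
  intro n hn V _ _ hV E hE hEc C hCE hCne hT hmax hC
  set D := E \ C with hDdef
  have hcard : E.card = C.card + D.card := by
    have := Finset.card_sdiff_add_card_eq_card hCE
    rw [← hDdef] at this
    omega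
  have hEr : (5/8 : ℝ) * (n.choose 3 : ℝ) ≤ (E.card : ℝ) := by
    rw [hEc]; exact Nat.le_ceil _
  have hdisj : Disjoint (shadowOf 2 C) (shadowOf 2 D) := by
    rw [Finset.disjoint_left]
    intro S hS hS'
    simp only [shadowOf, Finset.mem_filter, Finset.mem_powersetCard] at hS hS'
    obtain ⟨⟨-, h2⟩, e, he, hSe⟩ := hS
    obtain ⟨-, f, hf, hSf⟩ := hS'
    rw [hDdef, Finset.mem_sdiff] at hf
    exact hf.2 (closed_aux hE hCE hT hmax he hf.1 h2 hSe hSf)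
  have hsum : (shadowOf 2 C).card + (shadowOf 2 D).card ≤ n.choose 2 := by
    rw [← Finset.card_union_of_disjoint hdisj, ← hV, ← Finset.card_univ,
      ← Finset.card_powersetCard]
    exact Finset.card_le_card
      (Finset.union_subset (Finset.filter_subset _ _) (Finset.filter_subset _ _))
  rcases D.eq_empty_or_nonempty with hD | hD
  · have h0 : E.card = C.card := by rw [hcard, hD]; simp
    rw [h0]
    exact Nat.mul_le_mul_left _ (by omega)
  obtain ⟨s, hs3, hs, hs2⟩ := kk_aux C (fun e he => hE e (hCE he)) hCne
  obtain ⟨k, hk3, hk, hk2⟩ := kk_aux D (fun e he => hE e (Finset.sdiff_subset he)) hD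
  generalize (shadowOf 2 C).card = x at *
  generalize (shadowOf 2 D).card = y at *
  have hs' : (C.card : ℝ) ≤ ((s+1).choose 3 : ℕ) := by exact_mod_cast hs.le
  have hk' : (D.card : ℝ) ≤ ((k+1).choose 3 : ℕ) := by exact_mod_cast hk.le
  have hs2' : ((s.choose 2 : ℕ) : ℝ) ≤ x := by exact_mod_cast hs2
  have hk2' : ((k.choose 2 : ℕ) : ℝ) ≤ y := by exact_mod_cast hk2
  have hsum' : (x : ℝ) + y ≤ (n.choose 2 : ℕ) := by exact_mod_cast hsum
  have hcard' : (E.card : ℝ) = C.card + D.card := by exact_mod_cast hcard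
  have hnr : (1000 : ℝ) ≤ n := by exact_mod_cast hn
  have hsr : (3 : ℝ) ≤ s := by exact_mod_cast hs3
  have hkr : (3 : ℝ) ≤ k := by exact_mod_cast hk3
  have goal' : (E.card : ℝ) * x ≤ C.card * (n.choose 2 : ℕ) := by
    rw [choose3_aux] at hs' hk' hEr hC
    rw [Nat.cast_choose_two] at hs2' hk2' hsum' ⊢
    push_cast at hs' hk'
    have hkey := num_aux n s k hnr hsr (by linarith) (by linarith)
    have hDy : (D.card : ℝ) ≤ (k+1)/3 * y := by
      have : ((k:ℝ)+1)/3 * (k * (k-1)/2) ≤ (k+1)/3 * y := by gcongr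
      linarith
    have hN : (0:ℝ) ≤ n * (n-1)/2 := by
      apply div_nonneg _ (by norm_num)
      apply mul_nonneg <;> linarith
    set N : ℝ := n * (n-1)/2 with hNdef
    have hEk : (k+1)/3 * N ≤ (E.card : ℝ) := by
      have : ((k:ℝ)+1)/3 * N ≤ (5/8 * (n-2))/3 * N := by gcongr
      have h6 : (5/8 * ((n:ℝ)-2))/3 * N = 5/8 * (n * (n-1) * (n-2) / 6) := by
        rw [hNdef]; ring
      linarith
    have a1 : (D.card : ℝ) * N ≤ (k+1)/3 * y * N := by gcongr
    have a2 : (k+1)/3 * N * y ≤ (E.card : ℝ) * y := by gcongr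
    have a3 : (E.card : ℝ) * (x + y) ≤ E.card * N := by gcongr
    have a4 : (E.card : ℝ) * N = C.card * N + D.card * N := by rw [hcard']; ring
    linarith
  exact_mod_cast goal'
end

section
/- For every k ≥ 2 and every ε > 0 there exists n0 such that the following holds for every n ≥ n0 and every real δ ∈ [0,1]. Every k-graph G on n vertices with e(G) ≥ (δ + ε)·binom(n,k) contains a tight component with at least δ^k·binom(n,k) edges. -/
open Finset in
theorem KK_fin {n j : ℕ} (A : Finset (Finset (Fin n)))
    (hA : (A : Set (Finset (Fin n))).Sized (j+1)) (R : ℕ) (hR : A.card < R.choose (j+1)) :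
    (j+1) * A.card ≤ R * A.shadow.card := by
  induction R with
  | zero => simp at hR
  | succ R ih =>
    by_cases h : A.card < R.choose (j+1)
    · exact (ih h).trans (Nat.mul_le_mul_right _ (Nat.le_succ R))
    push Not at h
    by_cases hRk : R < j + 1
    · have : (R+1).choose (j+1) ≤ 1 := by
        rcases Nat.lt_or_ge (R+1) (j+1) with h1 | h1
        · rw [Nat.choose_eq_zero_of_lt h1]; omega
        · have : R + 1 = j + 1 := by omega
          rw [this, Nat.choose_self]
      have : A.card = 0 := by omega
      simp [this]
    push Not at hRk
    by_cases hRn : R ≤ n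
    · have kk := kruskal_katona_lovasz_form (i := 1) (by omega) hRk hRn hA h
      simp only [Nat.add_sub_cancel, Function.iterate_one] at kk
      have e := Nat.add_one_mul_choose_eq R j
      calc (j+1) * A.card ≤ (j+1) * (R+1).choose (j+1) := Nat.mul_le_mul_left _ hR.le
        _ = (R+1) * R.choose j := by rw [e]; ring
        _ ≤ _ := Nat.mul_le_mul_left _ kk
    · have h1 : A.card ≤ n.choose (j+1) := by simpa using hA.card_le
      have h2 : (n+1).choose (j+1) ≤ R.choose (j+1) := Nat.choose_le_choose _ (by omega)
      rw [Nat.choose_succ_succ, Nat.succ_eq_add_one] at h2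
      have h3 : n.choose j = 0 := by omega
      have h4 : n.choose (j+1) = 0 := by
        rw [Nat.choose_eq_zero_iff] at h3 ⊢; omega
      have : A.card = 0 := by omega
      simp [this]

open Finset in
theorem KK_gen {V : Type} [Fintype V] [DecidableEq V] {j : ℕ} (A : Finset (Finset V))
    (hA : ∀ e ∈ A, e.card = j+1) (R : ℕ) (hR : A.card < R.choose (j+1)) :
    (j+1) * A.card ≤ R * A.shadow.card := by
  classical
  let φ := Fintype.equivFin V
  let m : Finset V ↪ Finset (Fin (Fintype.card V)) := (mapEmbedding φ.toEmbedding).toEmbedding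
  have h := KK_fin (j := j) (A.map m) (by
    intro e he
    simp only [coe_map, Set.mem_image, mem_coe] at he
    obtain ⟨a, ha, rfl⟩ := he
    simpa [m] using hA a ha) R (by simpa using hR)
  have hs : (A.map m).shadow ⊆ A.shadow.map m := by
    intro t ht
    rw [mem_shadow_iff] at ht
    obtain ⟨s, hs, a, ha, rfl⟩ := ht
    rw [mem_map] at hs
    obtain ⟨s, hs, rfl⟩ := hs
    have : ∃ b ∈ s, φ b = a := ⟨φ.symm a, by simpa [m] using ha, by simp⟩
    obtain ⟨b, hb, rfl⟩ := this
    rw [mem_map]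
    refine ⟨s.erase b, mem_shadow_iff.2 ⟨s, hs, b, hb, rfl⟩, ?_⟩
    simp [m, map_erase]
  have := card_le_card hs
  rw [card_map] at this h
  exact h.trans (Nat.mul_le_mul_left _ this)

/-- One step between adjacent edges. -/
def TStep {V : Type} [DecidableEq V] (k : ℕ) (E : Finset (Finset V)) (a b : Finset V) : Prop :=
  a ∈ E ∧ b ∈ E ∧ (a ∩ b).card = k - 1

open Classical in
/-- The tight component of an edge. -/
noncomputable def tcomp {V : Type} [DecidableEq V] (k : ℕ) (E : Finset (Finset V))
    (x : Finset V) : Finset (Finset V) :=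
  E.filter (fun f => Relation.ReflTransGen (TStep k E) x f)

theorem TStep_symm {V : Type} [DecidableEq V] {k : ℕ} {E : Finset (Finset V)} {a b : Finset V}
    (h : TStep k E a b) : TStep k E b a := ⟨h.2.1, h.1, by rw [Finset.inter_comm]; exact h.2.2⟩

theorem reach_symm {V : Type} [DecidableEq V] {k : ℕ} {E : Finset (Finset V)} {a b : Finset V}
    (h : Relation.ReflTransGen (TStep k E) a b) : Relation.ReflTransGen (TStep k E) b a := by
  induction h with
  | refl => exact .refl
  | tail _ h ih => exact (Relation.ReflTransGen.single (TStep_symm h)).trans ih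

theorem mem_tcomp {V : Type} [DecidableEq V] {k : ℕ} {E : Finset (Finset V)} {x f : Finset V} :
    f ∈ tcomp k E x ↔ f ∈ E ∧ Relation.ReflTransGen (TStep k E) x f := by
  simp [tcomp]

theorem tcomp_conn {V : Type} [DecidableEq V] {k : ℕ} {E : Finset (Finset V)} {x : Finset V} :
    TightConn k (tcomp k E x) := by
  intro e he f hf
  have hef := (reach_symm (mem_tcomp.1 he).2).trans (mem_tcomp.1 hf).2
  clear hf
  induction hef with
  | refl => exact ⟨0, fun _ => e, rfl, rfl, fun _ _ => he, fun i hi => absurd hi (by omega)⟩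
  | @tail b c hb hbc ih =>
    obtain ⟨m, w, h0, hm, hw, hs⟩ := ih
    have hc : c ∈ tcomp k E x :=
      mem_tcomp.2 ⟨hbc.2.1, ((mem_tcomp.1 he).2.trans hb).tail hbc⟩
    refine ⟨m+1, fun i => if i ≤ m then w i else c, by simp [h0], by simp, ?_, ?_⟩
    · intro i _
      by_cases h : i ≤ m
      · simp only [h, if_true]; exact hw i h
      · simp only [h, if_false]; exact hc
    · intro i hi
      by_cases h : i + 1 ≤ m
      · have : i ≤ m := by omega
        simp only [h, this, if_true]; exact hs i (by omega)
      · have : i = m := by omega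
        subst this
        simp only [le_refl, if_true, h, if_false, hm]; exact hbc.2.2

theorem tcomp_max {V : Type} [DecidableEq V] {k : ℕ} {E : Finset (Finset V)} {x : Finset V}
    (hx : x ∈ E) (C : Finset (Finset V)) (h1 : tcomp k E x ⊆ C) (h2 : C ⊆ E)
    (h3 : TightConn k C) : C = tcomp k E x := by
  refine Finset.Subset.antisymm ?_ h1
  intro f hf
  have hxC : x ∈ C := h1 (mem_tcomp.2 ⟨hx, .refl⟩)
  obtain ⟨m, w, h0, hm, hw, hs⟩ := h3 x hxC f hf
  have key : ∀ i ≤ m, Relation.ReflTransGen (TStep k E) x (w i) := by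
    intro i
    induction i with
    | zero => intro _; rw [h0]
    | succ i ih =>
      intro hi
      exact (ih (by omega)).tail ⟨h2 (hw i (by omega)), h2 (hw _ hi), hs i (by omega)⟩
  exact mem_tcomp.2 ⟨h2 hf, hm ▸ key m le_rfl⟩

/-- Edges whose shadows share a set are reachable. -/
theorem reach_of_shadow {V : Type} [DecidableEq V] {j : ℕ} {E : Finset (Finset V)}
    (hE : ∀ e ∈ E, e.card = j + 1) {a b t : Finset V} (ha : a ∈ E) (hb : b ∈ E)
    (hta : t ⊆ a) (htb : t ⊆ b) (ht : t.card = j) :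
    Relation.ReflTransGen (TStep (j+1) E) a b := by
  by_cases hab : a = b
  · subst hab; exact .refl
  refine .single ⟨ha, hb, ?_⟩
  have h1 : t.card ≤ (a ∩ b).card := Finset.card_le_card (Finset.subset_inter hta htb)
  have h2 : (a ∩ b).card < a.card := by
    apply Finset.card_lt_card
    refine Finset.ssubset_iff_subset_ne.2 ⟨Finset.inter_subset_left, fun h => hab ?_⟩
    exact Finset.eq_of_subset_of_card_le (Finset.inter_eq_left.1 h) (by rw [hE a ha, hE b hb])
  rw [hE a ha] at h2
  omega

open Finset in
theorem sum_bound {V : Type} [Fintype V] [DecidableEq V] {j : ℕ} (E : Finset (Finset V))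
    (hE : ∀ e ∈ E, e.card = j + 1) (R : ℕ)
    (hR : ∀ x ∈ E, (tcomp (j+1) E x).card < R.choose (j+1)) :
    (j+1) * E.card ≤ R * (Fintype.card V).choose j := by
  classical
  set K := E.image (tcomp (j+1) E) with hK
  have hcov : E ⊆ K.biUnion id := by
    intro x hx
    exact mem_biUnion.2 ⟨_, mem_image_of_mem _ hx, mem_tcomp.2 ⟨hx, .refl⟩⟩
  have h1 : E.card ≤ ∑ C ∈ K, C.card := (card_le_card hcov).trans card_biUnion_le
  have hsub : ∀ x, ∀ e ∈ tcomp (j+1) E x, e.card = j + 1 := fun x e he => hE e (mem_tcomp.1 he).1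
  have h2 : ∀ C ∈ K, (j+1) * C.card ≤ R * C.shadow.card := by
    intro C hC
    obtain ⟨x, hx, rfl⟩ := mem_image.1 hC
    exact KK_gen _ (hsub x) R (hR x hx)
  have hdisj : ∀ C ∈ K, ∀ D ∈ K, C ≠ D → Disjoint C.shadow D.shadow := by
    intro C hC D hD hne
    obtain ⟨x, hx, rfl⟩ := mem_image.1 hC
    obtain ⟨y, hy, rfl⟩ := mem_image.1 hD
    rw [disjoint_left]
    intro t ht1 ht2
    apply hne
    obtain ⟨a, ha, u, hu, rfl⟩ := mem_shadow_iff.1 ht1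
    obtain ⟨b, hb, v, hv, hbv⟩ := mem_shadow_iff.1 ht2
    rw [mem_tcomp] at ha hb
    have hr : Relation.ReflTransGen (TStep (j+1) E) a b :=
      reach_of_shadow hE ha.1 hb.1 (erase_subset u a) (hbv ▸ erase_subset v b)
        (by rw [card_erase_of_mem hu, hE a ha.1]; rfl)
    have hxy := (ha.2.trans hr).trans (reach_symm hb.2)
    ext f
    rw [mem_tcomp, mem_tcomp]
    exact ⟨fun h => ⟨h.1, (reach_symm hxy).trans h.2⟩, fun h => ⟨h.1, hxy.trans h.2⟩⟩
  have h3 : ∑ C ∈ K, C.shadow.card ≤ (Fintype.card V).choose j := by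
    rw [← card_biUnion hdisj]
    apply Set.Sized.card_le
    intro t ht
    simp only [coe_biUnion, Set.mem_iUnion, mem_coe] at ht
    obtain ⟨C, hC, ht⟩ := ht
    obtain ⟨x, hx, rfl⟩ := mem_image.1 hC
    obtain ⟨a, ha, u, hu, rfl⟩ := mem_shadow_iff.1 ht
    rw [card_erase_of_mem hu, hsub x a ha]; rfl
  calc (j+1) * E.card ≤ (j+1) * ∑ C ∈ K, C.card := Nat.mul_le_mul_left _ h1
    _ = ∑ C ∈ K, (j+1) * C.card := mul_sum _ _ _
    _ ≤ ∑ C ∈ K, R * C.shadow.card := sum_le_sum h2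
    _ = R * ∑ C ∈ K, C.shadow.card := (mul_sum _ _ _).symm
    _ ≤ _ := Nat.mul_le_mul_left _ h3

open Finset in
theorem choose_bound (k n R : ℕ) (δ : ℝ) (h0 : 0 ≤ δ) (hR : δ * n + k ≤ R) :
    δ ^ k * (n.choose k : ℝ) ≤ (R.choose k : ℝ) := by
  have hf : (0:ℝ) < (k.factorial : ℝ) := by positivity
  refine le_of_mul_le_mul_left ?_ hf
  have e1 : (k.factorial : ℝ) * (n.choose k : ℝ) = ∏ i ∈ range k, ((n - i : ℕ) : ℝ) := by
    rw [← Nat.cast_prod, ← Nat.descFactorial_eq_prod_range,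
      Nat.descFactorial_eq_factorial_mul_choose]; push_cast; rfl
  have e2 : (k.factorial : ℝ) * (R.choose k : ℝ) = ∏ i ∈ range k, ((R - i : ℕ) : ℝ) := by
    rw [← Nat.cast_prod, ← Nat.descFactorial_eq_prod_range,
      Nat.descFactorial_eq_factorial_mul_choose]; push_cast; rfl
  rw [mul_left_comm, e1, e2]
  have : δ ^ k = ∏ i ∈ range k, δ := by simp
  rw [this, ← prod_mul_distrib]
  apply prod_le_prod
  · intro i _; positivity
  · intro i hi
    have hi := mem_range.1 hi
    have hkR : k ≤ R := by
      have : (k:ℝ) ≤ R := by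
        have : 0 ≤ δ * n := by positivity
        linarith
      exact_mod_cast this
    have a1 : ((n - i : ℕ) : ℝ) ≤ n := by exact_mod_cast Nat.sub_le n i
    have a2 : ((R - i : ℕ) : ℝ) = R - i := by rw [Nat.cast_sub (by omega)]
    have a3 : (i:ℝ) ≤ k := by exact_mod_cast hi.le
    have := mul_le_mul_of_nonneg_left a1 h0
    rw [a2]; linarith


/-- For every `k ≥ 2` and `ε > 0` there exists `n0` such that for every
`n ≥ n0` and every `δ ∈ [0,1]`, every `k`-graph `G` on `n` vertices with
`e(G) ≥ (δ+ε)·C(n,k)` contains a tight component with at least `δ^k·C(n,k)` edges. -/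
theorem stmt_12 (k : ℕ) (hk : 2 ≤ k) (ε : ℝ) (hε : 0 < ε) :
    ∃ n0 : ℕ, ∀ n : ℕ, n0 ≤ n →
    ∀ (V : Type) [Fintype V] [DecidableEq V], Fintype.card V = n →
    ∀ E : Finset (Finset V), (∀ e ∈ E, e.card = k) →
    ∀ δ : ℝ, 0 ≤ δ → δ ≤ 1 →
    (δ + ε) * (n.choose k : ℝ) ≤ (E.card : ℝ) →
    ∃ C : Finset (Finset V), C ⊆ E ∧ C.Nonempty ∧ TightConn k C ∧
      (∀ C' : Finset (Finset V), C ⊆ C' → C' ⊆ E → TightConn k C' → C' = C) ∧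
      δ ^ k * (n.choose k : ℝ) ≤ (C.card : ℝ) := by
  obtain ⟨j, rfl⟩ : ∃ j, k = j + 1 := ⟨k - 1, by omega⟩
  obtain ⟨N, hN⟩ := exists_nat_gt ((2 * (j:ℝ) + 4) / ε)
  refine ⟨N + j + 1, ?_⟩
  intro n hn V _ _ hV E hE δ h0 h1 hcard
  set R : ℕ := ⌈δ * n⌉₊ + (j + 1) with hRdef
  have hR1 : δ * n + ((j + 1 : ℕ) : ℝ) ≤ R := by
    have := Nat.le_ceil (δ * (n:ℝ))
    rw [hRdef]; push_cast; linarith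
  have hR2 : (R : ℝ) < δ * n + j + 2 := by
    have := Nat.ceil_lt_add_one (a := δ * (n:ℝ)) (by positivity)
    rw [hRdef]; push_cast; linarith
  have hex : ∃ x ∈ E, R.choose (j+1) ≤ (tcomp (j+1) E x).card := by
    by_contra hcon
    push Not at hcon
    have hb := sum_bound E hE R hcon
    rw [hV] at hb
    have hb' : ((j:ℝ) + 1) * (E.card : ℝ) ≤ R * (n.choose j : ℝ) := by exact_mod_cast hb
    have hc := Nat.choose_succ_right_eq n j
    have hc' : (n.choose (j+1) : ℝ) * ((j:ℝ) + 1) = (n.choose j : ℝ) * ((n:ℝ) - j) := by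
      rw [← Nat.cast_sub (by omega : j ≤ n)]; exact_mod_cast hc
    have hpos : (0:ℝ) < (n.choose j : ℝ) := by
      exact_mod_cast Nat.choose_pos (by omega : j ≤ n)
    have hle : (δ + ε) * ((n:ℝ) - j) * (n.choose j : ℝ) ≤ R * (n.choose j : ℝ) := by
      calc (δ + ε) * ((n:ℝ) - j) * (n.choose j : ℝ)
          = ((j:ℝ) + 1) * ((δ + ε) * (n.choose (j+1) : ℝ)) := by
            linear_combination (-(δ + ε)) * hc'
        _ ≤ ((j:ℝ) + 1) * (E.card : ℝ) := mul_le_mul_of_nonneg_left hcard (by positivity)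
        _ ≤ _ := hb'
    have hle2 := le_of_mul_le_mul_right hle hpos
    have hnN : (N:ℝ) + j + 1 ≤ n := by exact_mod_cast hn
    rw [div_lt_iff₀ hε] at hN
    have : ε * N ≤ ε * ((n:ℝ) - j) := mul_le_mul_of_nonneg_left (by linarith) hε.le
    have : δ * j ≤ 1 * j := mul_le_mul_of_nonneg_right h1 (by positivity)
    nlinarith
  obtain ⟨x, hx, hxc⟩ := hex
  refine ⟨tcomp (j+1) E x, fun f hf => (mem_tcomp.1 hf).1, ⟨x, mem_tcomp.2 ⟨hx, .refl⟩⟩,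
    tcomp_conn, fun C' a b c => tcomp_max hx C' a b c, ?_⟩
  have := choose_bound (j+1) n R δ h0 hR1
  exact this.trans (by exact_mod_cast hxc)
end
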